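/- Let C₁, C₂, C₃ > 0. There is a constant C = C(C₁, C₂, C₃) such that for all X ≥ 3, all q = (q₀,q₁,q₂,q₃) ∈ (ℤ/8ℤ)^{*4}, all odd integers 1 ≤ r₀, r₁, r₂, r₃ ≤ (log X)^{C₁}, all integers 1 ≤ c₀, c₁, c₂, c₃ ≤ (log X)^{C₂} and 1 ≤ d₀, d₁, d₂, d₃ ≤ (log X)^{C₃/2}: | ∑_{n ∈ ℕ⁴ : ‖n₀c₀, n₁c₁‖·‖n₂c₂, n₃c₃‖ ≤ X, ‖n₀d₀, n₁d₁‖ > (log X)^{C₃}, ‖n₂d₂, n₃d₃‖ > (log X)^{C₃}, gcd(n_i, r_i) = 1 and n_i ≡ q_i (mod 8) for all 0 ≤ i ≤ 3} 1/(τ(n₀)τ(n₁)τ(n₂)τ(n₃)) − 𝔖₂(r) X² (log log X)/(c₀c₁c₂c₃ log X) | ≤ C · τ(r₀)τ(r₁)τ(r₂)τ(r₃) X² √(log log X)/(c₀c₁c₂c₃ log X), where 𝔖₂(r) := 4 f₀⁴ / ( φ(8)⁴ ∏_{i=0}^{3} ∏_{p | 2r_i} f_p ) and φ(8) = 4. 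-/

import Mathlib

/-!
The proof rests on two facts: an asymptotic formula for sums of `1/τ` in residue classes modulo `8`, and
a hyperbola argument for the product of the two maxima.

**Sums of `1/τ`.** Let `h` be the multiplicative function with Dirichlet series `ζ(s)^{1/2}`. For a character
`χ` modulo `8` the series `F(s) = ∑ h(n) χ(n) n^{-s}` satisfies `F² = L(s, χ)`. Hence `F' = L'/(2F)`, and on the
line `Re s = 1 + 1/log y` the inequality `3 + 4 cos θ + cos 2θ ≥ 0` bounds it by `(log y)^{3/8}`, after removal of
the singularity `-(s-1)^{-3/2}/(2√2)` at `s = 1` in the case of the principal character. Since `-F'` belongs to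
`h(n) χ(n) log n`, Mellin inversion with a smooth cut-off, orthogonality of the characters, and removal first of
the cut-off and then of the weight `log n`, give `∑ h(n) = c₀ y / √(log y) + O(y (log y)^{-13/24})` over `n ≤ y`,
`n ≡ q (mod 8)` (`HQ_asymp`). No zero-free region is needed: a small power of the logarithm is enough.
On odd integers `1_{(n,r)=1}/τ(n)` is the convolution of `h` with a function `g` for which
`∑ |g(d)| d^{-3/4} ≪ τ(r)`. So the same formula holds for `1/τ` on integers prime to `r`, with constant
`κ_r = c₀ ∑ g(d)/d` (`SR_asymp`), which an Euler product evaluates as `f₀ / (4 ∏_{p ∣ 2r} f_p)` (`c0_mul_GR`).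

**Pairs.** Multiplying two such formulas, the pairs `(n₀, n₁)` with `max(n₀c₀, n₁c₁) ≤ u max(c₀, c₁)`, weighted
by `1/(τ(n₀)τ(n₁))`, have total weight `a u²/log u` up to a relative error `(log u)^{-1/24}`, where
`a = κ_{r₀} κ_{r₁} max(c₀, c₁)²/(c₀c₁)`, as soon as `u` is larger than a suitable function of `X`; the condition with
the `dᵢ` removes at most `(log X)^{2C₃}` pairs. For all `u ≥ 1` there is an upper bound of the right order
(`pair_hyp`).

**Hyperbola method.** The sum over both pairs is the sum over `m m' ≤ Z` of the two normalised maxima, with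
`Z = X / (max(c₀, c₁) max(c₂, c₃))`. It is split at `m, m' ≤ √Z`. In each half the inner count is
`b (Z/m)² / log Z` up to acceptable errors, and partial summation gives `∑ w/m² = 2a log log Z` plus the
contribution of the `m` up to the cut `T₀ = exp exp √(log log Z)`, which is `O(√(log log Z))` and is responsible
for the error term of the theorem. The total is `4ab Z² log log Z / log Z` (`hyperbola_asymp`). Replacing `Z` by
`X` in the logarithms costs `O(1/log X)`, and bounded `X` are absorbed into the constant (`pair_hyperbola`).
-/

open Finset

/-- `f_p = 1 + ∑_{j ≥ 1} 1/((j+1) p^j)`. -/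
noncomputable def fP (p : ℕ) : ℝ :=
  1 + ∑' j : ℕ, 1 / (((j : ℝ) + 2) * (p : ℝ) ^ (j + 1))

/-- `f₀ = (1/√π) ∏_p f_p (1 − 1/p)^{1/2}`. -/
noncomputable def f0 : ℝ :=
  (1 / Real.sqrt Real.pi) * ∏' p : Nat.Primes, fP p * (1 - 1 / (p : ℝ)) ^ ((1:ℝ)/2)

/-- `𝔖₂(r) = 4 f₀⁴ / (φ(8)⁴ ∏_{i=0}^{3} ∏_{p|2r_i} f_p)`. -/
noncomputable def S2 (r₀ r₁ r₂ r₃ : ℕ) : ℝ :=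
  4 * f0 ^ 4 /
    ((Nat.totient 8 : ℝ) ^ 4 * (∏ p ∈ (2 * r₀).primeFactors, fP p) *
      (∏ p ∈ (2 * r₁).primeFactors, fP p) * (∏ p ∈ (2 * r₂).primeFactors, fP p) *
      (∏ p ∈ (2 * r₃).primeFactors, fP p))

/-! ### The square root of zeta for Dirichlet convolution -/

/-- The coefficients `binom(2k,k)/4^k` of the power series `(1 - X)^{-1/2}`. -/
noncomputable def cHalf (k : ℕ) : ℝ := (Nat.centralBinom k : ℝ) / 4 ^ k

lemma cHalf_zero : cHalf 0 = 1 := by simp [cHalf]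

lemma cHalf_succ (k : ℕ) : (k + 1 : ℝ) * cHalf (k + 1) = (k + 1 / 2) * cHalf k := by
  have h := Nat.succ_mul_centralBinom_succ k
  have h' : ((k : ℝ) + 1) * (Nat.centralBinom (k + 1) : ℝ)
      = 2 * (2 * k + 1) * Nat.centralBinom k := by exact_mod_cast h
  unfold cHalf
  rw [pow_succ, mul_div_assoc', h']
  field_simp
  ring

lemma cHalf_pos (k : ℕ) : 0 < cHalf k := by
  unfold cHalf
  have := Nat.centralBinom_pos k
  positivity

/-- The square of the power series `(1 - X)^{-1/2}` is `∑ X^k`. -/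
lemma cHalf_conv (k : ℕ) : ∑ x ∈ antidiagonal k, cHalf x.1 * cHalf x.2 = 1 := by
  induction k with
  | zero => simp [cHalf_zero]
  | succ k ih =>
    -- weighting by the first index multiplies a symmetric convolution by half the total degree
    have sym : ∀ m : ℕ, ∑ x ∈ antidiagonal m, (x.1 : ℝ) * (cHalf x.1 * cHalf x.2)
        = m / 2 * ∑ x ∈ antidiagonal m, cHalf x.1 * cHalf x.2 := by
      intro m
      have h1 : ∑ x ∈ antidiagonal m, (x.1 : ℝ) * (cHalf x.1 * cHalf x.2)
          = ∑ x ∈ antidiagonal m, (x.2 : ℝ) * (cHalf x.1 * cHalf x.2) := by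
        rw [← Finset.Nat.sum_antidiagonal_swap]
        exact Finset.sum_congr rfl fun x _ => by simp [Prod.swap, mul_comm]
      have h2 : ∑ x ∈ antidiagonal m, (x.1 : ℝ) * (cHalf x.1 * cHalf x.2)
          + ∑ x ∈ antidiagonal m, (x.2 : ℝ) * (cHalf x.1 * cHalf x.2)
          = m * ∑ x ∈ antidiagonal m, cHalf x.1 * cHalf x.2 := by
        rw [← Finset.sum_add_distrib, Finset.mul_sum]
        refine Finset.sum_congr rfl fun x hx => ?_
        have : (x.1 : ℝ) + x.2 = m := by exact_mod_cast Finset.HasAntidiagonal.mem_antidiagonal.1 hx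
        rw [← this]; ring
      linarith
    have h3 := sym (k + 1)
    rw [Finset.Nat.sum_antidiagonal_succ] at h3
    have h4 : ∑ x ∈ antidiagonal k, ((x.1 + 1 : ℕ) : ℝ) * (cHalf (x.1 + 1) * cHalf x.2)
        = ((k : ℝ) + 1) / 2 * ∑ x ∈ antidiagonal k, cHalf x.1 * cHalf x.2 := by
      have h5 := sym k
      have : ∀ x ∈ antidiagonal k, ((x.1 + 1 : ℕ) : ℝ) * (cHalf (x.1 + 1) * cHalf x.2)
          = (x.1 : ℝ) * (cHalf x.1 * cHalf x.2) + 1 / 2 * (cHalf x.1 * cHalf x.2) := by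
        intro x _
        push_cast
        rw [← mul_assoc, cHalf_succ]; ring
      rw [Finset.sum_congr rfl this, Finset.sum_add_distrib, h5, ← Finset.mul_sum]
      ring
    simp only [Nat.cast_zero, zero_mul, zero_add] at h3
    rw [h4, ih] at h3
    push_cast at h3
    have : (0 : ℝ) < (k + 1) / 2 := by positivity
    nlinarith

lemma cHalf_succ_le (k : ℕ) : cHalf (k + 1) ≤ cHalf k := by
  have h := cHalf_succ k
  have hp := cHalf_pos k
  have hk : (0 : ℝ) ≤ k := Nat.cast_nonneg k
  by_contra hlt
  push Not at hlt
  nlinarith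

lemma cHalf_le_one (k : ℕ) : cHalf k ≤ 1 := by
  induction k with
  | zero => simp [cHalf_zero]
  | succ k ih => exact (cHalf_succ_le k).trans ih

lemma inv_le_cHalf (k : ℕ) : 1 / ((k : ℝ) + 1) ≤ cHalf k := by
  induction k with
  | zero => simp [cHalf_zero]
  | succ k ih =>
    have h := cHalf_succ k
    have hk : (0 : ℝ) ≤ k := Nat.cast_nonneg k
    rw [div_le_iff₀ (by positivity)] at ih
    push_cast
    rw [div_le_iff₀ (by positivity)]
    have : cHalf (k+1) = (k + 1 / 2) * cHalf k / (k + 1) := by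
      rw [← h]; field_simp
    have h3 : (k + 1 / 2 : ℝ) * cHalf k / (k + 1) * (k + 1 + 1)
        = (cHalf k * (k + 1)) * ((k + 1/2) * (k + 2) / (k + 1) ^ 2) := by field_simp; ring
    rw [this, h3]
    have h2 : 1 ≤ (k + 1/2 : ℝ) * (k + 2) / (k + 1) ^ 2 := by
      rw [le_div_iff₀ (by positivity)]; nlinarith
    nlinarith

/-- The arithmetic function with value `∏ u p k` over the exact prime powers `p ^ k` of `n`. -/
noncomputable def mulOf (u : ℕ → ℕ → ℝ) : ArithmeticFunction ℝ :=
  ⟨fun n => if n = 0 then 0 else n.factorization.prod u, by simp⟩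

lemma mulOf_apply (u : ℕ → ℕ → ℝ) {n : ℕ} (hn : n ≠ 0) :
    mulOf u n = n.factorization.prod u := by
  simp [mulOf, hn]

lemma mulOf_isMultiplicative (u : ℕ → ℕ → ℝ) : (mulOf u).IsMultiplicative := by
  rw [ArithmeticFunction.IsMultiplicative.iff_ne_zero]
  refine ⟨by simp [mulOf], fun {m n} hm hn hmn => ?_⟩
  rw [mulOf_apply u (mul_ne_zero hm hn), mulOf_apply u hm, mulOf_apply u hn,
    Nat.factorization_mul_of_coprime hmn,
    Finsupp.prod_add_index_of_disjoint]
  simpa using hmn.disjoint_primeFactors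

lemma mulOf_prime_pow (u : ℕ → ℕ → ℝ) (hu : ∀ p, u p 0 = 1) {p : ℕ} (hp : p.Prime) (k : ℕ) :
    mulOf u (p ^ k) = u p k := by
  rw [mulOf_apply u (pow_ne_zero _ hp.ne_zero), hp.factorization_pow,
    Finsupp.prod_single_index (hu p)]

lemma mul_prime_pow (f g : ArithmeticFunction ℝ) {p : ℕ} (hp : p.Prime) (k : ℕ) :
    (f * g) (p ^ k) = ∑ x ∈ antidiagonal k, f (p ^ x.1) * g (p ^ x.2) := by
  rw [ArithmeticFunction.mul_apply, Nat.sum_divisorsAntidiagonal (fun a b => f a * g b),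
    Nat.sum_divisors_prime_pow hp, Finset.Nat.sum_antidiagonal_eq_sum_range_succ
      (fun i j => f (p ^ i) * g (p ^ j))]
  refine Finset.sum_congr rfl fun i hi => ?_
  have hi' : i ≤ k := by simpa [Nat.lt_succ_iff] using hi
  rw [Nat.pow_div hi' hp.pos]

/-- The Dirichlet coefficients of `ζ(s)^{1/2}`. -/
noncomputable def hHalf : ArithmeticFunction ℝ := mulOf fun _ k => cHalf k

lemma hHalf_isMultiplicative : hHalf.IsMultiplicative := mulOf_isMultiplicative _

lemma hHalf_prime_pow {p : ℕ} (hp : p.Prime) (k : ℕ) : hHalf (p ^ k) = cHalf k :=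
  mulOf_prime_pow _ (fun _ => cHalf_zero) hp k

lemma hHalf_nonneg (n : ℕ) : 0 ≤ hHalf n := by
  rcases eq_or_ne n 0 with rfl | hn
  · simp
  · rw [hHalf, mulOf_apply _ hn]
    exact Finset.prod_nonneg fun p _ => (cHalf_pos _).le

lemma hHalf_le_one (n : ℕ) : hHalf n ≤ 1 := by
  rcases eq_or_ne n 0 with rfl | hn
  · simp
  · rw [hHalf, mulOf_apply _ hn]
    exact Finset.prod_le_one (fun p _ => (cHalf_pos _).le) fun p _ => cHalf_le_one _

lemma inv_card_divisors_le_hHalf {n : ℕ} (hn : n ≠ 0) : 1 / (n.divisors.card : ℝ) ≤ hHalf n := by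
  rw [hHalf, mulOf_apply _ hn, Nat.card_divisors hn, Nat.cast_prod, one_div,
    ← Finset.prod_inv_distrib, Finsupp.prod]
  refine Finset.prod_le_prod (fun p _ => by positivity) fun p _ => ?_
  have := inv_le_cHalf (n.factorization p)
  simpa using this

/-- `hHalf` is the square root of `ζ` for Dirichlet convolution. -/
lemma hHalf_mul_self : hHalf * hHalf = (ArithmeticFunction.zeta : ArithmeticFunction ℝ) := by
  rw [ArithmeticFunction.IsMultiplicative.eq_iff_eq_on_prime_powers _
    (hHalf_isMultiplicative.mul hHalf_isMultiplicative) _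
    ArithmeticFunction.isMultiplicative_zeta.natCast]
  intro p k hp
  rw [mul_prime_pow _ _ hp]
  simp only [hHalf_prime_pow hp, cHalf_conv]
  simp [ArithmeticFunction.natCoe_apply, ArithmeticFunction.zeta_apply, hp.ne_zero]

/-! ### Dirichlet series of the characters modulo 8 -/

/-- The mean value of a character modulo `8`. -/
noncomputable def kap (χ : DirichletCharacter ℂ 8) : ℝ := if χ = 1 then 1 / 2 else 0

open scoped Classical in
lemma sum_char_eq (χ : DirichletCharacter ℂ 8) : ∑ a : ZMod 8, χ a = 8 * (kap χ : ℂ) := by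
  rw [kap]
  split_ifs with h
  · have : Fintype.card (ZMod 8)ˣ = 4 := by rw [ZMod.card_units_eq_totient]; decide
    rw [h, MulChar.sum_one_eq_card_units, this]; push_cast; norm_num
  · rw [MulChar.sum_eq_zero_of_ne_one h]; simp

lemma kap_nonneg (χ : DirichletCharacter ℂ 8) : 0 ≤ kap χ := by unfold kap; split_ifs <;> norm_num
lemma kap_le (χ : DirichletCharacter ℂ 8) : kap χ ≤ 1 / 2 := by unfold kap; split_ifs <;> norm_num

/-- The sum of `χ` over a full period. -/
lemma char_window (χ : DirichletCharacter ℂ 8) (n : ℕ) :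
    ∑ i ∈ range 8, χ ((n + i : ℕ) : ZMod 8) = 8 * (kap χ : ℂ) := by
  rw [← sum_char_eq]
  rw [← Equiv.sum_comp (Equiv.addLeft (n : ZMod 8)) (fun a => χ a), ← Fin.sum_univ_eq_sum_range
    (fun i => χ ((n + i : ℕ) : ZMod 8)) 8]
  refine Finset.sum_congr rfl fun i _ => ?_
  simp only [Equiv.coe_addLeft]
  congr 1
  push_cast
  congr 1
  exact Fin.cast_val_eq_self i

lemma norm_sum_char_sub_le (χ : DirichletCharacter ℂ 8) (n : ℕ) :
    ‖∑ i ∈ range n, (χ (i : ZMod 8) - (kap χ : ℂ))‖ ≤ 16 := by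
  induction n using Nat.strong_induction_on with
  | _ n ih =>
    have hb : ∀ i : ℕ, ‖χ (i : ZMod 8) - (kap χ : ℂ)‖ ≤ 2 := fun i => by
      have h1 := DirichletCharacter.norm_le_one χ (i : ZMod 8)
      have h2 : ‖(kap χ : ℂ)‖ ≤ 1 := by
        rw [Complex.norm_real, Real.norm_of_nonneg (kap_nonneg χ)]
        linarith [kap_le χ]
      linarith [norm_sub_le (χ (i : ZMod 8)) (kap χ : ℂ)]
    rcases lt_or_ge n 8 with h | h
    · calc _ ≤ ∑ i ∈ range n, (2 : ℝ) := norm_sum_le_of_le _ fun i _ => hb i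
        _ ≤ 16 := by
          simp only [sum_const, card_range, nsmul_eq_mul]
          have : (n : ℝ) ≤ 8 := by exact_mod_cast h.le
          linarith
    · obtain ⟨m, rfl⟩ := Nat.exists_eq_add_of_le' h
      rw [Finset.sum_range_add]
      have : ∑ i ∈ range 8, (χ ((m + i : ℕ) : ZMod 8) - (kap χ : ℂ)) = 0 := by
        rw [Finset.sum_sub_distrib, char_window]; simp
      rw [this, add_zero]
      exact ih m (by omega)

/-- The discrepancy `∑_{k ≤ t} χ(k) - κ t`, cut off to `t > 1`. -/
noncomputable def bChi (χ : DirichletCharacter ℂ 8) (t : ℝ) : ℂ :=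
  Set.indicator (Set.Ioi 1) (fun t : ℝ => ∑ k ∈ Icc 1 ⌊t⌋₊, χ (k : ZMod 8) - (kap χ : ℂ) * t) t

lemma norm_bChi_le (χ : DirichletCharacter ℂ 8) (t : ℝ) : ‖bChi χ t‖ ≤ 18 := by
  unfold bChi
  by_cases ht : t ∈ Set.Ioi (1 : ℝ)
  · rw [Set.indicator_of_mem ht]
    have ht' : 0 ≤ t := zero_le_one.trans (le_of_lt ht)
    have h0 : ∑ k ∈ Icc 1 ⌊t⌋₊, χ (k : ZMod 8) = ∑ k ∈ range (⌊t⌋₊ + 1), χ (k : ZMod 8) := by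
      rw [Finset.range_eq_Ico, Finset.sum_eq_sum_Ico_succ_bot (by omega)]
      have h00 : χ ((0 : ℕ) : ZMod 8) = 0 := by
        rw [Nat.cast_zero]; exact MulChar.map_nonunit χ (by decide)
      rw [h00, zero_add]
      rfl
    have h1 := norm_sum_char_sub_le χ (⌊t⌋₊ + 1)
    rw [Finset.sum_sub_distrib, ← h0] at h1
    simp only [sum_const, card_range, nsmul_eq_mul] at h1
    have h2 : ∑ k ∈ Icc 1 ⌊t⌋₊, χ (k : ZMod 8) - (kap χ : ℂ) * t
        = (∑ k ∈ Icc 1 ⌊t⌋₊, χ (k : ZMod 8) - ((⌊t⌋₊ + 1 : ℕ) : ℂ) * (kap χ : ℂ))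
          + ((kap χ * ((⌊t⌋₊ : ℝ) + 1 - t) : ℝ) : ℂ) := by push_cast; ring
    rw [h2]
    have h3 : ‖((kap χ * ((⌊t⌋₊ : ℝ) + 1 - t) : ℝ) : ℂ)‖ ≤ 1 := by
      rw [Complex.norm_real, Real.norm_eq_abs, abs_mul, abs_of_nonneg (kap_nonneg χ)]
      have a1 := Nat.floor_le ht'
      have a2 := Nat.lt_floor_add_one t
      have : |(⌊t⌋₊ : ℝ) + 1 - t| ≤ 1 := by rw [abs_le]; constructor <;> linarith
      have := kap_le χ
      have := kap_nonneg χ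
      have := abs_nonneg ((⌊t⌋₊ : ℝ) + 1 - t)
      nlinarith
    linarith [norm_add_le (∑ k ∈ Icc 1 ⌊t⌋₊, χ (k : ZMod 8) - ((⌊t⌋₊ + 1 : ℕ) : ℂ) * (kap χ : ℂ))
      ((kap χ * ((⌊t⌋₊ : ℝ) + 1 - t) : ℝ) : ℂ)]
  · rw [Set.indicator_of_notMem ht]; simp

lemma measurable_bChi (χ : DirichletCharacter ℂ 8) : Measurable (bChi χ) := by
  unfold bChi
  refine Measurable.indicator ?_ measurableSet_Ioi
  refine Measurable.sub ?_ (by fun_prop)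
  exact (measurable_from_top (f := fun n : ℕ => ∑ k ∈ Icc 1 n, χ (k : ZMod 8))).comp
    Nat.measurable_floor

/-- `BChi χ s = ∫_1^∞ (∑_{k ≤ t} χ(k) - κ t) t^{-s-1} dt`, the regular part of `L(s, χ) / s`. -/
noncomputable def BChi (χ : DirichletCharacter ℂ 8) (s : ℂ) : ℂ := mellin (bChi χ) (-s)

open MeasureTheory Filter Topology Asymptotics in
/-- The conditions under which the Mellin transform of `bChi` is holomorphic for `Re s > 0`. -/
lemma BChi_aux (χ : DirichletCharacter ℂ 8) :
    LocallyIntegrableOn (bChi χ) (Set.Ioi 0) ∧ (bChi χ) =O[atTop] (fun t : ℝ => t ^ (-(0:ℝ))) ∧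
    ∀ b : ℝ, (bChi χ) =O[𝓝[>] 0] (fun t : ℝ => t ^ (-b)) := by
  refine ⟨?_, ?_, fun b => ?_⟩
  · have : LocallyIntegrable (bChi χ) volume := by
      refine MeasureTheory.LocallyIntegrable.mono (g := bChi χ)
        (locallyIntegrable_const (18 : ℝ)) (measurable_bChi χ).aestronglyMeasurable
        (Eventually.of_forall fun t => by simpa using norm_bChi_le χ t)
    exact this.locallyIntegrableOn _
  · refine IsBigO.of_bound 18 (Eventually.of_forall fun t => ?_)
    simpa using norm_bChi_le χ t
  · refine IsBigO.of_bound 1 ?_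
    have : Set.Ioo (0:ℝ) 1 ∈ 𝓝[>] (0:ℝ) := Ioo_mem_nhdsGT zero_lt_one
    filter_upwards [this] with t ht
    have : bChi χ t = 0 := by
      unfold bChi
      rw [Set.indicator_of_notMem]
      simp only [Set.mem_Ioi, not_lt]; exact ht.2.le
    rw [this]; simp

lemma BChi_differentiableAt (χ : DirichletCharacter ℂ 8) {s : ℂ} (hs : 0 < s.re) :
    DifferentiableAt ℂ (BChi χ) s := by
  obtain ⟨h1, h2, h3⟩ := BChi_aux χ
  have := mellin_differentiableAt_of_isBigO_rpow (s := -s) h1 h2 (by simpa using hs)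
    (h3 (-s.re - 1)) (by simp)
  exact this.comp s differentiableAt_id.neg

lemma BChi_eq (χ : DirichletCharacter ℂ 8) (s : ℂ) :
    BChi χ s = ∫ t in Set.Ioi (1:ℝ), bChi χ t * (t : ℂ) ^ (-(s + 1)) := by
  have h1 : ∀ t : ℝ, (t : ℂ) ^ (-s - 1) • bChi χ t
      = Set.indicator (Set.Ioi 1) (fun t : ℝ => bChi χ t * (t : ℂ) ^ (-(s + 1))) t := by
    intro t
    by_cases ht : t ∈ Set.Ioi (1 : ℝ)
    · rw [Set.indicator_of_mem ht, smul_eq_mul, mul_comm]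
      congr 2; ring
    · rw [Set.indicator_of_notMem ht]
      unfold bChi
      rw [Set.indicator_of_notMem ht, smul_zero]
  rw [BChi, mellin]
  simp_rw [h1]
  rw [MeasureTheory.setIntegral_indicator measurableSet_Ioi]
  congr 2
  ext t; simp only [Set.mem_inter_iff, Set.mem_Ioi]; constructor
  · exact fun h => h.2
  · exact fun h => ⟨zero_lt_one.trans h, h⟩

lemma norm_BChi_le (χ : DirichletCharacter ℂ 8) {s : ℂ} (hs : 1 / 2 ≤ s.re) :
    ‖BChi χ s‖ ≤ 36 := by
  rw [BChi_eq]
  have hi : MeasureTheory.IntegrableOn (fun t : ℝ => 18 * t ^ (-(3/2) : ℝ)) (Set.Ioi 1) :=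
    (integrableOn_Ioi_rpow_of_lt (by norm_num) zero_lt_one).const_mul 18
  refine (MeasureTheory.norm_integral_le_of_norm_le hi ?_).trans ?_
  · filter_upwards [MeasureTheory.ae_restrict_mem measurableSet_Ioi] with t ht
    have ht0 : (0:ℝ) < t := zero_lt_one.trans ht
    rw [norm_mul, Complex.norm_cpow_eq_rpow_re_of_pos ht0]
    refine mul_le_mul (norm_bChi_le χ t) ?_ (by positivity) (by norm_num)
    refine Real.rpow_le_rpow_of_exponent_le (le_of_lt ht) ?_
    simp; linarith
  · rw [MeasureTheory.integral_const_mul, integral_Ioi_rpow_of_lt (by norm_num) zero_lt_one]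
    norm_num

lemma norm_deriv_BChi_le (χ : DirichletCharacter ℂ 8) {s : ℂ} (hs : 1 ≤ s.re) :
    ‖deriv (BChi χ) s‖ ≤ 72 := by
  have key : ∀ z ∈ Metric.closedBall s (1/2), 1 / 2 ≤ z.re := by
    intro z hz
    have h1 : |(z - s).re| ≤ 1/2 := (Complex.abs_re_le_norm _).trans (by simpa [dist_eq_norm] using hz)
    have := abs_le.1 h1
    simp at this
    linarith
  have := Complex.norm_deriv_le_of_forall_mem_sphere_norm_le (c := s) (R := 1/2) (C := 36)
    (f := BChi χ) (by norm_num) ?_ (fun z hz => norm_BChi_le χ (key z (Metric.sphere_subset_closedBall hz)))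
  · linarith
  · refine DifferentiableOn.diffContOnCl fun z hz => ?_
    rw [closure_ball _ (by norm_num)] at hz
    exact (BChi_differentiableAt χ (by linarith [key z hz])).differentiableWithinAt

/-- The Dirichlet series `L(s, χ)`. -/
noncomputable def LChi (χ : DirichletCharacter ℂ 8) (s : ℂ) : ℂ := LSeries (fun n => χ (n : ZMod 8)) s

open MeasureTheory in
/-- Partial summation splits `L(s, χ)` into its polar part and a part holomorphic for `Re s > 0`. -/
lemma LChi_eq (χ : DirichletCharacter ℂ 8) {s : ℂ} (hs : 1 < s.re) :
    LChi χ s = kap χ * (s / (s - 1)) + s * BChi χ s := by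
  rw [LChi, LSeries_eq_mul_integral' (fun n => χ (n : ZMod 8)) zero_le_one hs]
  · have hs1 : s - 1 ≠ 0 := by
      intro h
      have : s.re = 1 := by rw [sub_eq_zero.1 h]; simp
      linarith
    have h1 : ∀ t ∈ Set.Ioi (1:ℝ), (∑ k ∈ Icc 1 ⌊t⌋₊, χ (k : ZMod 8)) * (t : ℂ) ^ (-(s + 1))
        = (kap χ : ℂ) * (t : ℂ) ^ (-s) + bChi χ t * (t : ℂ) ^ (-(s + 1)) := by
      intro t ht
      have ht0 : (t : ℂ) ≠ 0 := by
        have : (0:ℝ) < t := zero_lt_one.trans ht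
        exact_mod_cast this.ne'
      have : (t : ℂ) ^ (-s) = t * (t : ℂ) ^ (-(s + 1)) := by
        rw [show -s = 1 + (-(s+1)) by ring, Complex.cpow_add _ _ ht0, Complex.cpow_one]
      rw [this, bChi, Set.indicator_of_mem ht]
      ring
    rw [setIntegral_congr_fun measurableSet_Ioi h1, integral_add, integral_const_mul,
      integral_Ioi_cpow_of_lt (by simpa using hs) zero_lt_one, ← BChi_eq]
    · have : -s + 1 ≠ 0 := by intro h; apply hs1; linear_combination -h
      simp only [Complex.ofReal_one, Complex.one_cpow]
      field_simp
      ring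
    · exact (integrableOn_Ioi_cpow_of_lt (by simpa using hs) zero_lt_one).const_mul _
    · have hi : IntegrableOn (fun t : ℝ => (t : ℂ) ^ (-(s+1))) (Set.Ioi 1) :=
        integrableOn_Ioi_cpow_of_lt (by simp; linarith) zero_lt_one
      exact hi.bdd_mul (measurable_bChi χ).aestronglyMeasurable
        (Filter.Eventually.of_forall (norm_bChi_le χ))
  · refine Asymptotics.IsBigO.of_bound 1 (Filter.Eventually.of_forall fun n => ?_)
    simp only [Real.rpow_one, one_mul, Real.norm_natCast]
    rw [Real.norm_of_nonneg (by positivity)]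
    calc _ ≤ ∑ k ∈ Icc 1 n, (1:ℝ) := Finset.sum_le_sum fun k _ => DirichletCharacter.norm_le_one χ _
      _ = n := by simp

lemma sub_one_ne_zero_of_re {s : ℂ} (hs : 1 < s.re) : s - 1 ≠ 0 := by
  intro h
  have : s.re = 1 := by rw [sub_eq_zero.1 h]; simp
  linarith

lemma LChi_hasDerivAt (χ : DirichletCharacter ℂ 8) {s : ℂ} (hs : 1 < s.re) :
    HasDerivAt (LChi χ) (-(kap χ / (s - 1) ^ 2) + (BChi χ s + s * deriv (BChi χ) s)) s := by
  have hs1 := sub_one_ne_zero_of_re hs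
  have h1 : HasDerivAt (fun s => kap χ * (s / (s - 1)) + s * BChi χ s)
      (-(kap χ / (s - 1) ^ 2) + (BChi χ s + s * deriv (BChi χ) s)) s := by
    have a := ((hasDerivAt_id s).div ((hasDerivAt_id s).sub_const 1) hs1).const_mul (kap χ : ℂ)
    have b := (hasDerivAt_id s).mul (BChi_differentiableAt χ (by linarith)).hasDerivAt
    refine (a.add b).congr_deriv ?_
    simp only [id]
    field_simp
    ring
  refine h1.congr_of_eventuallyEq ?_
  have : {z : ℂ | 1 < z.re} ∈ nhds s := (isOpen_lt continuous_const Complex.continuous_re).mem_nhds hs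
  filter_upwards [this] with z hz
  exact LChi_eq χ hz

lemma norm_LChi_sub_le (χ : DirichletCharacter ℂ 8) {s : ℂ} (hs : 1 < s.re) :
    ‖LChi χ s - kap χ * (s / (s - 1))‖ ≤ 36 * ‖s‖ := by
  rw [LChi_eq χ hs, add_sub_cancel_left, norm_mul, mul_comm]
  exact mul_le_mul_of_nonneg_right (norm_BChi_le χ (by linarith)) (norm_nonneg _)

lemma norm_deriv_LChi_add_le (χ : DirichletCharacter ℂ 8) {s : ℂ} (hs : 1 < s.re) :
    ‖deriv (LChi χ) s + kap χ / (s - 1) ^ 2‖ ≤ 108 * ‖s‖ := by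
  rw [(LChi_hasDerivAt χ hs).deriv]
  have h1 : 1 ≤ ‖s‖ := hs.le.trans (Complex.re_le_norm s)
  have h2 := norm_BChi_le χ (s := s) (by linarith)
  have h3 := norm_deriv_BChi_le χ hs.le
  have : -(kap χ / (s - 1) ^ 2) + (BChi χ s + s * deriv (BChi χ) s) + kap χ / (s - 1) ^ 2
    = BChi χ s + s * deriv (BChi χ) s := by ring
  rw [this]
  refine (norm_add_le _ _).trans ?_
  rw [norm_mul]
  nlinarith [norm_nonneg s]

/-! ### Square roots of the Dirichlet series -/

/-- The coefficients of `L(s, χ)^{1/2}`. -/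
noncomputable def hChi (χ : DirichletCharacter ℂ 8) (n : ℕ) : ℂ := (hHalf n : ℂ) * χ (n : ZMod 8)

/-- The square root `F_χ(s) = L(s, χ)^{1/2}`, defined by its Dirichlet series. -/
noncomputable def FChi (χ : DirichletCharacter ℂ 8) (s : ℂ) : ℂ := LSeries (hChi χ) s

lemma norm_hChi_le (χ : DirichletCharacter ℂ 8) (n : ℕ) : ‖hChi χ n‖ ≤ 1 := by
  rw [hChi, norm_mul, Complex.norm_real, Real.norm_of_nonneg (hHalf_nonneg n)]
  exact mul_le_one₀ (hHalf_le_one n) (norm_nonneg _) (DirichletCharacter.norm_le_one χ _)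

lemma hChi_abscissa (χ : DirichletCharacter ℂ 8) {s : ℂ} (hs : 1 < s.re) :
    LSeries.abscissaOfAbsConv (hChi χ) < s.re := by
  refine lt_of_le_of_lt (LSeries.abscissaOfAbsConv_le_of_le_const ⟨1, fun n _ => norm_hChi_le χ n⟩) ?_
  exact_mod_cast hs

lemma FChi_sq (χ : DirichletCharacter ℂ 8) {s : ℂ} (hs : 1 < s.re) :
    FChi χ s ^ 2 = LChi χ s := by
  rw [sq, FChi, ← LSeries_convolution (hChi_abscissa χ hs) (hChi_abscissa χ hs), LChi]
  refine LSeries_congr (fun {n} hn => ?_) s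
  rw [LSeries.convolution_def]
  show ∑ p ∈ n.divisorsAntidiagonal, hChi χ p.1 * hChi χ p.2 = χ (n : ZMod 8)
  have h1 : ∀ p ∈ n.divisorsAntidiagonal, hChi χ p.1 * hChi χ p.2
      = ((hHalf p.1 * hHalf p.2 : ℝ) : ℂ) * χ (n : ZMod 8) := by
    intro p hp
    have h2 := (Nat.mem_divisorsAntidiagonal.1 hp).1
    rw [← h2]
    push_cast
    rw [map_mul, hChi, hChi]
    ring
  rw [Finset.sum_congr rfl h1, ← Finset.sum_mul, ← Complex.ofReal_sum]
  have h3 : ∑ p ∈ n.divisorsAntidiagonal, hHalf p.1 * hHalf p.2 = 1 := by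
    rw [← ArithmeticFunction.mul_apply, hHalf_mul_self]
    simp [ArithmeticFunction.natCoe_apply, ArithmeticFunction.zeta_apply, hn]
  rw [h3]; simp

lemma FChi_differentiableAt (χ : DirichletCharacter ℂ 8) {s : ℂ} (hs : 1 < s.re) :
    DifferentiableAt ℂ (FChi χ) s :=
  (LSeries_hasDerivAt (hChi_abscissa χ hs)).differentiableAt

lemma FChi_mul_deriv (χ : DirichletCharacter ℂ 8) {s : ℂ} (hs : 1 < s.re) :
    2 * FChi χ s * deriv (FChi χ) s = deriv (LChi χ) s := by
  have h1 := ((FChi_differentiableAt χ hs).hasDerivAt.pow 2).deriv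
  have : (fun z => FChi χ z ^ 2) =ᶠ[nhds s] LChi χ := by
    have : {z : ℂ | 1 < z.re} ∈ nhds s :=
      (isOpen_lt continuous_const Complex.continuous_re).mem_nhds hs
    filter_upwards [this] with z hz
    exact FChi_sq χ hz
  rw [← this.deriv_eq]
  change _ = deriv (FChi χ ^ 2) s
  rw [h1]; simp

/-- Lower bound for `|L(s,χ)|` to the right of the line `Re s = 1`, from `3 + 4 cos θ + cos 2θ ≥ 0`. -/
lemma three_four_one (χ : DirichletCharacter ℂ 8) {σ : ℝ} (h1 : 1 < σ) (h2 : σ ≤ 2) {t : ℝ}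
    (ht : t ≠ 0) :
    1 ≤ (73 / (σ - 1)) ^ 3 * ‖LChi χ (σ + t * Complex.I)‖ ^ 4 * (74 * (1 + |t|) ^ 2 / |t|) := by
  have h := DirichletCharacter.norm_LSeries_product_ge_one χ (x := σ - 1) (by linarith) t
  have ht0 : 0 < |t| := abs_pos.2 ht
  have e1 : (1 : ℂ) + ((σ - 1 : ℝ) : ℂ) = (σ : ℂ) := by push_cast; ring
  have e2 : (σ : ℂ) + Complex.I * t = σ + t * Complex.I := by ring
  have e3 : (σ : ℂ) + 2 * Complex.I * t = σ + (2 * t : ℝ) * Complex.I := by push_cast; ring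
  rw [e1, e2, e3, norm_mul, norm_mul, norm_pow, norm_pow] at h
  have b1 : ‖LChi 1 σ‖ ≤ 73 / (σ - 1) := by
    have a := norm_LChi_sub_le 1 (s := σ) (by simpa using h1)
    have hs : ‖(σ : ℂ)‖ = σ := by rw [Complex.norm_real, Real.norm_of_nonneg (by linarith)]
    have hk : ‖((kap 1 : ℝ) : ℂ) * (σ / (σ - 1))‖ ≤ 1 / (σ - 1) := by
      have : ((kap 1 : ℝ) : ℂ) * (σ / (σ - 1)) = ((kap 1 * (σ / (σ - 1)) : ℝ) : ℂ) := by push_cast; rfl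
      rw [this, Complex.norm_real]
      have hp : 0 < σ - 1 := by linarith
      rw [Real.norm_of_nonneg (mul_nonneg (kap_nonneg _) (by positivity)), kap, if_pos rfl]
      rw [div_mul_div_comm, div_le_div_iff₀ (by positivity) hp]
      nlinarith
    have h3 : ‖LChi 1 (σ : ℂ)‖ ≤ 1 / (σ - 1) + 36 * σ := by
      have := norm_sub_norm_le (LChi 1 (σ : ℂ)) (((kap 1 : ℝ) : ℂ) * (σ / (σ - 1)))
      rw [hs] at a; linarith
    refine h3.trans ?_
    have hp : 0 < σ - 1 := by linarith
    rw [div_add' _ _ _ hp.ne', div_le_div_iff_of_pos_right hp]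
    nlinarith
  have b2 : ‖LChi (χ ^ 2) (σ + (2 * t : ℝ) * Complex.I)‖ ≤ 74 * (1 + |t|) ^ 2 / |t| := by
    set s : ℂ := σ + (2 * t : ℝ) * Complex.I with hs
    have hre : s.re = σ := by simp [hs]
    have him : s.im = 2 * t := by simp [hs]
    have a := norm_LChi_sub_le (χ ^ 2) (s := s) (by rw [hre]; exact h1)
    have hn : ‖s‖ ≤ 2 * (1 + |t|) := by
      have := Complex.norm_le_abs_re_add_abs_im s
      rw [hre, him, abs_mul, abs_of_pos (by linarith : (0:ℝ) < σ)] at this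
      norm_num at this
      linarith
    have hn1 : |t| ≤ ‖s - 1‖ := by
      have := Complex.abs_im_le_norm (s - 1)
      rw [Complex.sub_im, him] at this
      simp at this
      linarith
    have hk : ‖((kap (χ ^ 2) : ℝ) : ℂ) * (s / (s - 1))‖ ≤ (1 + |t|) / |t| := by
      rw [norm_mul, norm_div, Complex.norm_real, Real.norm_of_nonneg (kap_nonneg _)]
      calc _ ≤ 1 / 2 * (2 * (1 + |t|) / |t|) := by
            gcongr
            · exact kap_le _
        _ = _ := by ring
    have := norm_sub_norm_le (LChi (χ ^ 2) s) (((kap (χ ^ 2) : ℝ) : ℂ) * (s / (s - 1)))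
    have h3 : ‖LChi (χ ^ 2) s‖ ≤ (1 + |t|) / |t| + 36 * (2 * (1 + |t|)) := by linarith
    refine h3.trans ?_
    rw [div_add' _ _ _ ht0.ne', div_le_div_iff_of_pos_right ht0]
    nlinarith
  have h4 : ‖LSeries (fun n : ℕ => (1 : DirichletCharacter ℂ 8) (n : ZMod 8)) σ‖ ^ 3 ≤ (73 / (σ - 1)) ^ 3 :=
    pow_le_pow_left₀ (norm_nonneg _) b1 3
  refine h.le.trans ?_
  change _ * ‖LChi χ _‖ ^ 4 * ‖LChi (χ ^ 2) _‖ ≤ _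
  have hp : 0 < σ - 1 := by linarith
  gcongr

/-- Bound for `F_χ' = L'/(2F_χ)` away from `s = 1`. The exponent `3/8` is half of the `3/4` which the
inequality `3 + 4 cos θ + cos 2θ ≥ 0` gives for `1/|L|`; any exponent below `1/2` suffices. -/
lemma norm_deriv_FChi_le (χ : DirichletCharacter ℂ 8) {σ : ℝ} (h1 : 1 < σ) (h2 : σ ≤ 2) {t : ℝ}
    (ht : t ≠ 0) :
    ‖deriv (FChi χ) (σ + t * Complex.I)‖ ≤
      (kap χ / |t| ^ 2 + 216 * (1 + |t|)) * (73 * (σ - 1) ^ (-(3/8) : ℝ)) *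
        (9 * (1 + |t|) * |t| ^ (-(1/2) : ℝ)) := by
  set s : ℂ := σ + t * Complex.I with hs
  have hre : s.re = σ := by simp [hs]
  have him : s.im = t := by simp [hs]
  have hs1 : 1 < s.re := by rw [hre]; exact h1
  have ht0 : 0 < |t| := abs_pos.2 ht
  have hp : 0 < σ - 1 := by linarith
  have hm := congrArg norm (FChi_mul_deriv χ hs1)
  have hsq := congrArg norm (FChi_sq χ hs1)
  rw [norm_pow] at hsq
  rw [norm_mul, norm_mul, Complex.norm_ofNat] at hm
  have hn : ‖s‖ ≤ 2 * (1 + |t|) := by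
    have := Complex.norm_le_abs_re_add_abs_im s
    rw [hre, him, abs_of_pos (by linarith : (0:ℝ) < σ)] at this
    linarith
  have hn1 : |t| ≤ ‖s - 1‖ := by
    have := Complex.abs_im_le_norm (s - 1)
    rwa [Complex.sub_im, him, Complex.one_im, sub_zero] at this
  have hL' : ‖deriv (LChi χ) s‖ ≤ kap χ / |t| ^ 2 + 216 * (1 + |t|) := by
    have a := norm_deriv_LChi_add_le χ hs1
    have b := norm_sub_norm_le (deriv (LChi χ) s) (-((kap χ : ℂ) / (s - 1) ^ 2))
    rw [sub_neg_eq_add, norm_neg, norm_div, norm_pow, Complex.norm_real,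
      Real.norm_of_nonneg (kap_nonneg χ)] at b
    have c : kap χ / ‖s - 1‖ ^ 2 ≤ kap χ / |t| ^ 2 := by
      have := kap_nonneg χ
      gcongr
    linarith
  -- `1 ≤ A ^ 3 * ‖F‖ ^ 8 * y`, hence `1 ≤ A ^ (3/8) * ‖F‖ * y ^ (1/8)`
  have h341 := three_four_one χ h1 h2 ht
  rw [← hs, ← hsq, ← pow_mul] at h341
  norm_num at h341
  set y := 74 * (1 + |t|) ^ 2 / |t| with hy
  have hy1 : 1 ≤ y := by rw [hy, le_div_iff₀ ht0]; nlinarith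
  set x := ‖FChi χ s‖ with hx
  have hx0 : 0 ≤ x := norm_nonneg _
  have key : 1 ≤ (73 * (σ - 1) ^ (-(3/8) : ℝ)) * x * (9 * (1 + |t|) * |t| ^ (-(1/2) : ℝ)) := by
    have r1 : 1 ≤ ((73 / (σ - 1)) ^ 3 * x ^ 8 * y) ^ (1/8 : ℝ) := Real.one_le_rpow h341 (by norm_num)
    rw [Real.mul_rpow (by positivity) (by positivity), Real.mul_rpow (by positivity) (by positivity),
      ← Real.rpow_natCast, ← Real.rpow_natCast, ← Real.rpow_mul (by positivity),
      ← Real.rpow_mul hx0] at r1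
    norm_num at r1
    have r2 : (73 / (σ - 1)) ^ (3/8 : ℝ) ≤ 73 * (σ - 1) ^ (-(3/8) : ℝ) := by
      rw [Real.div_rpow (by norm_num) hp.le, Real.rpow_neg hp.le, div_eq_mul_inv]
      gcongr
      calc (73 : ℝ) ^ (3/8 : ℝ) ≤ 73 ^ (1 : ℝ) :=
            Real.rpow_le_rpow_of_exponent_le (by norm_num) (by norm_num)
        _ = 73 := by simp
    have r3 : y ^ (1/8 : ℝ) ≤ 9 * (1 + |t|) * |t| ^ (-(1/2) : ℝ) := by
      calc y ^ (1/8 : ℝ) ≤ y ^ (1/2 : ℝ) := Real.rpow_le_rpow_of_exponent_le hy1 (by norm_num)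
        _ ≤ ((9 * (1 + |t|)) ^ 2 / |t|) ^ (1/2 : ℝ) := by
            refine Real.rpow_le_rpow (by positivity) ?_ (by norm_num)
            rw [hy]; gcongr; nlinarith [sq_nonneg (1 + |t|)]
        _ = _ := by
            rw [Real.div_rpow (by positivity) ht0.le, ← Real.sqrt_eq_rpow, Real.sqrt_sq (by positivity),
              Real.rpow_neg ht0.le, div_eq_mul_inv]
    calc (1:ℝ) ≤ _ := r1
      _ ≤ _ := by gcongr
  have hx1 : 0 < x := by
    by_contra h
    have : x = 0 := le_antisymm (not_lt.1 h) hx0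
    rw [this] at key; simp at key; linarith
  calc ‖deriv (FChi χ) s‖ = ‖deriv (LChi χ) s‖ / (2 * x) := by rw [← hm]; field_simp
    _ ≤ (kap χ / |t| ^ 2 + 216 * (1 + |t|)) * (1 / x) := by
      rw [mul_one_div]
      have : 0 ≤ kap χ / |t| ^ 2 + 216 * (1 + |t|) := (norm_nonneg _).trans hL'
      gcongr
      linarith
    _ ≤ _ := by
      have : 0 ≤ kap χ / |t| ^ 2 + 216 * (1 + |t|) := (norm_nonneg _).trans hL'
      rw [mul_assoc]
      refine mul_le_mul_of_nonneg_left ?_ this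
      rw [div_le_iff₀ hx1]
      calc 1 ≤ _ := key
        _ = _ := by ring

/-- Singular behaviour of `F_1'` at `s = 1`: it is `-(s-1)^{-3/2}/(2√2)` up to `O(|s-1|^{-1/2})`. -/
lemma norm_deriv_FChi_one_add_le :
    ∀ s : ℂ, 1 < s.re → ‖s - 1‖ < 1 / 292 →
      ‖deriv (FChi 1) s + (1 / (2 * √2) : ℝ) * (s - 1) ^ (-(3/2) : ℂ)‖
        ≤ 1000 * ‖s - 1‖ ^ (-(1/2) : ℝ) := by
  set U : Set ℂ := {s : ℂ | 1 < s.re} ∩ Metric.ball 1 (1/292) with hU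
  have hconv : Convex ℝ U := (convex_halfSpace_re_gt 1).inter (convex_ball _ _)
  set P : ℂ → ℂ := fun s => (s - 1) * LChi 1 s with hP
  have hPb : ∀ s ∈ U, ‖P s - 1/2‖ ≤ 73 * ‖s - 1‖ := by
    intro s hs
    have hs1 : 1 < s.re := hs.1
    have hd : ‖s - 1‖ < 1/292 := by simpa [dist_eq_norm] using hs.2
    have hne := sub_one_ne_zero_of_re hs1
    have e : P s - 1/2 = (s - 1) * (1 / 2 + s * BChi 1 s) := by
      rw [hP]; simp only
      rw [LChi_eq 1 hs1, kap, if_pos rfl]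
      push_cast
      field_simp
      ring
    rw [e, norm_mul, mul_comm]
    refine mul_le_mul_of_nonneg_right ?_ (norm_nonneg _)
    have hn : ‖s‖ ≤ 2 := by
      have := norm_add_le (s - 1) 1
      simp at this; linarith
    have := norm_BChi_le 1 (s := s) (by linarith)
    refine (norm_add_le _ _).trans ?_
    rw [norm_mul]
    have h2 : ‖(1/2 : ℂ)‖ = 1/2 := by simp
    rw [h2]
    nlinarith [norm_nonneg s, norm_nonneg (BChi 1 s)]
  have hPre : ∀ s ∈ U, 1/4 < (P s).re := by
    intro s hs
    have h1 := hPb s hs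
    have hd : ‖s - 1‖ < 1/292 := by simpa [dist_eq_norm] using hs.2
    have h2 := (abs_le.1 (Complex.abs_re_le_norm (P s - 1/2))).1
    simp at h2
    linarith
  have hslit : ∀ s ∈ U, P s ∈ Complex.slitPlane := fun s hs =>
    Or.inl (by linarith [hPre s hs])
  have hslit1 : ∀ s ∈ U, s - 1 ∈ Complex.slitPlane := fun s hs =>
    Or.inl (by have : 1 < s.re := hs.1; simp; linarith)
  set E : ℂ → ℂ := fun s => FChi 1 s * (s - 1) ^ (1/2 : ℂ) with hE
  have hw : ∀ z : ℂ, (z ^ (1/2 : ℂ)) ^ 2 = z := by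
    intro z
    simp
  have hEP : Set.EqOn E (fun s => P s ^ (1/2 : ℂ)) U := by
    have hor := hconv.isPreconnected.eq_or_eq_neg_of_sq_eq (f := E) (g := fun s => P s ^ (1/2 : ℂ))
      ?_ ?_ ?_ ?_
    · rcases hor with h | h
      · exact h
      · exfalso
        have hmem : ((1 + 1/584 : ℝ) : ℂ) ∈ U := by
          refine ⟨by simp, ?_⟩
          rw [Metric.mem_ball, dist_eq_norm]
          have : ((1 + 1/584 : ℝ) : ℂ) - 1 = ((1/584 : ℝ) : ℂ) := by push_cast; ring
          rw [this, Complex.norm_real]; norm_num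
        have h3 := h hmem
        set s0 : ℂ := ((1 + 1/584 : ℝ) : ℂ) with hs0
        have hF : 0 ≤ (FChi 1 s0).re := by
          rw [FChi, LSeries, Complex.re_tsum]
          · refine tsum_nonneg fun n => ?_
            rcases eq_or_ne n 0 with rfl | hn
            · simp
            · rw [LSeries.term_of_ne_zero hn, hs0]
              have : (n : ℂ) ^ ((1 + 1/584 : ℝ) : ℂ) = (((n : ℝ) ^ (1 + 1/584 : ℝ) : ℝ) : ℂ) := by
                rw [Complex.ofReal_cpow (Nat.cast_nonneg n)]; simp
              rw [this, Complex.div_ofReal_re]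
              refine div_nonneg ?_ (by positivity)
              rw [hChi]
              by_cases hu : IsUnit ((n : ℕ) : ZMod 8)
              · rw [MulChar.one_apply hu]; simpa using hHalf_nonneg n
              · rw [MulChar.map_nonunit _ hu]; simp
          · exact LSeriesSummable_of_bounded_of_one_lt_re (m := 1) (fun n _ => norm_hChi_le 1 n)
              (by rw [hs0]; simp)
        have hEr : 0 ≤ (E s0).re := by
          have : (s0 - 1) ^ (1/2 : ℂ) = (((1/584 : ℝ) ^ (1/2 : ℝ) : ℝ) : ℂ) := by
            have h5 : s0 - 1 = ((1/584 : ℝ) : ℂ) := by rw [hs0]; push_cast; ring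
            rw [h5, Complex.ofReal_cpow (by norm_num)]; push_cast; rfl
          rw [hE]; simp only
          rw [this, Complex.re_mul_ofReal]
          exact mul_nonneg hF (by positivity)
        have hPr : 0 < (P s0 ^ (1/2 : ℂ)).re := by
          have h6 := hPre s0 hmem
          have := (Complex.abs_arg_lt_pi_div_two_iff (z := P s0)).2 (Or.inl (by linarith))
          rw [show P s0 ^ (1/2 : ℂ) = Complex.exp (Complex.log (P s0) * (1/2)) from
            Complex.cpow_def_of_ne_zero (fun h0 => by rw [h0] at h6; simp at h6; linarith) _,
            Complex.exp_re]
          refine mul_pos (Real.exp_pos _) (Real.cos_pos_of_mem_Ioo ?_)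
          have := abs_lt.1 this
          simp [Complex.log_im]
          constructor <;> linarith
        rw [h3] at hEr
        simp at hEr hPr
        linarith
    · intro s hs
      refine ContinuousAt.continuousWithinAt ?_
      refine (FChi_differentiableAt 1 hs.1).continuousAt.mul ?_
      exact ContinuousAt.cpow (by fun_prop) continuousAt_const (hslit1 s hs)
    · intro s hs
      refine ContinuousAt.continuousWithinAt ?_
      refine ContinuousAt.cpow ?_ continuousAt_const (hslit s hs)
      exact (by fun_prop : ContinuousAt (fun s : ℂ => s - 1) s).mul
        (LChi_hasDerivAt 1 hs.1).continuousAt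
    · intro s hs
      simp only [Pi.pow_apply, hE, mul_pow, hw, hP]
      rw [FChi_sq 1 hs.1, mul_comm]
    · intro s hs h0
      have := hw (P s)
      change P s ^ (1/2:ℂ) = 0 at h0
      rw [h0] at this
      have h6 := hPre s hs
      rw [← this] at h6; simp at h6; linarith
  intro s hs1 hsd
  have hsU : s ∈ U := ⟨hs1, by simpa [dist_eq_norm] using hsd⟩
  have hne := sub_one_ne_zero_of_re hs1
  have hEs := hEP hsU
  set e := E s with he
  set w := (s - 1) ^ (1/2 : ℂ) with hwdef
  have hww : w ^ 2 = s - 1 := hw _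
  have hw0 : w ≠ 0 := fun h => hne (by rw [← hww, h]; simp)
  have hee : e ^ 2 = P s := by rw [hEs]; exact hw _
  have hPn : 1/4 ≤ ‖P s‖ := (hPre s hsU).le.trans (Complex.re_le_norm _)
  have hen : 1/2 ≤ ‖e‖ := by
    have : ‖e‖ ^ 2 = ‖P s‖ := by rw [← norm_pow, hee]
    nlinarith [norm_nonneg e]
  have he0 : e ≠ 0 := fun h => by rw [h] at hen; simp at hen; linarith
  have here : 0 < e.re := by
    rw [hEs]
    show 0 < (P s ^ (1/2 : ℂ)).re
    have h6 := hPre s hsU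
    have := (Complex.abs_arg_lt_pi_div_two_iff (z := P s)).2 (Or.inl (by linarith))
    rw [show P s ^ (1/2 : ℂ) = Complex.exp (Complex.log (P s) * (1/2)) from
      Complex.cpow_def_of_ne_zero (fun h0 => by rw [h0] at h6; simp at h6; linarith) _,
      Complex.exp_re]
    refine mul_pos (Real.exp_pos _) (Real.cos_pos_of_mem_Ioo ?_)
    have := abs_lt.1 this
    simp [Complex.log_im]
    constructor <;> linarith
  set k : ℝ := 1 / √2 with hk
  have hk2 : k ^ 2 = 1/2 := by rw [hk, div_pow, Real.sq_sqrt (by norm_num)]; norm_num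
  have hk0 : 0 < k := by positivity
  have hkl : 1/2 ≤ k := by nlinarith
  have hk2c : (k : ℂ) ^ 2 = 1/2 := by rw [← Complex.ofReal_pow, hk2]; push_cast; rfl
  have hkc0 : (k : ℂ) ≠ 0 := by exact_mod_cast hk0.ne'
  have hek : ‖e - k‖ ≤ 146 * ‖w‖ ^ 2 := by
    have h1 : (e - k) * (e + k) = P s - 1/2 := by
      rw [← hee, ← hk2c]; ring
    have h2 : k ≤ ‖e + k‖ := by
      have := Complex.re_le_norm (e + k)
      simp at this; linarith
    have h3 := congrArg norm h1
    rw [norm_mul] at h3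
    have h4 := hPb s hsU
    have h5 : ‖w‖ ^ 2 = ‖s - 1‖ := by rw [← norm_pow, hww]
    rw [h5]
    nlinarith [norm_nonneg (e - k)]
  have hF : FChi 1 s = e / w := by rw [he, hE]; field_simp; rfl
  set R := deriv (LChi 1) s + kap 1 / (s - 1) ^ 2 with hR
  have hRn : ‖R‖ ≤ 216 := by
    refine (norm_deriv_LChi_add_le 1 hs1).trans ?_
    have := norm_add_le (s - 1) 1
    simp at this; linarith
  have hF' : deriv (FChi 1) s = (-(1/2) / w ^ 4 + R) * w / (2 * e) := by
    have h1 := FChi_mul_deriv 1 hs1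
    have h2 : deriv (LChi 1) s = -(1/2) / w ^ 4 + R := by
      rw [hR, show w ^ 4 = (w ^ 2) ^ 2 by ring, hww, kap, if_pos rfl]
      push_cast
      ring
    rw [← h2, ← h1, hF]
    field_simp
  have hmod : ((1 / (2 * √2) : ℝ) : ℂ) * (s - 1) ^ (-(3/2) : ℂ) = (1 / (4 * k)) / w ^ 3 := by
    have h1 : (s - 1) ^ (-(3/2) : ℂ) = 1 / w ^ 3 := by
      rw [Complex.cpow_neg, hwdef, ← Complex.cpow_nat_mul]
      norm_num
    have h2 : (1 / (2 * √2) : ℝ) = 1 / (4 * k) := by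
      have h3 : (1 / (2 * √2) : ℝ) = k / 2 := by rw [hk]; field_simp
      rw [h3]; field_simp; nlinarith
    rw [h1, h2]; push_cast; ring
  have hsum : deriv (FChi 1) s + ((1 / (2 * √2) : ℝ) : ℂ) * (s - 1) ^ (-(3/2) : ℂ)
      = (e - k) / (4 * k * e * w ^ 3) + R * w / (2 * e) := by
    rw [hmod, hF']
    field_simp
    ring
  rw [hsum]
  have hwn0 : 0 < ‖w‖ := norm_pos_iff.2 hw0
  have hwn1 : ‖w‖ ≤ 1 := by
    have : ‖w‖ ^ 2 = ‖s - 1‖ := by rw [← norm_pow, hww]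
    nlinarith
  have hfin : ‖s - 1‖ ^ (-(1/2) : ℝ) = 1 / ‖w‖ := by
    have : ‖w‖ ^ 2 = ‖s - 1‖ := by rw [← norm_pow, hww]
    rw [← this, Real.rpow_neg (by positivity), ← Real.sqrt_eq_rpow, Real.sqrt_sq hwn0.le, one_div]
  rw [hfin]
  refine (norm_add_le _ _).trans ?_
  have t1 : ‖(e - k) / (4 * k * e * w ^ 3)‖ ≤ 146 * (1 / ‖w‖) := by
    rw [norm_div, norm_mul, norm_mul, norm_mul, norm_pow, Complex.norm_real,
      Real.norm_of_nonneg hk0.le, Complex.norm_ofNat]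
    rw [div_le_iff₀ (by positivity)]
    have : 146 * (1 / ‖w‖) * (4 * k * ‖e‖ * ‖w‖ ^ 3) = (146 * ‖w‖ ^ 2) * (4 * k * ‖e‖) := by
      field_simp
    rw [this]
    have h4 : 1 ≤ 4 * k * ‖e‖ := by nlinarith
    nlinarith [sq_nonneg ‖w‖]
  have t2 : ‖R * w / (2 * e)‖ ≤ 216 * (1 / ‖w‖) := by
    rw [norm_div, norm_mul, norm_mul, Complex.norm_ofNat, div_le_iff₀ (by positivity)]
    calc ‖R‖ * ‖w‖ ≤ 216 * 1 := by gcongr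
      _ ≤ 216 * (1 / ‖w‖) * 1 := by
        have : 1 ≤ 1 / ‖w‖ := by rw [le_div_iff₀ hwn0]; linarith
        linarith
      _ ≤ _ := by
        gcongr; linarith
  have : 0 < 1 / ‖w‖ := by positivity
  linarith

/-! ### Removal of the singularity at `s = 1` -/

/-- The remainder `D_χ = F_χ' + κ_χ 2^{-1/2} (s-1)^{-3/2}` of `F_χ'` after removal of its singularity
at `s = 1`. -/
noncomputable def DChi (χ : DirichletCharacter ℂ 8) (s : ℂ) : ℂ :=
  deriv (FChi χ) s + (kap χ / √2 : ℝ) * (s - 1) ^ (-(3/2) : ℂ)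

/-- One bound on the whole line `Re s = σ`: the singularity at `t = 0` is integrable and the growth in `t` is
compensated by the decay of the Mellin transform of the cut-off. -/
lemma norm_DChi_le (χ : DirichletCharacter ℂ 8) {σ : ℝ} (h1 : 1 < σ) (h2 : σ ≤ 1 + 1 / 584) {t : ℝ}
    (ht : t ≠ 0) :
    ‖DChi χ (σ + t * Complex.I)‖ ≤
      10 ^ 9 * (σ - 1) ^ (-(3/8) : ℝ) * |t| ^ (-(1/2) : ℝ) * (1 + |t|) ^ 2 := by
  have ht0 : 0 < |t| := abs_pos.2 ht
  have hp : 0 < σ - 1 := by linarith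
  have hA : 1 ≤ (σ - 1) ^ (-(3/8) : ℝ) :=
    Real.one_le_rpow_of_pos_of_le_one_of_nonpos hp (by linarith) (by norm_num)
  have hB : 0 < |t| ^ (-(1/2) : ℝ) := by positivity
  have hF := norm_deriv_FChi_le χ h1 (by linarith) ht
  set s : ℂ := σ + t * Complex.I with hs
  have hn1 : |t| ≤ ‖s - 1‖ := by
    have := Complex.abs_im_le_norm (s - 1)
    simpa [hs] using this
  set A := (σ - 1) ^ (-(3/8) : ℝ) with hAd
  set B := |t| ^ (-(1/2) : ℝ) with hBd
  have hAB : 0 ≤ A * B * (1 + |t|) ^ 2 := by positivity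
  have hABl : B ≤ A * B * (1 + |t|) ^ 2 := by
    calc B = 1 * B * 1 ^ 2 := by ring
      _ ≤ _ := by gcongr; linarith
  by_cases hχ : χ = 1
  · rcases lt_or_ge |t| (1/584) with hlt | hge
    · have hsm : ‖s - 1‖ < 1/292 := by
        have := Complex.norm_le_abs_re_add_abs_im (s - 1)
        have e1 : (s - 1).re = σ - 1 := by simp [hs]
        have e2 : (s - 1).im = t := by simp [hs]
        rw [e1, e2, abs_of_pos hp] at this
        linarith
      have := norm_deriv_FChi_one_add_le s (by simp [hs]; linarith) hsm
      rw [DChi, hχ, kap, if_pos rfl, div_div]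
      refine this.trans ?_
      have h3 : ‖s - 1‖ ^ (-(1/2) : ℝ) ≤ B :=
        Real.rpow_le_rpow_of_nonpos ht0 hn1 (by norm_num)
      linarith
    · have hk : kap χ / |t| ^ 2 ≤ 292 * 584 * (1 + |t|) := by
        rw [div_le_iff₀ (by positivity)]
        have h5 : (1/584) ^ 2 ≤ |t| ^ 2 := by gcongr
        nlinarith [kap_le χ, sq_nonneg |t|, mul_pos ht0 (sq_pos_of_pos ht0)]
      have hm : ‖((kap χ / √2 : ℝ) : ℂ) * (s - 1) ^ (-(3/2) : ℂ)‖ ≤ 584 * B := by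
        have e : (-(3/2) : ℂ) = ((-(3/2) : ℝ) : ℂ) := by push_cast; rfl
        rw [norm_mul, e, Complex.norm_cpow_real, Complex.norm_real,
          Real.norm_of_nonneg (by have := kap_nonneg χ; positivity)]
        have h3 : ‖s - 1‖ ^ (-(3/2) : ℝ) ≤ |t| ^ (-(3/2) : ℝ) :=
          Real.rpow_le_rpow_of_nonpos ht0 hn1 (by norm_num)
        have h4 : |t| ^ (-(3/2) : ℝ) = B * |t|⁻¹ := by
          rw [hBd, ← Real.rpow_neg_one, ← Real.rpow_add ht0]; norm_num
        have h5 : |t|⁻¹ ≤ 584 := by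
          rw [inv_le_comm₀ ht0 (by norm_num)]; linarith
        have h6 : kap χ / √2 ≤ 1 := by
          rw [div_le_one (by positivity)]
          have : (1:ℝ) ≤ √2 := Real.one_le_sqrt.2 (by norm_num)
          linarith [kap_le χ]
        calc _ ≤ 1 * |t| ^ (-(3/2) : ℝ) := by gcongr
          _ = B * |t|⁻¹ := by rw [one_mul, h4]
          _ ≤ B * 584 := by gcongr
          _ = _ := by ring
      refine (norm_add_le _ _).trans ?_
      have h7 : ‖deriv (FChi χ) s‖ ≤ 200000 * (73 * 9) * (A * B * (1 + |t|) ^ 2) := by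
        refine hF.trans ?_
        calc _ ≤ (200000 * (1 + |t|)) * (73 * A) * (9 * (1 + |t|) * B) := by
              gcongr; linarith
          _ = _ := by ring
      nlinarith
  · have hk : kap χ = 0 := if_neg hχ
    rw [DChi, hk]
    rw [hk] at hF
    simp only [zero_div, Complex.ofReal_zero, zero_mul, add_zero, zero_add] at hF ⊢
    refine hF.trans ?_
    calc _ = 216 * 73 * 9 * (A * B * (1 + |t|) ^ 2) := by ring
      _ ≤ _ := by nlinarith

open MeasureTheory in
lemma integrable_weight :
    Integrable (fun t : ℝ => |t| ^ (-(1/2) : ℝ) * (1 + |t|)⁻¹) := by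
  have h1 : IntegrableOn (fun t : ℝ => t ^ (-(1/2) : ℝ) * (1 + t)⁻¹) (Set.Ioi 0) := by
    rw [← Set.Ioc_union_Ioi_eq_Ioi zero_le_one]
    refine IntegrableOn.union ?_ ?_
    · have : IntegrableOn (fun t : ℝ => t ^ (-(1/2) : ℝ)) (Set.Ioc 0 1) :=
        (intervalIntegrable_iff_integrableOn_Ioc_of_le zero_le_one).1
          (intervalIntegral.intervalIntegrable_rpow' (by norm_num))
      refine this.mono' (by fun_prop) ?_
      refine (ae_restrict_iff' measurableSet_Ioc).2 (Filter.Eventually.of_forall fun t ht => ?_)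
      have h0 : 0 < t := ht.1
      rw [Real.norm_of_nonneg (by positivity)]
      exact mul_le_of_le_one_right (by positivity) (inv_le_one_of_one_le₀ (by linarith))
    · refine (integrableOn_Ioi_rpow_of_lt (a := -(3/2)) (by norm_num) zero_lt_one).mono' (by fun_prop) ?_
      refine (ae_restrict_iff' measurableSet_Ioi).2 (Filter.Eventually.of_forall fun t ht => ?_)
      have h0 : 0 < t := zero_lt_one.trans ht
      rw [Real.norm_of_nonneg (by positivity)]
      have : t ^ (-(3/2) : ℝ) = t ^ (-(1/2) : ℝ) * t⁻¹ := by
        rw [← Real.rpow_neg_one, ← Real.rpow_add h0]; norm_num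
      rw [this]
      gcongr
      linarith
  have h2 : IntegrableOn (fun t : ℝ => |t| ^ (-(1/2) : ℝ) * (1 + |t|)⁻¹) (Set.Ioi 0) :=
    h1.congr_fun (fun t ht => by simp only [abs_of_pos (show 0 < t from ht)]) measurableSet_Ioi
  have h3 : IntegrableOn (fun t : ℝ => |t| ^ (-(1/2) : ℝ) * (1 + |t|)⁻¹) (Set.Iio 0) := by
    have := ((Measure.measurePreserving_neg (volume : Measure ℝ)).integrableOn_comp_preimage
      (Homeomorph.neg ℝ).measurableEmbedding).2 h2
    simpa [Function.comp_def] using this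
  rw [← integrableOn_univ, ← Set.Iic_union_Ioi (a := (0:ℝ))]
  exact ((integrableOn_Iic_iff_integrableOn_Iio).2 h3).union h2

/-! ### The smooth cut-off and its Mellin transform -/

/-- The smooth cut-off `φ(x) = (1-x)₊²/2`. -/
noncomputable def kern (x : ℝ) : ℝ := (max (1 - x) 0) ^ 2 / 2

/-- The Mellin transform of `kern`. -/
noncomputable def kernM (s : ℂ) : ℂ := 1 / (s * (s + 1) * (s + 2))

lemma kern_continuous : Continuous kern := by unfold kern; fun_prop

lemma kern_nonneg (x : ℝ) : 0 ≤ kern x := by unfold kern; positivity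

lemma kern_of_ge {x : ℝ} (hx : 1 ≤ x) : kern x = 0 := by
  rw [kern, max_eq_right (by linarith)]; simp

lemma kern_le {x : ℝ} (hx : 0 ≤ x) : kern x ≤ 1 := by
  unfold kern
  have : max (1 - x) 0 ≤ 1 := max_le (by linarith) (by norm_num)
  nlinarith [le_max_right (1 - x) 0]

open MeasureTheory in
lemma kern_mellin {s : ℂ} (hs : 0 < s.re) :
    MellinConvergent (fun x => (kern x : ℂ)) s ∧ mellin (fun x => (kern x : ℂ)) s = kernM s := by
  have hb := Complex.betaIntegral_convergent (u := s) (v := 3) hs (by norm_num)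
  have hI : IntegrableOn (fun x : ℝ => (x : ℂ) ^ (s - 1) * (1 - (x : ℂ)) ^ ((3 : ℂ) - 1)) (Set.Ioc 0 1) :=
    (intervalIntegrable_iff_integrableOn_Ioc_of_le zero_le_one).1 hb
  have e1 : Set.EqOn (fun x : ℝ => (x : ℂ) ^ (s - 1) • (kern x : ℂ))
      (fun x : ℝ => (1/2 : ℂ) * ((x : ℂ) ^ (s - 1) * (1 - (x : ℂ)) ^ ((3 : ℂ) - 1))) (Set.Ioc 0 1) := by
    intro x hx
    have h1 : max (1 - x) 0 = 1 - x := max_eq_left (by linarith [hx.2])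
    simp only [kern, h1, smul_eq_mul]
    have : ((3 : ℂ) - 1) = ((2 : ℕ) : ℂ) := by norm_num
    rw [this, Complex.cpow_natCast]
    push_cast; ring
  have e2 : Set.EqOn (fun x : ℝ => (x : ℂ) ^ (s - 1) • (kern x : ℂ)) (fun _ => 0) (Set.Ioi 1) := by
    intro x hx
    simp [kern_of_ge (le_of_lt hx)]
  have i1 : IntegrableOn (fun x : ℝ => (x : ℂ) ^ (s - 1) • (kern x : ℂ)) (Set.Ioc 0 1) :=
    IntegrableOn.congr_fun (hI.const_mul (1/2)) e1.symm measurableSet_Ioc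
  have i2 : IntegrableOn (fun x : ℝ => (x : ℂ) ^ (s - 1) • (kern x : ℂ)) (Set.Ioi 1) :=
    IntegrableOn.congr_fun integrableOn_zero e2.symm measurableSet_Ioi
  constructor
  · unfold MellinConvergent
    rw [← Set.Ioc_union_Ioi_eq_Ioi zero_le_one]
    exact i1.union i2
  · unfold mellin
    rw [← Set.Ioc_union_Ioi_eq_Ioi zero_le_one, setIntegral_union (by
      rw [Set.disjoint_left]; intro x hx hx'; exact absurd hx.2 (not_le.2 hx')) measurableSet_Ioi i1 i2,
      setIntegral_congr_fun measurableSet_Ioc e1, setIntegral_congr_fun measurableSet_Ioi e2,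
      integral_zero, add_zero, integral_const_mul,
      ← intervalIntegral.integral_of_le zero_le_one]
    have := Complex.betaIntegral_eval_nat_add_one_right hs 2
    rw [Complex.betaIntegral] at this
    norm_num at this
    norm_num
    rw [this, kernM]
    simp only [Finset.prod_range_succ, Finset.range_zero, Finset.prod_empty, div_eq_mul_inv, mul_inv]
    push_cast
    ring

lemma norm_add_nat_ge {σ : ℝ} (h1 : 1 ≤ σ) (t : ℝ) {k : ℝ} (hk : 0 ≤ k) :
    (1 + |t|) / 2 ≤ ‖(σ + t * Complex.I : ℂ) + k‖ := by
  have h2 := Complex.abs_re_le_norm ((σ + t * Complex.I : ℂ) + k)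
  have h3 := Complex.abs_im_le_norm ((σ + t * Complex.I : ℂ) + k)
  simp at h2 h3
  rw [abs_of_nonneg (by linarith)] at h2
  linarith

lemma norm_kernM_le {σ : ℝ} (h1 : 1 ≤ σ) (t : ℝ) :
    ‖kernM (σ + t * Complex.I)‖ ≤ 8 * ((1 + |t|) ^ 3)⁻¹ := by
  have a0 := norm_add_nat_ge h1 t (le_refl 0)
  have a1 := norm_add_nat_ge h1 t (zero_le_one)
  have a2 := norm_add_nat_ge h1 t (zero_le_two)
  push_cast at a0 a1 a2
  rw [add_zero] at a0
  rw [kernM, norm_div, norm_one, norm_mul, norm_mul]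
  calc _ ≤ 1 / ((1 + |t|) / 2 * ((1 + |t|) / 2) * ((1 + |t|) / 2)) := by gcongr
    _ = _ := by field_simp; norm_num

lemma kernM_continuous {σ : ℝ} (h1 : 1 ≤ σ) :
    Continuous (fun t : ℝ => kernM (σ + t * Complex.I)) := by
  unfold kernM
  refine Continuous.div (by fun_prop) (by fun_prop) fun t => ?_
  have a0 := norm_add_nat_ge h1 t (le_refl 0)
  have a1 := norm_add_nat_ge h1 t (zero_le_one)
  have a2 := norm_add_nat_ge h1 t (zero_le_two)
  push_cast at a0 a1 a2
  rw [add_zero] at a0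
  have : 0 < (1 + |t|) / 2 := by positivity
  refine mul_ne_zero (mul_ne_zero ?_ ?_) ?_ <;> rw [← norm_pos_iff] <;> linarith

open MeasureTheory in
lemma kernM_integrable {σ : ℝ} (h1 : 1 ≤ σ) :
    Integrable (fun t : ℝ => kernM (σ + t * Complex.I)) := by
  refine Integrable.mono' (integrable_inv_one_add_sq.const_mul 8)
    (kernM_continuous h1).aestronglyMeasurable (Filter.Eventually.of_forall fun t => ?_)
  refine (norm_kernM_le h1 t).trans ?_
  gcongr
  nlinarith [abs_nonneg t, sq_abs t, pow_nonneg (abs_nonneg t) 3]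

/-- Mellin inversion for the cut-off. -/
lemma kern_inversion {σ : ℝ} (h1 : 1 ≤ σ) {x : ℝ} (hx : 0 < x) :
    (kern x : ℂ) = (1 / (2 * Real.pi)) • ∫ t : ℝ, (x : ℂ) ^ (-(σ + t * Complex.I : ℂ)) *
      kernM (σ + t * Complex.I) := by
  have hm : ∀ t : ℝ, mellin (fun x => (kern x : ℂ)) (σ + t * Complex.I) = kernM (σ + t * Complex.I) :=
    fun t => (kern_mellin (by simp; linarith)).2
  have := mellinInv_mellin_eq σ (fun x => (kern x : ℂ)) hx
    (kern_mellin (by simp; linarith)).1 (by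
      unfold Complex.VerticalIntegrable
      simp_rw [hm]
      exact kernM_integrable h1)
    (by have := kern_continuous; fun_prop)
  rw [← this, mellinInv]
  simp_rw [hm, smul_eq_mul]

open MeasureTheory Filter Topology in
/-- The Gaussian second moment `∫₀^∞ 2u² e^{-bu²} du = (√π/2) b^{-3/2}` for complex `b`. -/
lemma gaussian_moment {b : ℂ} (hb : 0 < b.re) :
    IntegrableOn (fun u : ℝ => (2 * u ^ 2 : ℂ) * Complex.exp (-b * u ^ 2)) (Set.Ioi 0) ∧
    ∫ u in Set.Ioi (0:ℝ), (2 * u ^ 2 : ℂ) * Complex.exp (-b * u ^ 2)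
      = (√Real.pi / 2 : ℝ) * b ^ (-(3/2) : ℂ) := by
  have hb0 : b ≠ 0 := fun h => by rw [h] at hb; simp at hb
  have hr : Integrable (fun u : ℝ => u ^ (2:ℝ) * Real.exp (-b.re * u ^ 2)) :=
    integrable_rpow_mul_exp_neg_mul_sq hb (by norm_num)
  have hnorm : ∀ u : ℝ, ‖Complex.exp (-b * u ^ 2)‖ = Real.exp (-b.re * u ^ 2) := by
    intro u
    rw [Complex.norm_exp]
    congr 1
    rw [← Complex.ofReal_pow, Complex.re_mul_ofReal, Complex.neg_re]
  have hI : Integrable (fun u : ℝ => (2 * u ^ 2 : ℂ) * Complex.exp (-b * u ^ 2)) := by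
    refine (hr.const_mul 2).mono' (by fun_prop) (Eventually.of_forall fun u => ?_)
    rw [norm_mul, hnorm, ← mul_assoc]
    refine mul_le_mul_of_nonneg_right ?_ (Real.exp_pos _).le
    rw [norm_mul, norm_pow, Complex.norm_real, Complex.norm_ofNat, Real.norm_eq_abs, sq_abs]
    norm_cast
  refine ⟨hI.integrableOn, ?_⟩
  have hE : Integrable (fun u : ℝ => Complex.exp (-b * u ^ 2)) := integrable_cexp_neg_mul_sq hb
  have hd : ∀ u ∈ Set.Ioi (0:ℝ), HasDerivAt (fun u : ℝ => (u : ℂ) * Complex.exp (-b * u ^ 2))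
      (Complex.exp (-b * u ^ 2) - b * ((2 * u ^ 2 : ℂ) * Complex.exp (-b * u ^ 2))) u := by
    intro u _
    have h1 : HasDerivAt (fun u : ℝ => (u : ℂ)) 1 u := Complex.ofRealCLM.hasDerivAt
    have h2 : HasDerivAt (fun u : ℝ => Complex.exp (-b * (u:ℂ) ^ 2))
        (Complex.exp (-b * (u:ℂ) ^ 2) * (-b * (2 * u))) u := by
      have := ((h1.pow 2).const_mul (-b)).cexp
      simpa using this
    refine (h1.mul h2).congr_deriv ?_
    ring
  have hlim : Tendsto (fun u : ℝ => (u : ℂ) * Complex.exp (-b * u ^ 2)) atTop (𝓝 0) := by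
    rw [tendsto_zero_iff_norm_tendsto_zero]
    have h1 : Tendsto (fun u : ℝ => Real.exp (-b.re * u ^ 2) * u) atTop (𝓝 0) := by
      have h2 := (Real.tendsto_pow_mul_exp_neg_atTop_nhds_zero 1).comp
        (tendsto_id.const_mul_atTop hb)
      have h3 := h2.const_mul (b.re)⁻¹
      rw [mul_zero] at h3
      refine squeeze_zero' ?_ ?_ h3
      · filter_upwards [eventually_ge_atTop 0] with u hu
        positivity
      · filter_upwards [eventually_ge_atTop 1] with u hu
        simp only [Function.comp, id, pow_one]
        rw [show (b.re)⁻¹ * (b.re * u * Real.exp (-(b.re * u))) = Real.exp (-(b.re * u)) * u by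
          field_simp]
        gcongr
        nlinarith [mul_nonneg hb.le (mul_nonneg (zero_le_one.trans hu) (sub_nonneg.2 hu))]
    refine h1.congr' ?_
    filter_upwards [eventually_ge_atTop 0] with u hu
    rw [norm_mul, hnorm, Complex.norm_real, Real.norm_of_nonneg hu, mul_comm]
  have hintg := integral_Ioi_of_hasDerivAt_of_tendsto (a := 0)
    (by fun_prop) hd (hE.sub (hI.const_mul b)).integrableOn hlim
  rw [integral_sub hE.integrableOn (hI.const_mul b).integrableOn, integral_const_mul,
    integral_gaussian_complex_Ioi hb] at hintg
  simp only [Complex.ofReal_zero, zero_mul, sub_zero] at hintg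
  have hJ : ∫ u in Set.Ioi (0:ℝ), (2 * u ^ 2 : ℂ) * Complex.exp (-b * u ^ 2)
      = (Real.pi / b) ^ (1/2 : ℂ) / 2 / b := by
    rw [eq_div_iff hb0, mul_comm]
    exact (sub_eq_zero.1 hintg).symm
  have hp : ((Real.pi : ℂ) / b) ^ (1/2 : ℂ) = (√Real.pi : ℝ) * b ^ (-(1/2) : ℂ) := by
    have harg : b.arg ≠ Real.pi := by
      intro h
      have := (Complex.arg_eq_pi_iff.1 h).1
      linarith
    have hmul : ((Real.pi : ℂ) * b⁻¹) ^ (1/2 : ℂ) = (Real.pi : ℂ) ^ (1/2 : ℂ) * b⁻¹ ^ (1/2 : ℂ) := by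
      have hpi : (Real.pi : ℂ) ≠ 0 := by exact_mod_cast Real.pi_ne_zero
      rw [Complex.cpow_def_of_ne_zero (mul_ne_zero hpi (inv_ne_zero hb0)),
        Complex.cpow_def_of_ne_zero hpi, Complex.cpow_def_of_ne_zero (inv_ne_zero hb0),
        Complex.log_ofReal_mul Real.pi_pos (inv_ne_zero hb0), ← Complex.exp_add,
        Complex.ofReal_log Real.pi_pos.le, add_mul]
    rw [div_eq_mul_inv, hmul, Complex.inv_cpow _ _ harg, Complex.cpow_neg]
    congr 1
    rw [Real.sqrt_eq_rpow, Complex.ofReal_cpow Real.pi_pos.le]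
    norm_num
  have hq : b ^ (-(3/2) : ℂ) = b ^ (-(1/2) : ℂ) / b := by
    rw [show (-(3/2) : ℂ) = -(1/2) - 1 by norm_num, Complex.cpow_sub _ _ hb0, Complex.cpow_one]
  rw [hJ, hp, hq]
  push_cast
  ring

/-! ### Perron formula for the smoothed sums -/

/-- The smoothed sum `∑ h(n) χ(n) log n φ(n/y)`. -/
noncomputable def TChi (χ : DirichletCharacter ℂ 8) (y : ℝ) : ℂ :=
  ∑' n : ℕ, LSeries.logMul (hChi χ) n * (kern (n / y) : ℂ)

/-- The model `∫_1^∞ √(log v) φ(v/y) dv` for `TChi`, written with `v = e^{u²}`, `dv = 2 u e^{u²} du`. -/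
noncomputable def Mmod (y : ℝ) : ℝ :=
  ∫ u in Set.Ioi (0:ℝ), 2 * u ^ 2 * Real.exp (u ^ 2) * kern (Real.exp (u ^ 2) / y)

lemma re_vert (σ t : ℝ) : (σ + t * Complex.I : ℂ).re = σ := by simp

lemma norm_cpow_vert {y : ℝ} (hy : 0 < y) (σ t : ℝ) :
    ‖(y : ℂ) ^ (σ + t * Complex.I : ℂ)‖ = y ^ σ := by
  rw [Complex.norm_cpow_eq_rpow_re_of_pos hy, re_vert]

lemma continuous_cpow_vert {y : ℝ} (hy : 0 < y) (σ : ℝ) :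
    Continuous (fun t : ℝ => (y : ℂ) ^ (σ + t * Complex.I : ℂ)) := by
  refine Continuous.const_cpow (by fun_prop) (Or.inl ?_)
  exact_mod_cast hy.ne'

lemma continuous_deriv_FChi (χ : DirichletCharacter ℂ 8) {σ : ℝ} (h1 : 1 < σ) :
    Continuous (fun t : ℝ => deriv (FChi χ) (σ + t * Complex.I)) := by
  have hop : IsOpen {z : ℂ | 1 < z.re} := isOpen_lt continuous_const Complex.continuous_re
  have hd : DifferentiableOn ℂ (FChi χ) {z : ℂ | 1 < z.re} := fun z hz =>
    (FChi_differentiableAt χ hz).differentiableWithinAt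
  have hc := (hd.deriv hop).continuousOn
  exact hc.comp_continuous (by fun_prop) (fun t => by simpa using h1)

open MeasureTheory in
/-- Perron's formula for the smoothed sum: `-F_χ'` is the Dirichlet series of `h(n) χ(n) log n`. -/
lemma TChi_eq (χ : DirichletCharacter ℂ 8) {y σ : ℝ} (hy : 0 < y) (h1 : 1 < σ) :
    TChi χ y = (1 / (2 * Real.pi)) • ∫ t : ℝ, (y : ℂ) ^ (σ + t * Complex.I : ℂ) *
      kernM (σ + t * Complex.I) * (-deriv (FChi χ) (σ + t * Complex.I)) := by
  set f := LSeries.logMul (hChi χ) with hf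
  have hf0 : f 0 = 0 := by simp [hf, LSeries.logMul]
  have hsum : LSeriesSummable f (σ : ℂ) :=
    LSeriesSummable_logMul_of_lt_re (hChi_abscissa χ (s := (σ : ℂ)) (by simpa using h1))
  set F : ℕ → ℝ → ℂ := fun n t => f n * (((n / y : ℝ) : ℂ) ^ (-(σ + t * Complex.I : ℂ)) *
    kernM (σ + t * Complex.I)) with hF
  have hFt : ∀ n t, F n t = LSeries.term f (σ + t * Complex.I) n *
      ((y : ℂ) ^ (σ + t * Complex.I : ℂ) * kernM (σ + t * Complex.I)) := by
    intro n t
    rcases eq_or_ne n 0 with rfl | hn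
    · simp [hF, hf0]
    · have hn0 : (0:ℝ) ≤ n := Nat.cast_nonneg n
      rw [hF, LSeries.term_of_ne_zero hn]
      simp only
      have : ((n / y : ℝ) : ℂ) ^ (-(σ + t * Complex.I : ℂ))
          = (y : ℂ) ^ (σ + t * Complex.I : ℂ) / (n : ℂ) ^ (σ + t * Complex.I : ℂ) := by
        have hy' : ((y : ℂ) ^ (σ + t * Complex.I : ℂ)) ≠ 0 := by
          rw [← norm_pos_iff, norm_cpow_vert hy]; positivity
        rw [Complex.ofReal_div, Complex.cpow_neg, Complex.div_cpow_ofReal_nonneg hn0 hy.le, inv_div]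
        simp
      rw [this]; ring
  have hterm : ∀ n (t : ℝ), ‖LSeries.term f (σ + t * Complex.I) n‖ = ‖LSeries.term f σ n‖ := by
    intro n t
    rw [LSeries.norm_term_eq, LSeries.norm_term_eq, re_vert, Complex.ofReal_re]
  have hnF : ∀ n t, ‖F n t‖ = ‖LSeries.term f σ n‖ * (y ^ σ * ‖kernM (σ + t * Complex.I)‖) := by
    intro n t
    rw [hFt, norm_mul, norm_mul, hterm, norm_cpow_vert hy]
  have hkc := kernM_continuous h1.le
  have hki := (kernM_integrable h1.le)
  have hFc : ∀ n, Continuous (F n) := by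
    intro n
    rcases eq_or_ne n 0 with rfl | hn
    · have : F 0 = fun _ => 0 := by funext t; simp [hF, hf0]
      rw [this]; exact continuous_const
    · rw [hF]
      refine continuous_const.mul (Continuous.mul ?_ hkc)
      refine Continuous.const_cpow (by fun_prop) (Or.inl ?_)
      have : (n : ℝ) / y ≠ 0 := by positivity
      exact_mod_cast this
  have hFi : ∀ n, Integrable (F n) := fun n =>
    (((hki.norm.const_mul (y ^ σ)).const_mul ‖LSeries.term f σ n‖)).mono' (hFc n).aestronglyMeasurable
      (Filter.Eventually.of_forall fun t => (hnF n t).le)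
  have hS : Summable fun n => ∫ t, ‖F n t‖ := by
    simp_rw [hnF, integral_const_mul]
    exact hsum.norm.mul_right _
  have key := hasSum_integral_of_summable_integral_norm hFi hS
  have e1 : ∀ t, ∑' n, F n t = (y : ℂ) ^ (σ + t * Complex.I : ℂ) *
      kernM (σ + t * Complex.I) * (-deriv (FChi χ) (σ + t * Complex.I)) := by
    intro t
    simp_rw [hFt]
    rw [tsum_mul_right]
    have : deriv (FChi χ) (σ + t * Complex.I) = -LSeries f (σ + t * Complex.I) :=
      LSeries_deriv (hChi_abscissa χ (by rw [re_vert]; exact h1))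
    rw [this, neg_neg, LSeries]; ring
  have e2 : ∀ n : ℕ, f n * (kern (n / y) : ℂ) = (1 / (2 * Real.pi)) • ∫ t, F n t := by
    intro n
    rcases eq_or_ne n 0 with rfl | hn
    · simp [hF, hf0]
    · have hpos : (0:ℝ) < n / y := by positivity
      rw [kern_inversion h1.le hpos, hF]
      simp only
      rw [integral_const_mul, mul_smul_comm]
  simp_rw [e1] at key
  have e3 : TChi χ y = ∑' n : ℕ, (1 / (2 * Real.pi)) • ∫ t, F n t := tsum_congr e2
  rw [e3]
  exact (key.const_smul _).tsum_eq

open MeasureTheory in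
/-- The same formula for the model, with `(s-1)^{-3/2}` in place of `F_χ'`. -/
lemma Mmod_eq {y σ : ℝ} (hy : 0 < y) (h1 : 1 < σ) :
    (Mmod y : ℂ) = (1 / (2 * Real.pi)) • ∫ t : ℝ, (y : ℂ) ^ (σ + t * Complex.I : ℂ) *
      kernM (σ + t * Complex.I) *
        ((√Real.pi / 2 : ℝ) * ((σ + t * Complex.I : ℂ) - 1) ^ (-(3/2) : ℂ)) := by
  set g : ℝ → ℝ → ℂ := fun u t => (2 * u ^ 2 : ℂ) * Complex.exp (-((σ + t * Complex.I : ℂ) - 1) * u ^ 2) *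
    ((y : ℂ) ^ (σ + t * Complex.I : ℂ) * kernM (σ + t * Complex.I)) with hg
  have hkc := kernM_continuous h1.le
  have hki := (kernM_integrable h1.le)
  have hp : 0 < σ - 1 := by linarith
  have hre : ∀ t : ℝ, 0 < ((σ + t * Complex.I : ℂ) - 1).re := fun t => by simpa using h1
  have hgm := (gaussian_moment (b := ((σ - 1 : ℝ) : ℂ)) (by simpa using h1)).1
  have hintg : Integrable (Function.uncurry g) ((volume.restrict (Set.Ioi 0)).prod volume) := by
    refine (Integrable.mul_prod hgm.norm (hki.norm.const_mul (y ^ σ))).mono' ?_ ?_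
    · refine Continuous.aestronglyMeasurable ?_
      have c1 := (continuous_cpow_vert hy σ).comp (continuous_snd (X := ℝ) (Y := ℝ))
      have c2 := hkc.comp (continuous_snd (X := ℝ) (Y := ℝ))
      have c3 : Continuous (fun z : ℝ × ℝ => (2 * (z.1 : ℂ) ^ 2 : ℂ) *
        Complex.exp (-((σ + (z.2 : ℂ) * Complex.I : ℂ) - 1) * (z.1 : ℂ) ^ 2)) := by fun_prop
      exact c3.mul (c1.mul c2)
    · refine Filter.Eventually.of_forall fun z => le_of_eq ?_
      obtain ⟨u, t⟩ := z
      simp only [Function.uncurry, hg]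
      rw [norm_mul, norm_mul ((y : ℂ) ^ _), norm_cpow_vert hy]
      congr 1
      rw [norm_mul, norm_mul _ (Complex.exp (-((σ - 1 : ℝ) : ℂ) * _)), Complex.norm_exp, Complex.norm_exp]
      congr 2
      rw [← Complex.ofReal_pow, Complex.re_mul_ofReal, Complex.re_mul_ofReal]
      simp
  have hswap := integral_integral_swap hintg
  have e1 : ∀ t : ℝ, ∫ u in Set.Ioi 0, g u t = (y : ℂ) ^ (σ + t * Complex.I : ℂ) *
      kernM (σ + t * Complex.I) *
        ((√Real.pi / 2 : ℝ) * ((σ + t * Complex.I : ℂ) - 1) ^ (-(3/2) : ℂ)) := by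
    intro t
    rw [hg]
    simp only
    rw [integral_mul_const, (gaussian_moment (hre t)).2]; ring
  have e2 : ∀ u ∈ Set.Ioi (0:ℝ), (1 / (2 * Real.pi)) • ∫ t, g u t =
      ((2 * u ^ 2 * Real.exp (u ^ 2) * kern (Real.exp (u ^ 2) / y) : ℝ) : ℂ) := by
    intro u _
    have hpos : 0 < Real.exp (u ^ 2) / y := by positivity
    rw [Complex.ofReal_mul, kern_inversion h1.le hpos, mul_smul_comm, ← integral_const_mul]
    congr 2
    funext t
    rw [hg]
    simp only
    have : ((Real.exp (u ^ 2) / y : ℝ) : ℂ) ^ (-(σ + t * Complex.I : ℂ))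
        = (y : ℂ) ^ (σ + t * Complex.I : ℂ) * Complex.exp (-(σ + t * Complex.I : ℂ) * u ^ 2) := by
      rw [Complex.ofReal_div, Complex.cpow_neg, Complex.div_cpow_ofReal_nonneg (Real.exp_pos _).le hy.le, inv_div,
        div_eq_mul_inv, ← Complex.cpow_neg, Complex.cpow_def_of_ne_zero (x := (Real.exp (u ^ 2) : ℂ))
          (by exact_mod_cast (Real.exp_pos _).ne'), ← Complex.ofReal_log (Real.exp_pos _).le, Real.log_exp]
      push_cast
      ring_nf
    rw [this]
    have h3 : Complex.exp (-((σ + t * Complex.I : ℂ) - 1) * u ^ 2) =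
        Complex.exp (u ^ 2) * Complex.exp (-(σ + t * Complex.I : ℂ) * u ^ 2) := by
      rw [← Complex.exp_add]; congr 1; ring
    rw [h3]
    push_cast
    ring
  rw [Mmod, ← integral_complex_ofReal, setIntegral_congr_fun measurableSet_Ioi (fun u hu => (e2 u hu).symm),
    integral_smul, hswap]
  simp_rw [e1]

open MeasureTheory in
/-- The smoothed sum equals its model up to `O(y (log y)^{3/8})`. -/
lemma TChi_bound : ∃ K : ℝ, 0 ≤ K ∧ ∀ (χ : DirichletCharacter ℂ 8) (y : ℝ), Real.exp 584 ≤ y →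
    ‖TChi χ y - (kap χ * √2 / √Real.pi * Mmod y : ℝ)‖ ≤ K * (y * Real.log y ^ (3/8 : ℝ)) := by
  set W := ∫ t : ℝ, |t| ^ (-(1/2) : ℝ) * (1 + |t|)⁻¹ with hW
  have hW0 : 0 ≤ W := integral_nonneg fun t => by positivity
  refine ⟨8 * 10 ^ 9 * Real.exp 1 * W, by positivity, fun χ y hy => ?_⟩
  have hy0 : 0 < y := (Real.exp_pos _).trans_le hy
  have hl : 584 ≤ Real.log y := (Real.le_log_iff_exp_le hy0).2 hy
  have hl0 : 0 < Real.log y := by linarith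
  set σ : ℝ := 1 + 1 / Real.log y with hσ
  have h1 : 1 < σ := by have : 0 < 1 / Real.log y := by positivity
                        linarith
  have h2 : σ ≤ 1 + 1 / 584 := by rw [hσ]; gcongr
  have hyσ : y ^ σ = y * Real.exp 1 := by
    rw [hσ, Real.rpow_add hy0, Real.rpow_one, Real.rpow_def_of_pos hy0]
    congr 2; field_simp
  have hσ1 : (σ - 1) ^ (-(3/8) : ℝ) = Real.log y ^ (3/8 : ℝ) := by
    rw [hσ, add_sub_cancel_left, one_div, Real.inv_rpow hl0.le, Real.rpow_neg hl0.le, inv_inv]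
  set c : ℝ := kap χ * √2 / √Real.pi with hc
  have hpi : 0 < √Real.pi := Real.sqrt_pos.2 Real.pi_pos
  have hcc : c * (√Real.pi / 2) = kap χ / √2 := by
    rw [hc]; field_simp; rw [Real.sq_sqrt (by norm_num)]
  set f1 : ℝ → ℂ := fun t => (y : ℂ) ^ (σ + t * Complex.I : ℂ) *
      kernM (σ + t * Complex.I) * (-deriv (FChi χ) (σ + t * Complex.I)) with hf1
  set f2 : ℝ → ℂ := fun t => (y : ℂ) ^ (σ + t * Complex.I : ℂ) *
      kernM (σ + t * Complex.I) *
        ((√Real.pi / 2 : ℝ) * ((σ + t * Complex.I : ℂ) - 1) ^ (-(3/2) : ℂ)) with hf2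
  have hkc := kernM_continuous h1.le
  have hki := (kernM_integrable h1.le)
  have hyc := continuous_cpow_vert hy0 σ
  have hp : 0 < σ - 1 := by linarith
  have i1 : Integrable f1 := by
    set f := LSeries.logMul (hChi χ) with hf
    have hsum : LSeriesSummable f (σ : ℂ) :=
      LSeriesSummable_logMul_of_lt_re (hChi_abscissa χ (s := (σ : ℂ)) (by simpa using h1))
    refine (hki.norm.const_mul (y ^ σ * ∑' n, ‖LSeries.term f σ n‖)).mono'
      ((hyc.mul hkc).mul (continuous_deriv_FChi χ h1).neg).aestronglyMeasurable
      (Filter.Eventually.of_forall fun t => ?_)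
    have hterm : ∀ n, ‖LSeries.term f (σ + t * Complex.I) n‖ = ‖LSeries.term f σ n‖ := by
      intro n
      rw [LSeries.norm_term_eq, LSeries.norm_term_eq, re_vert, Complex.ofReal_re]
    have hd : deriv (FChi χ) (σ + t * Complex.I) = -LSeries f (σ + t * Complex.I) :=
      LSeries_deriv (hChi_abscissa χ (by rw [re_vert]; exact h1))
    have hb : ‖LSeries f (σ + t * Complex.I)‖ ≤ ∑' n, ‖LSeries.term f σ n‖ := by
      simp_rw [← hterm]
      refine norm_tsum_le_tsum_norm ?_
      simp_rw [hterm]; exact hsum.norm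
    rw [hf1]
    simp only
    rw [hd, neg_neg, norm_mul, norm_mul, norm_cpow_vert hy0]
    calc _ ≤ y ^ σ * ‖kernM (σ + t * Complex.I)‖ * ∑' n, ‖LSeries.term f σ n‖ := by gcongr
      _ = _ := by ring
  have i2 : Integrable f2 := by
    refine (hki.norm.const_mul (y ^ σ * ((√Real.pi / 2) * (σ - 1) ^ (-(3/2) : ℝ)))).mono' ?_
      (Filter.Eventually.of_forall fun t => ?_)
    · refine Continuous.aestronglyMeasurable ((hyc.mul hkc).mul (continuous_const.mul ?_))
      refine Continuous.cpow (by fun_prop) continuous_const fun t => Or.inl ?_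
      simpa using h1
    · rw [hf2]
      simp only
      have e : (-(3/2) : ℂ) = ((-(3/2) : ℝ) : ℂ) := by push_cast; rfl
      rw [norm_mul, norm_mul, norm_cpow_vert hy0, norm_mul, Complex.norm_real, e, Complex.norm_cpow_real,
        Real.norm_of_nonneg (by positivity)]
      have h3 : σ - 1 ≤ ‖(σ + t * Complex.I : ℂ) - 1‖ := by
        have := Complex.re_le_norm ((σ + t * Complex.I : ℂ) - 1)
        simpa using this
      have h4 : ‖(σ + t * Complex.I : ℂ) - 1‖ ^ (-(3/2) : ℝ) ≤ (σ - 1) ^ (-(3/2) : ℝ) :=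
        Real.rpow_le_rpow_of_nonpos hp h3 (by norm_num)
      calc _ ≤ y ^ σ * ‖kernM (σ + t * Complex.I)‖ * ((√Real.pi / 2) * (σ - 1) ^ (-(3/2) : ℝ)) := by gcongr
        _ = _ := by ring
  have hmain : TChi χ y - (c * Mmod y : ℝ) = (1 / (2 * Real.pi)) • ∫ t, (f1 t - (c : ℂ) * f2 t) := by
    rw [TChi_eq χ hy0 h1, Complex.ofReal_mul, Mmod_eq hy0 h1, integral_sub i1 (i2.const_mul _),
      integral_const_mul, smul_sub, mul_smul_comm]
  rw [hmain, norm_smul]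
  have hpt : ∀ t : ℝ, t ≠ 0 → ‖f1 t - (c : ℂ) * f2 t‖ ≤
      8 * 10 ^ 9 * (y * Real.exp 1) * Real.log y ^ (3/8 : ℝ) * (|t| ^ (-(1/2) : ℝ) * (1 + |t|)⁻¹) := by
    intro t ht
    have e : f1 t - (c : ℂ) * f2 t = -((y : ℂ) ^ (σ + t * Complex.I : ℂ) *
      kernM (σ + t * Complex.I) * DChi χ (σ + t * Complex.I)) := by
      rw [hf1, hf2, DChi, ← hcc]
      push_cast
      ring
    rw [e, norm_neg, norm_mul, norm_mul, norm_cpow_vert hy0]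
    have hD := norm_DChi_le χ h1 h2 ht
    have hk := norm_kernM_le h1.le t
    calc _ ≤ y ^ σ * (8 * ((1 + |t|) ^ 3)⁻¹) *
          (10 ^ 9 * (σ - 1) ^ (-(3/8) : ℝ) * |t| ^ (-(1/2) : ℝ) * (1 + |t|) ^ 2) := by gcongr
      _ = _ := by
        rw [hyσ, hσ1]
        have : (0:ℝ) < 1 + |t| := by positivity
        field_simp
  have hle : ‖∫ t, (f1 t - (c : ℂ) * f2 t)‖ ≤
      8 * 10 ^ 9 * (y * Real.exp 1) * Real.log y ^ (3/8 : ℝ) * W := by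
    rw [hW, ← integral_const_mul]
    refine norm_integral_le_of_norm_le (integrable_weight.const_mul _) ?_
    have : ∀ᵐ t : ℝ, t ≠ 0 := by simp [ae_iff]
    filter_upwards [this] with t ht using hpt t ht
  have hpi1 : ‖(1 / (2 * Real.pi) : ℝ)‖ ≤ 1 := by
    rw [Real.norm_of_nonneg (by positivity), div_le_one (by positivity)]
    linarith [Real.pi_gt_three]
  calc _ ≤ 1 * (8 * 10 ^ 9 * (y * Real.exp 1) * Real.log y ^ (3/8 : ℝ) * W) := by gcongr
    _ = _ := by ring

/-! ### Residue classes modulo 8 and second differences -/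

open scoped Classical in
/-- `h(n) log n` on the progression `n ≡ q (mod 8)`. -/
noncomputable def aQ (q : (ZMod 8)ˣ) (n : ℕ) : ℝ :=
  if (n : ZMod 8) = q then hHalf n * Real.log n else 0

lemma aQ_nonneg (q : (ZMod 8)ˣ) (n : ℕ) : 0 ≤ aQ q n := by
  unfold aQ
  split_ifs
  · exact mul_nonneg (hHalf_nonneg n) (Real.log_natCast_nonneg n)
  · exact le_rfl

lemma TChi_eq_sum (χ : DirichletCharacter ℂ 8) {y : ℝ} (hy : 0 < y) {N : ℕ} (hN : y ≤ N) :
    TChi χ y = ∑ n ∈ range N, LSeries.logMul (hChi χ) n * (kern (n / y) : ℂ) := by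
  refine tsum_eq_sum fun n hn => ?_
  have : N ≤ n := by simpa using hn
  have h1 : 1 ≤ (n : ℝ) / y := by
    rw [le_div_iff₀ hy, one_mul]
    exact hN.trans (by exact_mod_cast this)
  simp [kern_of_ge h1]

/-- The constant `c₀ = √2/(8√π)` of the main term `c₀ y / √(log y)` for the sum of `hHalf` over `n ≤ y` in
one reduced residue class modulo `8`. -/
noncomputable def c0 : ℝ := √2 / (8 * √Real.pi)

lemma c0_pos : 0 < c0 := by
  have := Real.sqrt_pos.2 Real.pi_pos
  unfold c0; positivity

/-- Orthogonality of characters turns the estimates for `TChi` into one for a residue class modulo `8`. -/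
lemma TQ_bound : ∃ K : ℝ, 0 ≤ K ∧ ∀ (q : (ZMod 8)ˣ) (y : ℝ) (N : ℕ), Real.exp 584 ≤ y → y ≤ N →
    |∑ n ∈ range N, aQ q n * kern (n / y) - c0 * Mmod y| ≤ K * (y * Real.log y ^ (3/8 : ℝ)) := by
  obtain ⟨K, hK, hT⟩ := TChi_bound
  set m : ℝ := (Fintype.card (DirichletCharacter ℂ 8) : ℝ) with hm
  refine ⟨m * K, by positivity, fun q y N hy hN => ?_⟩
  have hy0 : 0 < y := (Real.exp_pos _).trans_le hy
  set Q : ZMod 8 := (q : ZMod 8)⁻¹ with hQ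
  have hsum : ((∑ n ∈ range N, aQ q n * kern (n / y) : ℝ) : ℂ)
      = (1/4 : ℂ) * ∑ χ : DirichletCharacter ℂ 8, χ Q * TChi χ y := by
    have h1 : ∀ χ : DirichletCharacter ℂ 8, χ Q * TChi χ y
        = ∑ n ∈ range N, (χ Q * χ n) * ((hHalf n * Real.log n * kern (n / y) : ℝ) : ℂ) := by
      intro χ
      rw [TChi_eq_sum χ hy0 hN, Finset.mul_sum]
      refine Finset.sum_congr rfl fun n _ => ?_
      simp only [LSeries.logMul, hChi]
      push_cast
      ring
    simp_rw [h1]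
    rw [Finset.sum_comm, Finset.mul_sum, Complex.ofReal_sum]
    refine Finset.sum_congr rfl fun n _ => ?_
    rw [← Finset.sum_mul, DirichletCharacter.sum_char_inv_mul_char_eq ℂ q.isUnit, aQ]
    by_cases h : (q : ZMod 8) = n
    · rw [if_pos h, if_pos h.symm]
      have : Nat.totient 8 = 4 := by decide
      rw [this]; push_cast; ring
    · rw [if_neg h, if_neg (Ne.symm h)]; simp
  have hmod : ((c0 * Mmod y : ℝ) : ℂ) = (1/4 : ℂ) * ∑ χ : DirichletCharacter ℂ 8,
      χ Q * (kap χ * √2 / √Real.pi * Mmod y : ℝ) := by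
    rw [Finset.sum_eq_single (1 : DirichletCharacter ℂ 8)]
    · have hu : IsUnit Q := by rw [hQ]; exact ⟨q⁻¹, by simp⟩
      rw [MulChar.one_apply hu, kap, if_pos rfl, c0]
      push_cast; ring
    · intro χ _ hχ
      rw [kap, if_neg hχ]; simp
    · simp
  rw [← Real.norm_eq_abs, ← Complex.norm_real, Complex.ofReal_sub, hsum, hmod, ← mul_sub,
    ← Finset.sum_sub_distrib, norm_mul]
  have h4 : ‖(1/4 : ℂ)‖ ≤ 1 := by norm_num
  calc _ ≤ 1 * ∑ χ : DirichletCharacter ℂ 8, K * (y * Real.log y ^ (3/8 : ℝ)) := by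
        gcongr
        refine (norm_sum_le _ _).trans (Finset.sum_le_sum fun χ _ => ?_)
        rw [← mul_sub, norm_mul]
        calc _ ≤ 1 * (K * (y * Real.log y ^ (3/8 : ℝ))) := by
              gcongr
              · exact DirichletCharacter.norm_le_one χ _
              · exact hT χ y hy
          _ = _ := one_mul _
    _ = _ := by rw [Finset.sum_const, Finset.card_univ, nsmul_eq_mul, one_mul, hm]; ring

/-- `k(y,x) = (y-x)₊²/2`. -/
noncomputable def kk (y x : ℝ) : ℝ := (max (y - x) 0) ^ 2 / 2

lemma kk_eq {y : ℝ} (hy : 0 < y) (x : ℝ) : kk y x = y ^ 2 * kern (x / y) := by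
  unfold kk kern
  have : max (y - x) 0 = y * max (1 - x / y) 0 := by
    rw [mul_max_of_nonneg _ _ hy.le, mul_zero]; congr 1; field_simp
  rw [this]; ring

/-- The second difference of `kk` in its first variable: it is `h²` for `x ≤ y`, vanishes for
`x ≥ y + 2h`, and lies between `0` and `h²` throughout. -/
noncomputable def dk (y h x : ℝ) : ℝ := kk (y + 2 * h) x - 2 * kk (y + h) x + kk y x

lemma dk_nonneg_le {y h : ℝ} (hh : 0 < h) (x : ℝ) : 0 ≤ dk y h x ∧ dk y h x ≤ h ^ 2 := by
  unfold dk kk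
  rcases le_total x y with h1 | h1
  · rw [max_eq_left (by linarith), max_eq_left (by linarith), max_eq_left (by linarith)]
    constructor <;> nlinarith
  · rw [max_eq_right (by linarith : y - x ≤ 0)]
    rcases le_total x (y + h) with h2 | h2
    · rw [max_eq_left (by linarith), max_eq_left (by linarith)]
      constructor
      · nlinarith [mul_nonneg (sub_nonneg.2 h2) (sub_nonneg.2 h1), sq_nonneg (y + h - x)]
      · nlinarith [sq_nonneg (y - x)]
    · rw [max_eq_right (by linarith : y + h - x ≤ 0)]
      rcases le_total x (y + 2 * h) with h3 | h3
      · rw [max_eq_left (by linarith)]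
        constructor <;> nlinarith
      · rw [max_eq_right (by linarith)]
        constructor <;> nlinarith

lemma dk_of_le {y h x : ℝ} (hh : 0 < h) (hx : x ≤ y) : dk y h x = h ^ 2 := by
  unfold dk kk
  rw [max_eq_left (by linarith), max_eq_left (by linarith), max_eq_left (by linarith)]
  ring

lemma dk_of_ge {y h x : ℝ} (hh : 0 < h) (hx : y + 2 * h ≤ x) : dk y h x = 0 := by
  unfold dk kk
  rw [max_eq_right (by linarith), max_eq_right (by linarith), max_eq_right (by linarith)]
  ring

lemma kk_continuous (y : ℝ) : Continuous (kk y) := by unfold kk; fun_prop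

open MeasureTheory in
lemma Mmod_eq_interval {z U : ℝ} (hz : 0 < z) (hU : 0 ≤ U) (h : z ≤ Real.exp (U ^ 2)) :
    z ^ 2 * Mmod z = ∫ u in (0:ℝ)..U, 2 * u ^ 2 * Real.exp (u ^ 2) * kk z (Real.exp (u ^ 2)) := by
  have e0 : z ^ 2 * Mmod z = ∫ u in Set.Ioi (0:ℝ), 2 * u ^ 2 * Real.exp (u ^ 2) * kk z (Real.exp (u ^ 2)) := by
    rw [Mmod, ← integral_const_mul]
    congr 1; funext u
    rw [kk_eq hz]; ring
  rw [e0, intervalIntegral.integral_of_le hU]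
  refine setIntegral_eq_of_subset_of_forall_sdiff_eq_zero measurableSet_Ioi Set.Ioc_subset_Ioi_self ?_
  intro u hu
  have h1 : U < u := by
    by_contra hc
    exact hu.2 ⟨hu.1, not_lt.1 hc⟩
  have h2 : Real.exp (U ^ 2) ≤ Real.exp (u ^ 2) := Real.exp_le_exp.2 (by gcongr)
  have : kk z (Real.exp (u ^ 2)) = 0 := by
    rw [kk, max_eq_right (by linarith)]; simp
  rw [this, mul_zero]

/-- Second difference of the model. -/
noncomputable def dM (z h : ℝ) : ℝ :=
  (z + 2 * h) ^ 2 * Mmod (z + 2 * h) - 2 * ((z + h) ^ 2 * Mmod (z + h)) + z ^ 2 * Mmod z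

lemma dM_eq {z h U : ℝ} (hz : 0 < z) (hh : 0 < h) (hU : 0 ≤ U) (hU2 : z + 2 * h ≤ Real.exp (U ^ 2)) :
    dM z h = ∫ u in (0:ℝ)..U, 2 * u ^ 2 * Real.exp (u ^ 2) * dk z h (Real.exp (u ^ 2)) := by
  have hc : ∀ w : ℝ, IntervalIntegrable
      (fun u => 2 * u ^ 2 * Real.exp (u ^ 2) * kk w (Real.exp (u ^ 2))) MeasureTheory.volume 0 U := by
    intro w
    refine Continuous.intervalIntegrable ?_ _ _
    have := kk_continuous w
    fun_prop
  rw [dM, Mmod_eq_interval (by linarith) hU hU2, Mmod_eq_interval (by linarith) hU (by linarith),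
    Mmod_eq_interval hz hU (by linarith), ← intervalIntegral.integral_const_mul,
    ← intervalIntegral.integral_sub (hc _) ((hc _).const_mul 2),
    ← intervalIntegral.integral_add ((hc _).sub ((hc _).const_mul 2)) (hc _)]
  congr 1; funext u
  rw [dk]; ring

lemma integral_two_mul_exp_sq (a b : ℝ) :
    ∫ u in a..b, 2 * u * Real.exp (u ^ 2) = Real.exp (b ^ 2) - Real.exp (a ^ 2) := by
  refine intervalIntegral.integral_eq_sub_of_hasDerivAt (f := fun u => Real.exp (u ^ 2)) ?_
    (Continuous.intervalIntegrable (by fun_prop) _ _)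
  intro u _
  have := (hasDerivAt_pow 2 u).exp
  refine this.congr_deriv ?_
  simp; ring

lemma dM_le {z h U : ℝ} (hz : 0 < z) (hh : 0 < h) (hU : 0 ≤ U) (hU2 : z + 2 * h = Real.exp (U ^ 2)) :
    dM z h ≤ h ^ 2 * (U * (z + 2 * h)) := by
  rw [dM_eq hz hh hU hU2.le]
  have hc : Continuous (fun u : ℝ => dk z h (Real.exp (u ^ 2))) := by
    unfold dk
    have a1 := kk_continuous z
    have a2 := kk_continuous (z + h)
    have a3 := kk_continuous (z + 2 * h)
    fun_prop
  calc _ ≤ ∫ u in (0:ℝ)..U, (h ^ 2 * U) * (2 * u * Real.exp (u ^ 2)) := by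
        refine intervalIntegral.integral_mono_on hU (Continuous.intervalIntegrable (by fun_prop) _ _)
          (Continuous.intervalIntegrable (by fun_prop) _ _) ?_
        intro u hu
        have h1 := (dk_nonneg_le hh (y := z) (Real.exp (u ^ 2)))
        have h0 : 0 ≤ u := hu.1
        calc _ ≤ 2 * u ^ 2 * Real.exp (u ^ 2) * h ^ 2 := by
              gcongr; exact h1.2
          _ = 2 * u * Real.exp (u ^ 2) * h ^ 2 * u := by ring
          _ ≤ 2 * u * Real.exp (u ^ 2) * h ^ 2 * U := by gcongr; exact hu.2
          _ = _ := by ring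
    _ = h ^ 2 * U * (z + 2 * h - 1) := by
        rw [intervalIntegral.integral_const_mul, integral_two_mul_exp_sq, hU2]; simp
    _ ≤ _ := by
        have : 0 ≤ h ^ 2 * U := by positivity
        nlinarith

lemma le_dM {z h U U₁ : ℝ} (hz : 0 < z) (hh : 0 < h) (hU1 : 0 ≤ U₁) (hUU : U₁ ≤ U)
    (hU2 : z = Real.exp (U ^ 2)) :
    h ^ 2 * (U₁ * (z - Real.exp (U₁ ^ 2))) ≤ dM z h := by
  have hU : 0 ≤ U := hU1.trans hUU
  set V := U + z + 2 * h with hV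
  have hUV : U ≤ V := by linarith
  have hV2 : z + 2 * h ≤ Real.exp (V ^ 2) := by
    have hz1 : 1 ≤ z := by rw [hU2]; exact Real.one_le_exp (by positivity)
    have := Real.add_one_le_exp (V ^ 2)
    nlinarith
  rw [dM_eq hz hh (hU.trans hUV) hV2]
  have hc : Continuous (fun u : ℝ => dk z h (Real.exp (u ^ 2))) := by
    unfold dk
    have a1 := kk_continuous z
    have a2 := kk_continuous (z + h)
    have a3 := kk_continuous (z + 2 * h)
    fun_prop
  calc h ^ 2 * (U₁ * (z - Real.exp (U₁ ^ 2))) = ∫ u in U₁..U, (h ^ 2 * U₁) * (2 * u * Real.exp (u ^ 2)) := by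
        rw [intervalIntegral.integral_const_mul, integral_two_mul_exp_sq, hU2]; ring
    _ ≤ ∫ u in U₁..U, 2 * u ^ 2 * Real.exp (u ^ 2) * dk z h (Real.exp (u ^ 2)) := by
        refine intervalIntegral.integral_mono_on hUU (Continuous.intervalIntegrable (by fun_prop) _ _)
          (Continuous.intervalIntegrable (by fun_prop) _ _) ?_
        intro u hu
        have h0 : 0 ≤ u := hU1.trans hu.1
        rw [dk_of_le hh (by rw [hU2]; exact Real.exp_le_exp.2 (by gcongr; exact hu.2))]
        calc _ = 2 * u * Real.exp (u ^ 2) * h ^ 2 * U₁ := by ring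
          _ ≤ 2 * u * Real.exp (u ^ 2) * h ^ 2 * u := by gcongr; exact hu.1
          _ = _ := by ring
    _ ≤ _ := by
        refine intervalIntegral.integral_mono_interval hU1 hUU hUV ?_
          (Continuous.intervalIntegrable (by fun_prop) _ _)
        refine Filter.Eventually.of_forall fun u => ?_
        have h1 := (dk_nonneg_le hh (y := z) (Real.exp (u ^ 2))).1
        simp only [Pi.zero_apply]
        positivity

/-! ### Removal of the smoothing -/

/-- The second difference `dk z h` is a majorant or minorant (according to the choice of `z`) of `h²` times the
indicator of an initial segment; this compares the sums of `aQ` against it with the model. -/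
lemma dT_bound : ∃ K : ℝ, 0 ≤ K ∧ ∀ (q : (ZMod 8)ˣ) (z h : ℝ) (N : ℕ), Real.exp 584 ≤ z → 0 < h → h ≤ z →
    z + 2 * h ≤ N →
    |∑ n ∈ range N, aQ q n * dk z h n - c0 * dM z h| ≤ K * (z ^ 3 * Real.log z ^ (3/8 : ℝ)) := by
  obtain ⟨K, hK, hT⟩ := TQ_bound
  refine ⟨216 * K, by positivity, fun q z h N hz hh hhz hN => ?_⟩
  have hz0 : 0 < z := (Real.exp_pos _).trans_le hz
  have hl : 584 ≤ Real.log z := (Real.le_log_iff_exp_le hz0).2 hz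
  have key : ∀ w : ℝ, z ≤ w → w ≤ 3 * z → w ≤ N →
      |∑ n ∈ range N, aQ q n * kk w n - c0 * (w ^ 2 * Mmod w)| ≤ 54 * K * (z ^ 3 * Real.log z ^ (3/8 : ℝ)) := by
    intro w h1 h2 h3
    have hw0 : 0 < w := by linarith
    have h4 := hT q w N (by linarith) h3
    have e : ∑ n ∈ range N, aQ q n * kk w n - c0 * (w ^ 2 * Mmod w)
        = w ^ 2 * (∑ n ∈ range N, aQ q n * kern (n / w) - c0 * Mmod w) := by
      rw [mul_sub, Finset.mul_sum]
      congr 1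
      · refine Finset.sum_congr rfl fun n _ => ?_
        rw [kk_eq hw0]; ring
      · ring
    rw [e, abs_mul, abs_of_nonneg (by positivity : 0 ≤ w ^ 2)]
    have h5 : Real.log w ≤ 2 * Real.log z := by
      have : Real.log w ≤ Real.log (3 * z) := Real.log_le_log hw0 h2
      rw [Real.log_mul (by norm_num) hz0.ne'] at this
      have h6 : Real.log 3 ≤ 2 := by
        have := Real.log_le_sub_one_of_pos (show (0:ℝ) < 3 by norm_num); linarith
      linarith
    have hlw : 0 ≤ Real.log w := Real.log_nonneg (by
      have : (1:ℝ) ≤ Real.exp 584 := Real.one_le_exp (by norm_num)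
      linarith)
    have h7 : Real.log w ^ (3/8 : ℝ) ≤ 2 * Real.log z ^ (3/8 : ℝ) := by
      calc Real.log w ^ (3/8 : ℝ) ≤ (2 * Real.log z) ^ (3/8 : ℝ) :=
            Real.rpow_le_rpow hlw h5 (by norm_num)
        _ = 2 ^ (3/8 : ℝ) * Real.log z ^ (3/8 : ℝ) := Real.mul_rpow (by norm_num) (by linarith)
        _ ≤ 2 ^ (1:ℝ) * Real.log z ^ (3/8 : ℝ) := by
          gcongr
          · norm_num
          · norm_num
        _ = _ := by simp
    calc _ ≤ (3 * z) ^ 2 * (K * ((3 * z) * (2 * Real.log z ^ (3/8 : ℝ)))) := by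
          refine mul_le_mul ?_ (h4.trans ?_) (abs_nonneg _) (by positivity)
          · gcongr
          · gcongr
      _ = _ := by ring
  have e : ∑ n ∈ range N, aQ q n * dk z h n - c0 * dM z h =
      (∑ n ∈ range N, aQ q n * kk (z + 2 * h) n - c0 * ((z + 2 * h) ^ 2 * Mmod (z + 2 * h)))
      - 2 * (∑ n ∈ range N, aQ q n * kk (z + h) n - c0 * ((z + h) ^ 2 * Mmod (z + h)))
      + (∑ n ∈ range N, aQ q n * kk z n - c0 * (z ^ 2 * Mmod z)) := by
    have : ∑ n ∈ range N, aQ q n * dk z h n = ∑ n ∈ range N, aQ q n * kk (z + 2 * h) n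
      - 2 * ∑ n ∈ range N, aQ q n * kk (z + h) n + ∑ n ∈ range N, aQ q n * kk z n := by
      rw [Finset.mul_sum, ← Finset.sum_sub_distrib, ← Finset.sum_add_distrib]
      refine Finset.sum_congr rfl fun n _ => ?_
      rw [dk]; ring
    rw [this, dM]; ring
  rw [e]
  have k1 := abs_le.1 (key (z + 2 * h) (by linarith) (by linarith) hN)
  have k2 := abs_le.1 (key (z + h) (by linarith) (by linarith) (by linarith))
  have k3 := abs_le.1 (key z le_rfl (by linarith) (by linarith))
  rw [abs_le]
  constructor <;> linarith [k1.1, k1.2, k2.1, k2.2, k3.1, k3.2]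

set_option maxHeartbeats 2000000 in
/-- `∑_{n ≤ y, n ≡ q (8)} h(n) log n = c₀ y √(log y) + O(y (log y)^{11/24})`. The smoothing is removed
by second differences with step `h = η y`, `η = (log y)^{-1/24}`, which balances `(log y)^{3/8} η^{-2}` and
`η √(log y)`. -/
lemma SQ_asymp : ∃ K : ℝ, 0 ≤ K ∧ ∀ (q : (ZMod 8)ˣ) (y : ℝ), Real.exp (4 ^ 24) ≤ y →
    |∑ n ∈ Icc 1 ⌊y⌋₊, aQ q n - c0 * (y * √(Real.log y))| ≤ K * (y * Real.log y ^ (11/24 : ℝ)) := by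
  obtain ⟨K, hK, hT⟩ := dT_bound
  refine ⟨6 * c0 + K, by have := c0_pos; positivity, fun q y hy => ?_⟩
  have hc0 := c0_pos
  have hy0 : 0 < y := (Real.exp_pos _).trans_le hy
  set L := Real.log y with hLdef
  have hL : 4 ^ 24 ≤ L := (Real.le_log_iff_exp_le hy0).2 hy
  have hL0 : 0 < L := by have : (0:ℝ) < 4 ^ 24 := by positivity
                         linarith
  set η := L ^ (-(1/24) : ℝ) with hη
  have hη0 : 0 < η := by positivity
  have hη4 : η ≤ 1/4 := by
    rw [hη]
    calc L ^ (-(1/24) : ℝ) ≤ ((4:ℝ) ^ 24) ^ (-(1/24) : ℝ) :=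
          Real.rpow_le_rpow_of_nonpos (by positivity) hL (by norm_num)
      _ = 1/4 := by
          rw [← Real.rpow_natCast, ← Real.rpow_mul (by norm_num)]
          norm_num
  have hηL : η ^ 2 * L = L ^ (11/12 : ℝ) := by
    rw [hη, ← Real.rpow_natCast, ← Real.rpow_mul hL0.le]
    nth_rewrite 2 [← Real.rpow_one L]
    rw [← Real.rpow_add hL0]; norm_num
  have hηL1 : 1 ≤ η ^ 2 * L := by
    rw [hηL]; exact Real.one_le_rpow (by linarith [show (1:ℝ) ≤ 4 ^ 24 by norm_num]) (by norm_num)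
  set R := L ^ (11/24 : ℝ) with hR
  have hR0 : 0 < R := by positivity
  have hsq : √L * η = R := by
    rw [Real.sqrt_eq_rpow, hη, ← Real.rpow_add hL0, hR]; norm_num
  have h38 : L ^ (3/8 : ℝ) = R * η ^ 2 := by
    rw [hη, ← Real.rpow_natCast, ← Real.rpow_mul hL0.le, hR, ← Real.rpow_add hL0]; norm_num
  set s := √L with hs
  have hs0 : 0 < s := Real.sqrt_pos.2 hL0
  have hs2 : s ^ 2 = L := Real.sq_sqrt hL0.le
  set h := η * y with hh
  have hh0 : 0 < h := by positivity
  have hbig : Real.exp 584 ≤ y / 2 := by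
    have e1 : Real.exp 585 ≤ y := le_trans (Real.exp_le_exp.2 (by norm_num)) hy
    have e2 : Real.exp 585 = Real.exp 584 * Real.exp 1 := by rw [← Real.exp_add]; norm_num
    have := Real.add_one_le_exp (1:ℝ)
    nlinarith [Real.exp_pos 584]
  have hL4 : (4:ℝ) ≤ L := by linarith [show (4:ℝ) ≤ 4 ^ 24 by norm_num]
  clear hL hy
  have hrange : ∀ N : ℕ, y < N → ∑ n ∈ Icc 1 ⌊y⌋₊, aQ q n
      = ∑ n ∈ range N, if (n : ℝ) ≤ y then aQ q n else 0 := by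
    intro N hN
    rw [← Finset.sum_filter]
    refine Finset.sum_subset ?_ ?_
    · intro n hn
      have hn' := Finset.mem_Icc.1 hn
      have h3 : (n : ℝ) ≤ y := (Nat.le_floor_iff hy0.le).1 hn'.2
      refine Finset.mem_filter.2 ⟨Finset.mem_range.2 ?_, h3⟩
      exact_mod_cast h3.trans_lt hN
    · intro n hn hn2
      have h3 := (Finset.mem_filter.1 hn).2
      have : n = 0 := by
        by_contra h0
        exact hn2 (Finset.mem_Icc.2 ⟨Nat.one_le_iff_ne_zero.2 h0, (Nat.le_floor_iff hy0.le).2 h3⟩)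
      rw [this, aQ]; simp
  set S := ∑ n ∈ Icc 1 ⌊y⌋₊, aQ q n with hS
  have hh2 : h ^ 2 = η ^ 2 * y ^ 2 := by rw [hh]; ring
  have hupper : S ≤ c0 * (y * s) + (6 * c0 + K) * (y * R) := by
    obtain ⟨N, hN⟩ := exists_nat_gt (y + 2 * h)
    have h1 := (abs_le.1 (hT q y h N (by linarith) hh0 (by rw [hh]; nlinarith [mul_nonneg hy0.le (sub_nonneg.2 hη4)]) hN.le)).2
    set U := √(Real.log (y + 2 * h)) with hU
    have hlog0 : 0 ≤ Real.log (y + 2 * h) := Real.log_nonneg (by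
      have : (1:ℝ) ≤ Real.exp 584 := Real.one_le_exp (by norm_num)
      linarith)
    have hU2 : U ^ 2 = Real.log (y + 2 * h) := Real.sq_sqrt hlog0
    have h2 := dM_le hy0 hh0 (Real.sqrt_nonneg _ : 0 ≤ U) (by rw [hU2, Real.exp_log (by linarith)])
    have h3 : h ^ 2 * S ≤ ∑ n ∈ range N, aQ q n * dk y h n := by
      rw [hrange N (by linarith), Finset.mul_sum]
      refine Finset.sum_le_sum fun n _ => ?_
      split_ifs with hn
      · rw [dk_of_le hh0 hn, mul_comm]
      · rw [mul_zero]; exact mul_nonneg (aQ_nonneg q n) (dk_nonneg_le hh0 _).1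
    have hUs : U ≤ s * (1 + η) := by
      refine Real.sqrt_le_iff.2 ⟨by positivity, ?_⟩
      have h4 : Real.log (y + 2 * h) ≤ L + 2 * η := by
        have e : y + 2 * h = y * (1 + 2 * η) := by rw [hh]; ring
        rw [e, Real.log_mul hy0.ne' (by positivity)]
        have := Real.log_le_sub_one_of_pos (show 0 < 1 + 2 * η by positivity)
        linarith
      rw [mul_pow, hs2]
      have : 1 ≤ L := by linarith
      nlinarith [mul_nonneg hη0.le (sub_nonneg.2 this), sq_nonneg η]
    have h5 : h ^ 2 * S ≤ h ^ 2 * (c0 * (s * (1 + η) * (y + 2 * h))) + h ^ 2 * (K * (y * R)) := by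
      have e1 : K * (y ^ 3 * L ^ (3/8 : ℝ)) = h ^ 2 * (K * (y * R)) := by rw [h38, hh2]; ring
      have e2 : c0 * dM y h ≤ h ^ 2 * (c0 * (s * (1 + η) * (y + 2 * h))) := by
        calc c0 * dM y h ≤ c0 * (h ^ 2 * (U * (y + 2 * h))) := by gcongr
          _ ≤ c0 * (h ^ 2 * ((s * (1 + η)) * (y + 2 * h))) := by gcongr
          _ = _ := by ring
      rw [← e1]; linarith
    rw [← mul_add] at h5
    have h6 := le_of_mul_le_mul_left h5 (by positivity)
    have h7 : c0 * (s * (1 + η) * (y + 2 * h)) ≤ c0 * (y * s) + 6 * c0 * (y * R) := by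
      rw [← hsq, hh]
      have : 0 ≤ c0 * s * y * η := by positivity
      have h8 : c0 * s * y * η * η ≤ c0 * s * y * η * (1/4) := by gcongr
      have h9 : c0 * (s * (1 + η) * (y + 2 * (η * y)))
          = c0 * (y * s) + 3 * (c0 * s * y * η) + 2 * (c0 * s * y * η * η) := by ring
      have h10 : c0 * (y * s) + 6 * c0 * (y * (s * η)) = c0 * (y * s) + 6 * (c0 * s * y * η) := by ring
      rw [h9, h10]; linarith
    linarith
  have hlower : c0 * (y * s) - (6 * c0 + K) * (y * R) ≤ S := by
    set z := y - 2 * h with hz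
    have hzy : z = y * (1 - 2 * η) := by rw [hz, hh]; ring
    have hz2 : y / 2 ≤ z := by rw [hzy]; nlinarith [mul_nonneg hy0.le (sub_nonneg.2 hη4)]
    have hz0 : 0 < z := by linarith
    have hzle : z ≤ y := by linarith
    obtain ⟨N, hN⟩ := exists_nat_gt y
    have h1 := (abs_le.1 (hT q z h N (by linarith) hh0 (by rw [hh, hzy]; nlinarith [mul_nonneg hy0.le (sub_nonneg.2 hη4)])
      (by rw [hz]; linarith))).1
    set V := Real.log z with hV
    have hVL : V ≤ L := Real.log_le_log hz0 hzle
    have hVL1 : L - 1 ≤ V := by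
      have e1 : Real.log (y / 2) ≤ V := Real.log_le_log (by linarith) hz2
      rw [Real.log_div hy0.ne' (by norm_num)] at e1
      have e2 := Real.log_le_sub_one_of_pos (show (0:ℝ) < 2 by norm_num)
      linarith
    have hL2 : (4:ℝ) ≤ L := hL4
    have hV0 : 0 < V := by linarith
    set U := √V with hU
    have hU2 : U ^ 2 = V := Real.sq_sqrt hV0.le
    have hU0 : 0 ≤ U := Real.sqrt_nonneg _
    have hUs : s * (1 - η) ≤ U := by
      refine Real.le_sqrt_of_sq_le ?_
      rw [mul_pow, hs2]
      have : 1 ≤ η * L := by nlinarith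
      nlinarith
    set U₁ := (1 - η) * U with hU1
    have hU10 : 0 ≤ U₁ := mul_nonneg (by linarith) hU0
    have h2 := le_dM hz0 hh0 hU10 (show U₁ ≤ U by rw [hU1]; nlinarith)
      (by rw [hU2, Real.exp_log hz0])
    have h3 : ∑ n ∈ range N, aQ q n * dk z h n ≤ h ^ 2 * S := by
      rw [hrange N hN, Finset.mul_sum]
      refine Finset.sum_le_sum fun n _ => ?_
      split_ifs with hn
      · rw [mul_comm]; exact mul_le_mul_of_nonneg_right (dk_nonneg_le hh0 _).2 (aQ_nonneg q n)
      · rw [dk_of_ge hh0 (by rw [hz]; linarith)]; simp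
    have hexp : Real.exp (U₁ ^ 2) ≤ z * (2 * η) := by
      have e1 : U₁ ^ 2 ≤ V - η * V := by
        rw [hU1, mul_pow, hU2]
        nlinarith [mul_pos hη0 hV0, mul_nonneg (mul_pos hη0 hV0).le (sub_nonneg.2 hη4)]
      have e2 : Real.exp (U₁ ^ 2) ≤ z * Real.exp (-(η * V)) := by
        calc _ ≤ Real.exp (V + -(η * V)) := Real.exp_le_exp.2 (by linarith)
          _ = _ := by rw [Real.exp_add, Real.exp_log hz0]
      refine e2.trans ?_
      gcongr
      rw [Real.exp_neg]
      refine inv_le_of_inv_le₀ (by positivity) ?_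
      refine le_trans ?_ ((le_add_of_nonneg_right zero_le_one).trans (Real.add_one_le_exp (η * V)))
      rw [inv_le_iff_one_le_mul₀ (by positivity)]
      nlinarith
    have hzc : z ^ 3 * V ^ (3/8 : ℝ) ≤ y ^ 3 * L ^ (3/8 : ℝ) := by gcongr
    have h5 : h ^ 2 * (c0 * (s * (1 - η) ^ 2 * (y * (1 - 2 * η) ^ 2))) ≤ h ^ 2 * S + h ^ 2 * (K * (y * R)) := by
      have e1 : K * (y ^ 3 * L ^ (3/8 : ℝ)) = h ^ 2 * (K * (y * R)) := by rw [h38, hh2]; ring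
      have e2 : h ^ 2 * (c0 * (s * (1 - η) ^ 2 * (y * (1 - 2 * η) ^ 2))) ≤ c0 * dM z h := by
        have e3 : s * (1 - η) ^ 2 ≤ U₁ := by rw [hU1]; nlinarith
        have e4 : y * (1 - 2 * η) ^ 2 ≤ z - Real.exp (U₁ ^ 2) := by
          have : y * (1 - 2 * η) ^ 2 = z - z * (2 * η) := by rw [hzy]; ring
          linarith
        calc _ ≤ h ^ 2 * (c0 * (U₁ * (z - Real.exp (U₁ ^ 2)))) := by gcongr
          _ = c0 * (h ^ 2 * (U₁ * (z - Real.exp (U₁ ^ 2)))) := by ring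
          _ ≤ _ := by gcongr
      have e5 : K * (z ^ 3 * V ^ (3/8 : ℝ)) ≤ K * (y ^ 3 * L ^ (3/8 : ℝ)) := by gcongr
      rw [← e1]; linarith
    rw [← mul_add] at h5
    have h6 := le_of_mul_le_mul_left h5 (by positivity)
    have h7 : c0 * (y * s) - 6 * c0 * (y * R) ≤ c0 * (s * (1 - η) ^ 2 * (y * (1 - 2 * η) ^ 2)) := by
      rw [← hsq]
      have e1 : 1 - 6 * η ≤ (1 - η) ^ 2 * (1 - 2 * η) ^ 2 := by
        have : (1 - η) ^ 2 * (1 - 2 * η) ^ 2 = (1 - 3 * η + 2 * η ^ 2) ^ 2 := by ring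
        rw [this]; nlinarith [sq_nonneg (-3 * η + 2 * η ^ 2), sq_nonneg η]
      calc _ = (c0 * y * s) * (1 - 6 * η) := by ring
        _ ≤ (c0 * y * s) * ((1 - η) ^ 2 * (1 - 2 * η) ^ 2) := by gcongr
        _ = _ := by ring
    linarith
  rw [abs_le]
  constructor <;> linarith

/-! ### Removal of the logarithmic weight -/

/-- The summatory function of `hHalf` over the residue class `q` modulo `8`. -/
noncomputable def HQ (q : (ZMod 8)ˣ) (y : ℝ) : ℝ :=
  ∑ n ∈ Icc 1 ⌊y⌋₊, if (n : ZMod 8) = q then hHalf n else 0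

lemma HQ_nonneg (q : (ZMod 8)ˣ) (y : ℝ) : 0 ≤ HQ q y :=
  Finset.sum_nonneg fun n _ => by split_ifs; exacts [hHalf_nonneg n, le_rfl]

lemma HQ_le (q : (ZMod 8)ˣ) {y : ℝ} (hy : 0 ≤ y) : HQ q y ≤ y := by
  have : HQ q y ≤ ∑ n ∈ Icc 1 ⌊y⌋₊, (1:ℝ) :=
    Finset.sum_le_sum fun n _ => by split_ifs; exacts [hHalf_le_one n, zero_le_one]
  refine this.trans ?_
  simpa using Nat.floor_le hy

set_option maxHeartbeats 1000000 in
/-- `∑_{n ≤ y, n ≡ q (8)} h(n) = c₀ y / √(log y) + O(y (log y)^{-13/24})`, obtained from the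
version weighted by `log n`: that weight is nearly constant, except for the `n ≤ y / log y`. -/
lemma HQ_asymp : ∃ K : ℝ, 0 ≤ K ∧ ∀ (q : (ZMod 8)ˣ) (y : ℝ), 2 ≤ y →
    |HQ q y - c0 * (y / √(Real.log y))| ≤ K * (y * Real.log y ^ (-(13/24) : ℝ)) := by
  obtain ⟨K, hK, hS⟩ := SQ_asymp
  have hc0 := c0_pos
  refine ⟨(1 + 4 * (c0 + K) + K) + (1 + c0 / √(Real.log 2)) * (4 ^ 24 : ℝ) ^ (13/24 : ℝ),
    by positivity, fun q y hy => ?_⟩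
  have hy0 : 0 < y := by linarith
  have hL0 : 0 < Real.log y := Real.log_pos (by linarith)
  have hH0 := HQ_nonneg q y
  have hH1 := HQ_le q hy0.le
  rcases le_total (Real.exp (4 ^ 24)) y with hyb | hys
  · have h1 := hS q y hyb
    set L := Real.log y with hL
    have hLb : 4 ^ 24 ≤ L := (Real.le_log_iff_exp_le hy0).2 hyb
    have hL16 : (16:ℝ) ≤ L := by linarith [show (16:ℝ) ≤ 4 ^ 24 by norm_num]
    clear hLb hyb
    set S := ∑ n ∈ Icc 1 ⌊y⌋₊, aQ q n with hSd
    set s := √L with hs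
    have hs0 : 0 < s := Real.sqrt_pos.2 hL0
    have hs2 : s ^ 2 = L := Real.sq_sqrt hL0.le
    have hs4 : 4 ≤ s := Real.le_sqrt_of_sq_le (by linarith)
    set R := L ^ (-(13/24) : ℝ) with hR
    have hR0 : 0 < R := by positivity
    have hRL : L ^ (11/24 : ℝ) = R * L := by
      rw [hR]; nth_rewrite 3 [← Real.rpow_one L]; rw [← Real.rpow_add hL0]; norm_num
    have hRinv : 1 / L ≤ R := by
      rw [hR, one_div, ← Real.rpow_neg_one]
      exact Real.rpow_le_rpow_of_exponent_le (by linarith) (by norm_num)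
    have hRs' : R * L ≤ s := by
      rw [← hRL, hs, Real.sqrt_eq_rpow]
      exact Real.rpow_le_rpow_of_exponent_le (by linarith) (by norm_num)
    set ℓ := Real.log L with hℓ
    have hℓ0 : 0 ≤ ℓ := Real.log_nonneg (by linarith)
    have hℓs : ℓ ≤ 2 * s := by
      have : ℓ = 2 * Real.log s := by rw [hℓ, ← hs2, Real.log_pow]; norm_num
      rw [this]
      have := Real.log_le_sub_one_of_pos hs0
      linarith
    have hℓL : ℓ ≤ L / 2 := by nlinarith
    have hSL : S ≤ L * HQ q y := by
      rw [hSd, HQ, Finset.mul_sum]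
      refine Finset.sum_le_sum fun n hn => ?_
      have hn' := Finset.mem_Icc.1 hn
      rw [aQ]
      split_ifs
      · rw [mul_comm]
        refine mul_le_mul_of_nonneg_right ?_ (hHalf_nonneg n)
        refine Real.log_le_log (by exact_mod_cast hn'.1) ((Nat.le_floor_iff hy0.le).1 hn'.2)
      · simp
    have hSU : (L - ℓ) * (HQ q y - y / L) ≤ S := by
      have e1 : HQ q y ≤ (∑ n ∈ Icc 1 ⌊y⌋₊, if y / L < n then
          (if (n : ZMod 8) = q then hHalf n else 0) else 0) + y / L := by
        have : HQ q y ≤ ∑ n ∈ Icc 1 ⌊y⌋₊, ((if y / L < n then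
          (if (n : ZMod 8) = q then hHalf n else 0) else 0) + if (n:ℝ) ≤ y / L then 1 else 0) := by
          refine Finset.sum_le_sum fun n hn => ?_
          by_cases h2 : y / L < n
          · rw [if_pos h2, if_neg (not_le.2 h2), add_zero]
          · rw [if_neg h2, if_pos (not_lt.1 h2), zero_add]
            split_ifs; exacts [hHalf_le_one n, zero_le_one]
        rw [Finset.sum_add_distrib] at this
        refine this.trans (add_le_add_right ?_ _)
        rw [← Finset.sum_filter, Finset.sum_const, nsmul_eq_mul, mul_one]
        have h3 : (Icc 1 ⌊y⌋₊).filter (fun n : ℕ => (n:ℝ) ≤ y / L) ⊆ Icc 1 ⌊y / L⌋₊ := by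
          intro n hn
          have := Finset.mem_filter.1 hn
          exact Finset.mem_Icc.2 ⟨(Finset.mem_Icc.1 this.1).1, Nat.le_floor this.2⟩
        have h4 : (((Icc 1 ⌊y⌋₊).filter (fun n : ℕ => (n:ℝ) ≤ y / L)).card : ℝ) ≤ (⌊y / L⌋₊ : ℝ) := by
          exact_mod_cast (Finset.card_le_card h3).trans (by simp)
        exact h4.trans (Nat.floor_le (by positivity))
      have e2 : (L - ℓ) * (∑ n ∈ Icc 1 ⌊y⌋₊, if y / L < n then
          (if (n : ZMod 8) = q then hHalf n else 0) else 0) ≤ S := by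
        rw [Finset.mul_sum, hSd]
        refine Finset.sum_le_sum fun n hn => ?_
        split_ifs with h2 h3
        · rw [aQ, if_pos h3, mul_comm]
          refine mul_le_mul_of_nonneg_left ?_ (hHalf_nonneg n)
          rw [hL, hℓ, ← Real.log_div hy0.ne' hL0.ne']
          exact Real.log_le_log (by positivity) h2.le
        · rw [mul_zero]; exact aQ_nonneg q n
        · rw [mul_zero]; exact aQ_nonneg q n
      refine le_trans (mul_le_mul_of_nonneg_left ?_ (by linarith)) e2
      linarith
    obtain ⟨h2, h3⟩ := abs_le.1 h1
    rw [hRL] at h2 h3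
    have hmain : c0 * (y / s) = c0 * (y * s) / L := by
      rw [← hs2]; field_simp
    have hSabs : S ≤ (c0 + K) * (y * s) := by
      have : K * (y * (R * L)) ≤ K * (y * s) := by gcongr
      linarith
    have hS0 : 0 ≤ S := Finset.sum_nonneg fun n _ => aQ_nonneg q n
    have hSL1 : |S / L - c0 * (y / s)| ≤ K * (y * R) := by
      rw [hmain, ← sub_div, abs_div, abs_of_pos hL0, div_le_iff₀ hL0]
      exact h1.trans (le_of_eq (by rw [hRL]; ring))
    obtain ⟨h4, h5⟩ := abs_le.1 hSL1
    have hlow : S / L ≤ HQ q y := by rw [div_le_iff₀ hL0]; linarith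
    have hup : HQ q y ≤ S / L + (1 + 4 * (c0 + K)) * (y / L) := by
      have a1 : S / (L - ℓ) ≤ S / L + 4 * (c0 + K) * (y / L) := by
        have b0 : 0 < L - ℓ := by linarith
        have b1 : S / (L - ℓ) = S / L + S * ℓ / (L * (L - ℓ)) := by field_simp; ring
        rw [b1]
        have b2 : S * ℓ / (L * (L - ℓ)) ≤ ((c0 + K) * (y * s)) * (2 * s) / (L * (L / 2)) := by
          gcongr; linarith
        have b3 : ((c0 + K) * (y * s)) * (2 * s) / (L * (L / 2)) = 4 * (c0 + K) * (y / L) := by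
          rw [← hs2]; field_simp; norm_num
        linarith
      have a2 : HQ q y - y / L ≤ S / (L - ℓ) := by
        rw [le_div_iff₀ (by linarith)]; linarith
      linarith
    have hyL : y / L ≤ y * R := by
      rw [div_eq_mul_one_div]; gcongr
    have hyL2 : (1 + 4 * (c0 + K)) * (y / L) ≤ (1 + 4 * (c0 + K)) * (y * R) := by gcongr
    have hextra : 0 ≤ (1 + c0 / √(Real.log 2)) * (4 ^ 24 : ℝ) ^ (13/24 : ℝ) * (y * R) := by positivity
    have hm : 0 ≤ (1 + 4 * (c0 + K)) * (y * R) := by positivity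
    rw [abs_le]
    constructor <;> linarith
  · have hL2 : Real.log 2 ≤ Real.log y := Real.log_le_log (by norm_num) hy
    have hl2 : 0 < Real.log 2 := Real.log_pos (by norm_num)
    have hLb : Real.log y ≤ 4 ^ 24 := (Real.log_le_iff_le_exp hy0).2 hys
    have h1 : |HQ q y - c0 * (y / √(Real.log y))| ≤ (1 + c0 / √(Real.log 2)) * y := by
      have h2 : c0 * (y / √(Real.log y)) ≤ c0 * (y / √(Real.log 2)) := by gcongr
      have h3 : 0 ≤ c0 * (y / √(Real.log y)) := by positivity
      have h4 : (1 + c0 / √(Real.log 2)) * y = y + c0 * (y / √(Real.log 2)) := by ring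
      rw [abs_le]; constructor <;> linarith
    have h5 : 1 ≤ (4 ^ 24 : ℝ) ^ (13/24 : ℝ) * Real.log y ^ (-(13/24) : ℝ) := by
      rw [Real.rpow_neg hL0.le, ← div_eq_mul_inv, one_le_div (by positivity)]
      exact Real.rpow_le_rpow hL0.le hLb (by norm_num)
    have h6 : (1 + c0 / √(Real.log 2)) * y * 1 ≤ (1 + c0 / √(Real.log 2)) * y *
      ((4 ^ 24 : ℝ) ^ (13/24 : ℝ) * Real.log y ^ (-(13/24) : ℝ)) := by gcongr
    have h7 : 0 ≤ (1 + 4 * (c0 + K) + K) * (y * Real.log y ^ (-(13/24) : ℝ)) := by positivity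
    rw [add_mul]
    linarith

/-! ### The convolution factor between `hHalf` and `1/τ` -/

/-- The coefficients of the power series `(1 - X)^{1/2}`. -/
noncomputable def eHalf (k : ℕ) : ℝ := if k = 0 then 1 else cHalf k - cHalf (k - 1)

lemma eHalf_zero : eHalf 0 = 1 := rfl

lemma eHalf_succ (k : ℕ) : eHalf (k + 1) = cHalf (k + 1) - cHalf k := by simp [eHalf]

lemma eHalf_conv_succ (k : ℕ) :
    ∑ x ∈ antidiagonal (k + 1), cHalf x.1 * eHalf x.2 = 0 := by
  have h1 : ∑ x ∈ antidiagonal (k + 1), cHalf x.1 * eHalf x.2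
      = cHalf (k + 1) * eHalf 0 + ∑ x ∈ antidiagonal k, cHalf x.1 * eHalf (x.2 + 1) := by
    rw [Finset.Nat.sum_antidiagonal_succ']
  have h2 : ∑ x ∈ antidiagonal (k + 1), cHalf x.1 * cHalf x.2
      = cHalf (k + 1) * cHalf 0 + ∑ x ∈ antidiagonal k, cHalf x.1 * cHalf (x.2 + 1) := by
    rw [Finset.Nat.sum_antidiagonal_succ']
  rw [cHalf_conv, cHalf_zero] at h2
  simp only [eHalf_succ, mul_sub, Finset.sum_sub_distrib, cHalf_conv, eHalf_zero] at h1
  rw [h1]; linarith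

lemma abs_eHalf_succ (k : ℕ) : |eHalf (k + 1)| = cHalf k - cHalf (k + 1) := by
  rw [eHalf_succ, abs_of_nonpos (by linarith [cHalf_succ_le k])]; ring

lemma sum_abs_eHalf (k : ℕ) : ∑ i ∈ range (k + 1), |eHalf i| = 2 - cHalf k := by
  induction k with
  | zero => simp [eHalf_zero, cHalf_zero]; norm_num
  | succ k ih => rw [Finset.sum_range_succ, ih, abs_eHalf_succ]; ring

lemma abs_eHalf_succ_le (k : ℕ) : |eHalf (k + 1)| ≤ 1 / 2 := by
  rw [abs_eHalf_succ]
  have h := cHalf_succ k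
  have h1 := cHalf_le_one k
  have h0 := cHalf_pos (k + 1)
  have h2 := cHalf_pos k
  have hk : (0:ℝ) ≤ k := Nat.cast_nonneg k
  have h3 : (k + 1 : ℝ) * (cHalf k - cHalf (k + 1)) = 1/2 * cHalf k := by rw [mul_sub, h]; ring
  have h4 := cHalf_succ_le k
  nlinarith

/-- The coefficients of `(1 - X)^{1/2} ∑ X^k/(k+1)`. -/
noncomputable def wHalf (k : ℕ) : ℝ := ∑ x ∈ antidiagonal k, eHalf x.1 * (1 / ((x.2 : ℝ) + 1))

lemma wHalf_zero : wHalf 0 = 1 := by simp [wHalf, eHalf_zero]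

lemma cHalf_one : cHalf 1 = 1/2 := by
  have := cHalf_succ 0
  rw [cHalf_zero] at this
  norm_num at this; linarith

lemma wHalf_one : wHalf 1 = 0 := by
  rw [wHalf, Finset.Nat.antidiagonal_succ]
  simp [eHalf, cHalf_zero, cHalf_one]
  norm_num

lemma abs_wHalf_le (k : ℕ) : |wHalf k| ≤ 2 := by
  rw [wHalf]
  calc _ ≤ ∑ x ∈ antidiagonal k, |eHalf x.1 * (1 / ((x.2 : ℝ) + 1))| := Finset.abs_sum_le_sum_abs _ _
    _ ≤ ∑ x ∈ antidiagonal k, |eHalf x.1| := by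
        refine Finset.sum_le_sum fun x _ => ?_
        rw [abs_mul]
        refine mul_le_of_le_one_right (abs_nonneg _) ?_
        rw [abs_of_nonneg (by positivity), div_le_one (by positivity)]
        linarith [(Nat.cast_nonneg x.2 : (0:ℝ) ≤ x.2)]
    _ = ∑ i ∈ range (k + 1), |eHalf i| := by
        rw [Finset.Nat.sum_antidiagonal_eq_sum_range_succ_mk]
    _ ≤ 2 := by rw [sum_abs_eHalf]; linarith [cHalf_pos k]

/-- Convolving with the coefficients of `(1 - X)^{-1/2}` recovers the harmonic coefficients. -/
lemma wHalf_conv (k : ℕ) : ∑ x ∈ antidiagonal k, cHalf x.1 * wHalf x.2 = 1 / ((k : ℝ) + 1) := by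
  have e : ∀ n, ∑ x ∈ antidiagonal n, cHalf x.1 * eHalf x.2 = if n = 0 then 1 else 0 := by
    intro n
    cases n with
    | zero => simp [cHalf_zero, eHalf_zero]
    | succ n => simpa using eHalf_conv_succ n
  have e2 : PowerSeries.mk cHalf * PowerSeries.mk eHalf = 1 := by
    ext n
    rw [PowerSeries.coeff_mul, PowerSeries.coeff_one]
    simpa using e n
  have e3 : PowerSeries.mk cHalf * (PowerSeries.mk eHalf * PowerSeries.mk fun j : ℕ => 1 / ((j : ℝ) + 1))
      = PowerSeries.mk fun j : ℕ => 1 / ((j : ℝ) + 1) := by rw [← mul_assoc, e2, one_mul]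
  have e4 := congrArg (PowerSeries.coeff k) e3
  rw [PowerSeries.coeff_mul, PowerSeries.coeff_mk] at e4
  rw [← e4]
  refine Finset.sum_congr rfl fun x _ => ?_
  rw [PowerSeries.coeff_mul]
  simp [wHalf]

/-- Local values of the correction factor: nothing at `2`, and otherwise the quotient of the local
series of `1_{(n,r)=1}/τ(n)` by that of `hHalf`. -/
noncomputable def gU (r p k : ℕ) : ℝ :=
  if k = 0 then 1 else if p = 2 then 0 else if p ∣ r then eHalf k else wHalf k

/-- The arithmetic function `g` supported on odd integers such that `hHalf * g` agrees with
`1_{(n,r)=1}/τ(n)` on odd `n`. -/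
noncomputable def gR (r : ℕ) : ArithmeticFunction ℝ := mulOf (gU r)

lemma gR_prime_pow (r : ℕ) {p : ℕ} (hp : p.Prime) (k : ℕ) : gR r (p ^ k) = gU r p k :=
  mulOf_prime_pow _ (fun _ => by simp [gU]) hp k

lemma gR_isMultiplicative (r : ℕ) : (gR r).IsMultiplicative := mulOf_isMultiplicative _

lemma gR_even (r : ℕ) {d : ℕ} (hd : Even d) : gR r d = 0 := by
  rcases eq_or_ne d 0 with rfl | h0
  · simp
  · rw [gR, mulOf_apply _ h0, Finsupp.prod]
    refine Finset.prod_eq_zero (i := 2) ?_ ?_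
    · rw [Nat.support_factorization]
      exact Nat.mem_primeFactors.2 ⟨Nat.prime_two, hd.two_dvd, h0⟩
    · have : d.factorization 2 ≠ 0 :=
        (Nat.prime_two.factorization_pos_of_dvd h0 hd.two_dvd).ne'
      simp [gU, this]

/-- The product `hHalf * gR r`, by its values on prime powers. -/
noncomputable def tR (r : ℕ) : ArithmeticFunction ℝ := mulOf fun p k =>
  if p = 2 then cHalf k else if p ∣ r then (if k = 0 then 1 else 0) else 1 / ((k : ℝ) + 1)

lemma hHalf_mul_gR (r : ℕ) : hHalf * gR r = tR r := by
  rw [tR, ArithmeticFunction.IsMultiplicative.eq_iff_eq_on_prime_powers _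
    (hHalf_isMultiplicative.mul (gR_isMultiplicative r)) _ (mulOf_isMultiplicative _)]
  intro p k hp
  rw [mul_prime_pow _ _ hp, mulOf_prime_pow _ (fun p => by simp [cHalf_zero]) hp]
  simp only [hHalf_prime_pow hp, gR_prime_pow r hp]
  by_cases h2 : p = 2
  · rw [if_pos h2]
    rw [Finset.sum_eq_single (k, 0)]
    · simp [gU]
    · rintro ⟨a, b⟩ hab hne
      have : b ≠ 0 := by
        rintro rfl
        apply hne
        have := Finset.HasAntidiagonal.mem_antidiagonal.1 hab
        simp at this; simp [this]
      simp [gU, this, h2]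
    · simp
  · rw [if_neg h2]
    by_cases h3 : p ∣ r
    · rw [if_pos h3]
      have : ∀ j, gU r p j = eHalf j := by
        intro j; rw [gU]; split_ifs with h; · rw [h, eHalf_zero]
        rfl
      simp only [this]
      cases k with
      | zero => simp [cHalf_zero, eHalf_zero]
      | succ k => simpa using eHalf_conv_succ k
    · rw [if_neg h3]
      have : ∀ j, gU r p j = wHalf j := by
        intro j; rw [gU]; split_ifs with h; · rw [h, wHalf_zero]
        rfl
      simp only [this]
      exact wHalf_conv k

lemma tR_odd (r : ℕ) {n : ℕ} (hn : Odd n) :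
    tR r n = if n.Coprime r then 1 / (n.divisors.card : ℝ) else 0 := by
  have h0 : n ≠ 0 := by rintro rfl; simp at hn
  have h2 : ∀ p ∈ n.primeFactors, p ≠ 2 := by
    rintro p hp rfl
    exact (Nat.not_even_iff_odd.2 hn) (even_iff_two_dvd.2 (Nat.dvd_of_mem_primeFactors hp))
  rw [tR, mulOf_apply _ h0, Finsupp.prod, Nat.support_factorization]
  split_ifs with hc
  · rw [Nat.card_divisors h0, Nat.cast_prod, one_div, ← Finset.prod_inv_distrib]
    refine Finset.prod_congr rfl fun p hp => ?_
    have h3 : ¬ p ∣ r := fun h => (Nat.prime_of_mem_primeFactors hp).one_lt.ne'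
      (Nat.dvd_one.1 (hc ▸ Nat.dvd_gcd (Nat.dvd_of_mem_primeFactors hp) h))
    rw [if_neg (h2 p hp), if_neg h3]
    simp
  · obtain ⟨p, hp, hpn, hpr⟩ := Nat.Prime.not_coprime_iff_dvd.1 hc
    have hm : p ∈ n.primeFactors := Nat.mem_primeFactors.2 ⟨hp, hpn, h0⟩
    refine Finset.prod_eq_zero hm ?_
    rw [if_neg (h2 p hm), if_pos hpr, if_neg (ne_of_gt (hp.factorization_pos_of_dvd h0 hpn))]

/-! ### Absolute convergence of the convolution factor -/

lemma abs_gU_le (r p k : ℕ) : |gU r p k| ≤ 2 := by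
  rw [gU]
  split_ifs with h1 h2 h3
  · simp
  · simp
  · obtain ⟨j, rfl⟩ := Nat.exists_eq_succ_of_ne_zero h1
    exact (abs_eHalf_succ_le j).trans (by norm_num)
  · exact abs_wHalf_le k

/-- The weight `|g(n)| n^{-3/4}`. -/
noncomputable def gW (r n : ℕ) : ℝ := |gR r n| * (n : ℝ) ^ (-(3/4) : ℝ)

lemma gW_nonneg (r n : ℕ) : 0 ≤ gW r n := by unfold gW; positivity

lemma gW_mul (r : ℕ) {m n : ℕ} (h : m.Coprime n) : gW r (m * n) = gW r m * gW r n := by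
  rw [gW, gW, gW, (gR_isMultiplicative r).2 h, abs_mul, Nat.cast_mul,
    Real.mul_rpow (by positivity) (by positivity)]; ring

lemma gW_prime_pow (r : ℕ) {p : ℕ} (hp : p.Prime) (k : ℕ) :
    gW r (p ^ k) = |gU r p k| * ((p : ℝ) ^ (-(3/4) : ℝ)) ^ k := by
  rw [gW, gR_prime_pow r hp, Nat.cast_pow, ← Real.rpow_natCast, ← Real.rpow_mul (by positivity),
    ← Real.rpow_natCast, ← Real.rpow_mul (by positivity), mul_comm (k : ℝ)]

lemma three_rpow_le : (3:ℝ) ^ (-(3/4) : ℝ) ≤ 1/2 := by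
  rw [Real.rpow_neg (by norm_num), one_div]
  refine inv_anti₀ (by norm_num) ?_
  have h : (2:ℝ) = (2 ^ 4) ^ (1/4 : ℝ) := by
    rw [← Real.rpow_natCast, ← Real.rpow_mul (by norm_num)]; norm_num
  have h3 : (3:ℝ) ^ (3/4 : ℝ) = (3 ^ 3) ^ (1/4 : ℝ) := by
    rw [← Real.rpow_natCast, ← Real.rpow_mul (by norm_num)]; norm_num
  rw [h3]; nth_rewrite 1 [h]
  exact Real.rpow_le_rpow (by norm_num) (by norm_num) (by norm_num)

lemma prime_rpow_le {p : ℕ} (hp : p.Prime) (h2 : p ≠ 2) : (p:ℝ) ^ (-(3/4) : ℝ) ≤ 1/2 := by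
  refine le_trans ?_ three_rpow_le
  have : 3 ≤ p := by have := hp.two_le; omega
  exact Real.rpow_le_rpow_of_nonpos (by norm_num) (by exact_mod_cast this) (by norm_num)

lemma prime_rpow_lt_one {p : ℕ} (hp : p.Prime) : (p:ℝ) ^ (-(3/4) : ℝ) < 1 :=
  Real.rpow_lt_one_of_one_lt_of_neg (by exact_mod_cast hp.one_lt) (by norm_num)

lemma gW_summable_pow (r : ℕ) {p : ℕ} (hp : p.Prime) : Summable fun k : ℕ => gW r (p ^ k) := by
  have h := (summable_geometric_of_lt_one (by positivity) (prime_rpow_lt_one hp)).mul_left 2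
  refine Summable.of_nonneg_of_le (fun k => gW_nonneg r _) (fun k => ?_) h
  rw [gW_prime_pow r hp]
  gcongr
  exact abs_gU_le r p k

/-- The local factors of `∑ |g(n)| n^{-3/4}`: at most `2 + O(p^{-3/2})` at the primes
dividing `r`, and `1 + O(p^{-3/2})` at the other primes, because `g(p) = 0` there. -/
lemma gW_local (r : ℕ) {p : ℕ} (hp : p.Prime) :
    ∑' k : ℕ, gW r (p ^ k) ≤ (if p ∣ r then 2 else 1) * Real.exp (4 * (p : ℝ) ^ (-(3/2) : ℝ)) := by
  set x := (p : ℝ) ^ (-(3/4) : ℝ) with hx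
  have hx0 : 0 < x := by have := hp.pos; positivity
  have hx2 : (p : ℝ) ^ (-(3/2) : ℝ) = x ^ 2 := by
    rw [hx, ← Real.rpow_natCast, ← Real.rpow_mul (by positivity)]; norm_num
  rw [hx2]
  have hsum := gW_summable_pow r hp
  have hE : (1:ℝ) ≤ Real.exp (4 * x ^ 2) := Real.one_le_exp (by positivity)
  by_cases h2 : p = 2
  · have : ∑' k : ℕ, gW r (p ^ k) = 1 := by
      rw [tsum_eq_single 0]
      · rw [gW_prime_pow r hp]; simp [gU]
      · intro k hk; rw [gW_prime_pow r hp]; simp [gU, hk, h2]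
    rw [this]
    split_ifs <;> linarith
  · have hxh : x ≤ 1/2 := prime_rpow_le hp h2
    have hgeo := summable_geometric_of_lt_one hx0.le (by linarith)
    have hgt : ∑' k : ℕ, x ^ k ≤ 2 := by
      rw [tsum_geometric_of_lt_one hx0.le (by linarith)]
      rw [inv_le_comm₀ (by linarith) (by norm_num)]; linarith
    have e0 : gW r (p ^ 0) = 1 := by rw [gW_prime_pow r hp]; simp [gU]
    have hs1 : Summable fun k : ℕ => gW r (p ^ (k + 1)) :=
      hsum.comp_injective (add_left_injective 1)
    rw [hsum.tsum_eq_zero_add, e0]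
    by_cases h3 : p ∣ r
    · rw [if_pos h3]
      have : ∑' k : ℕ, gW r (p ^ (k + 1)) ≤ ∑' k : ℕ, (1/4 : ℝ) * x ^ k := by
        refine hs1.tsum_le_tsum (fun k => ?_) (hgeo.mul_left _)
        rw [gW_prime_pow r hp, ← hx, gU, if_neg (by omega), if_neg h2, if_pos h3, pow_succ]
        have := abs_eHalf_succ_le k
        calc |eHalf (k + 1)| * (x ^ k * x) ≤ 1/2 * (x ^ k * (1/2)) := by gcongr
          _ = _ := by ring
      rw [tsum_mul_left] at this
      linarith
    · rw [if_neg h3, one_mul]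
      have e1 : gW r (p ^ (0 + 1)) = 0 := by
        rw [gW_prime_pow r hp, gU]; simp [h2, h3, wHalf_one]
      have hs2 : Summable fun k : ℕ => gW r (p ^ (k + 1 + 1)) :=
        hs1.comp_injective (add_left_injective 1)
      rw [hs1.tsum_eq_zero_add, e1, zero_add]
      have : ∑' k : ℕ, gW r (p ^ (k + 1 + 1)) ≤ ∑' k : ℕ, (2 * x ^ 2) * x ^ k := by
        refine hs2.tsum_le_tsum (fun k => ?_) (hgeo.mul_left _)
        rw [gW_prime_pow r hp, ← hx]
        have := abs_gU_le r p (k + 1 + 1)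
        calc _ ≤ 2 * x ^ (k + 1 + 1) := by gcongr
          _ = _ := by ring
      rw [tsum_mul_left] at this
      have h5 := Real.add_one_le_exp (4 * x ^ 2)
      nlinarith [sq_nonneg x]

lemma two_pow_card_primeFactors_le {r : ℕ} (hr : r ≠ 0) : 2 ^ r.primeFactors.card ≤ r.divisors.card := by
  rw [Nat.card_divisors hr, ← Finset.prod_const]
  refine Finset.prod_le_prod' fun p hp => ?_
  have := (Nat.prime_of_mem_primeFactors hp).factorization_pos_of_dvd hr (Nat.dvd_of_mem_primeFactors hp)
  omega

/-- `∑ |g(n)| n^{-3/4} ≪ τ(r)`. -/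
lemma gW_sum_le : ∃ K : ℝ, 0 < K ∧ ∀ r : ℕ, r ≠ 0 → Summable (gW r) ∧
    ∑' n, gW r n ≤ K * (r.divisors.card : ℝ) := by
  have hP : Summable fun n : ℕ => (n : ℝ) ^ (-(3/2) : ℝ) := Real.summable_nat_rpow.2 (by norm_num)
  refine ⟨Real.exp (4 * ∑' n : ℕ, (n : ℝ) ^ (-(3/2) : ℝ)), Real.exp_pos _, fun r hr => ?_⟩
  have key : ∀ N, ∑ n ∈ range N, gW r n ≤ Real.exp (4 * ∑' n : ℕ, (n : ℝ) ^ (-(3/2) : ℝ)) *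
      (r.divisors.card : ℝ) := by
    intro N
    have h1 := EulerProduct.summable_and_hasSum_smoothNumbers_prod_primesBelow_tsum
      (f := gW r) (by simp [gW, (gR_isMultiplicative r).1]) (fun h => gW_mul r h)
      (fun hp => by simpa [abs_of_nonneg (gW_nonneg r _)] using gW_summable_pow r hp) N
    have h2 : ∑ n ∈ range N, gW r n ≤ ∏ p ∈ N.primesBelow, ∑' k : ℕ, gW r (p ^ k) := by
      have h3 : HasSum (Set.indicator N.smoothNumbers (gW r))
          (∏ p ∈ N.primesBelow, ∑' k : ℕ, gW r (p ^ k)) :=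
        (hasSum_subtype_iff_indicator (f := gW r) (s := N.smoothNumbers)).1 h1.2
      refine le_trans (Finset.sum_le_sum fun n hn => ?_)
        (sum_le_hasSum (range N) (fun n _ => Set.indicator_nonneg (fun n _ => gW_nonneg r n) n) h3)
      rcases eq_or_ne n 0 with rfl | h0
      · simp [gW, Set.indicator]
      · rw [Set.indicator_of_mem]
        exact Nat.mem_smoothNumbers_of_lt (Nat.pos_of_ne_zero h0) (Finset.mem_range.1 hn)
    refine h2.trans ?_
    calc _ ≤ ∏ p ∈ N.primesBelow, ((if p ∣ r then (2:ℝ) else 1) * Real.exp (4 * (p : ℝ) ^ (-(3/2) : ℝ))) := by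
          refine Finset.prod_le_prod (fun p _ => tsum_nonneg fun k => gW_nonneg r _) fun p hp => ?_
          exact gW_local r (Nat.prime_of_mem_primesBelow hp)
      _ = (∏ p ∈ N.primesBelow, (if p ∣ r then (2:ℝ) else 1)) *
            Real.exp (4 * ∑ p ∈ N.primesBelow, (p : ℝ) ^ (-(3/2) : ℝ)) := by
          rw [Finset.prod_mul_distrib, Finset.mul_sum, Real.exp_sum]
      _ ≤ (r.divisors.card : ℝ) * Real.exp (4 * ∑' n : ℕ, (n : ℝ) ^ (-(3/2) : ℝ)) := by
          gcongr
          · rw [← Finset.prod_filter, Finset.prod_const]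
            refine le_trans ?_ (by exact_mod_cast two_pow_card_primeFactors_le hr :
              (2:ℝ) ^ r.primeFactors.card ≤ r.divisors.card)
            refine pow_le_pow_right₀ (by norm_num) (Finset.card_le_card fun p hp => ?_)
            have := Finset.mem_filter.1 hp
            exact Nat.mem_primeFactors.2 ⟨Nat.prime_of_mem_primesBelow this.1, this.2, hr⟩
          · exact hP.sum_le_tsum _ fun n _ => by positivity
      _ = _ := mul_comm _ _
  have hs : Summable (gW r) := summable_of_sum_range_le (gW_nonneg r) key
  exact ⟨hs, hs.tsum_le_of_sum_range_le key⟩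

/-! ### Sums of `1/τ` in residue classes -/

lemma sum_divisorsAntidiagonal_Icc (F : ℕ → ℕ → ℝ) (N : ℕ) :
    ∑ n ∈ Icc 1 N, ∑ x ∈ n.divisorsAntidiagonal, F x.1 x.2
      = ∑ b ∈ Icc 1 N, ∑ a ∈ Icc 1 (N / b), F a b := by
  rw [Finset.sum_sigma', Finset.sum_sigma']
  refine Finset.sum_nbij' (fun x => ⟨x.2.2, x.2.1⟩) (fun y => ⟨y.2 * y.1, (y.2, y.1)⟩) ?_ ?_ ?_ ?_ ?_
  · rintro ⟨n, a, b⟩ h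
    simp only [Finset.mem_sigma, Finset.mem_Icc, Nat.mem_divisorsAntidiagonal] at h ⊢
    obtain ⟨⟨h1, h2⟩, rfl, h3⟩ := h
    have hb : 0 < b := Nat.pos_of_ne_zero fun h => h3 (by simp [h])
    have ha : 0 < a := Nat.pos_of_ne_zero fun h => h3 (by simp [h])
    exact ⟨⟨hb, (Nat.le_mul_of_pos_left b ha).trans h2⟩, ha, (Nat.le_div_iff_mul_le hb).2 h2⟩
  · rintro ⟨b, a⟩ h
    simp only [Finset.mem_sigma, Finset.mem_Icc, Nat.mem_divisorsAntidiagonal] at h ⊢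
    obtain ⟨⟨h1, h2⟩, h3, h4⟩ := h
    exact ⟨⟨Nat.mul_pos h3 h1, (Nat.le_div_iff_mul_le h1).1 h4⟩, trivial, (Nat.mul_pos h3 h1).ne'⟩
  · rintro ⟨n, a, b⟩ h
    simp only [Finset.mem_sigma, Finset.mem_Icc, Nat.mem_divisorsAntidiagonal] at h
    obtain ⟨_, rfl, h3⟩ := h
    rfl
  · rintro ⟨b, a⟩ _; rfl
  · rintro ⟨n, a, b⟩ _; rfl

/-- The summatory function of `1/τ(n)` over `n ≡ q (mod 8)` coprime to `r`. -/
noncomputable def SR (r : ℕ) (q : (ZMod 8)ˣ) (x : ℝ) : ℝ :=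
  ∑ n ∈ Icc 1 ⌊x⌋₊, if (n : ZMod 8) = q ∧ n.Coprime r then 1 / (n.divisors.card : ℝ) else 0

/-- The residue class `q / d` modulo `8`, for odd `d`. -/
noncomputable def qDiv (q : (ZMod 8)ˣ) (d : ℕ) : (ZMod 8)ˣ :=
  if h : d.Coprime 8 then q * (ZMod.unitOfCoprime d h)⁻¹ else 1

lemma coprime_eight_of_cast {n : ℕ} {q : (ZMod 8)ˣ} (h : (n : ZMod 8) = q) : n.Coprime 8 :=
  (ZMod.isUnit_iff_coprime n 8).1 (h ▸ q.isUnit)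

lemma odd_iff_coprime_eight {n : ℕ} : n.Coprime 8 ↔ Odd n := by
  rw [show 8 = 2 ^ 3 by norm_num, Nat.coprime_pow_right_iff (by norm_num), Nat.coprime_two_right]

lemma cast_mul_eq_iff {q : (ZMod 8)ˣ} {a d : ℕ} (hd : d.Coprime 8) :
    ((a * d : ℕ) : ZMod 8) = q ↔ (a : ZMod 8) = qDiv q d := by
  rw [qDiv, dif_pos hd, Units.val_mul, Nat.cast_mul, ← ZMod.coe_unitOfCoprime d hd,
    Units.eq_mul_inv_iff_mul_eq]

/-- The identity `1_{(n,r)=1}/τ(n) = (hHalf * g)(n)` for odd `n`, summed over the residue class. -/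
lemma SR_eq_sum (r : ℕ) (q : (ZMod 8)ˣ) (x : ℝ) :
    SR r q x = ∑ d ∈ Icc 1 ⌊x⌋₊, gR r d * HQ (qDiv q d) (x / d) := by
  have h1 : SR r q x = ∑ n ∈ Icc 1 ⌊x⌋₊, ∑ y ∈ n.divisorsAntidiagonal,
      if ((y.1 * y.2 : ℕ) : ZMod 8) = q then hHalf y.1 * gR r y.2 else 0 := by
    refine Finset.sum_congr rfl fun n hn => ?_
    have : ∀ y ∈ n.divisorsAntidiagonal,
        (if ((y.1 * y.2 : ℕ) : ZMod 8) = q then hHalf y.1 * gR r y.2 else 0)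
        = if (n : ZMod 8) = q then hHalf y.1 * gR r y.2 else 0 := by
      intro y hy; rw [(Nat.mem_divisorsAntidiagonal.1 hy).1]
    rw [Finset.sum_congr rfl this]
    by_cases h : (n : ZMod 8) = q
    · simp only [h, if_true, true_and]
      rw [← ArithmeticFunction.mul_apply, hHalf_mul_gR,
        tR_odd r (odd_iff_coprime_eight.1 (coprime_eight_of_cast h))]
    · simp [h]
  rw [h1, sum_divisorsAntidiagonal_Icc (fun a b =>
    if ((a * b : ℕ) : ZMod 8) = q then hHalf a * gR r b else 0)]
  refine Finset.sum_congr rfl fun d _ => ?_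
  by_cases hd : d.Coprime 8
  · rw [HQ, Nat.floor_div_natCast, Finset.mul_sum]
    refine Finset.sum_congr rfl fun a _ => ?_
    simp only [cast_mul_eq_iff hd]
    split_ifs <;> ring
  · have : gR r d = 0 := gR_even r (Nat.not_odd_iff_even.1 (mt odd_iff_coprime_eight.2 hd))
    simp [this]

set_option maxHeartbeats 1000000 in
/-- Comparison of the sums `HQ q (x / d)` with main terms that depend on `x` only through `√(log x)`; the
factor `d^{-3/4}` in place of `d^{-1}` absorbs the replacement of `log (x / d)` by `log x`, and makes the
bound hold for every `d ≥ 1`, also beyond `x`. -/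
lemma HQ_uniform : ∃ K : ℝ, 0 ≤ K ∧ ∀ (q : (ZMod 8)ˣ) (x : ℝ) (d : ℕ), 4 ≤ x → 1 ≤ d →
    |HQ q (x / d) - c0 * (x / d / √(Real.log x))|
      ≤ K * (x * Real.log x ^ (-(13/24) : ℝ)) * (d : ℝ) ^ (-(3/4) : ℝ) := by
  obtain ⟨K, hK, hH⟩ := HQ_asymp
  have hc0 := c0_pos
  refine ⟨2 * K + 8 * c0 + 8 * (1 + c0), by positivity, fun q x d hx hd => ?_⟩
  have hx0 : 0 < x := by linarith
  have hd1 : (1:ℝ) ≤ d := by exact_mod_cast hd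
  have hd0 : (0:ℝ) < d := by linarith
  set L := Real.log x with hL
  have hL1 : 1 ≤ L := by
    have h4 : Real.log 4 = 2 * Real.log 2 := by
      rw [show (4:ℝ) = 2 ^ 2 by norm_num, Real.log_pow]; norm_num
    have := Real.log_two_gt_d9
    have h5 : Real.log 4 ≤ L := Real.log_le_log (by norm_num) hx
    linarith
  have hL0 : 0 < L := by linarith
  set R := L ^ (-(13/24) : ℝ) with hR
  have hR0 : 0 < R := by positivity
  set D := (d : ℝ) ^ (-(3/4) : ℝ) with hD
  have hD0 : 0 < D := by positivity
  have hdD : (1 : ℝ) / d = D * (d : ℝ) ^ (-(1/4) : ℝ) := by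
    rw [hD, ← Real.rpow_add hd0, one_div, ← Real.rpow_neg_one]; norm_num
  have hd14 : 0 < (d : ℝ) ^ (1/4 : ℝ) := by positivity
  have hd14i : (d : ℝ) ^ (-(1/4) : ℝ) = ((d : ℝ) ^ (1/4 : ℝ))⁻¹ := Real.rpow_neg hd0.le _
  have hy0 : 0 < x / d := by positivity
  have hs0 : 0 < √L := Real.sqrt_pos.2 hL0
  have hdD1 : 1 / (d:ℝ) ≤ D := by
    rw [hdD, hd14i]
    refine mul_le_of_le_one_right hD0.le (inv_le_one_of_one_le₀ (Real.one_le_rpow hd1 (by norm_num)))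
  have hRinv : 1 / L ≤ R := by
    rw [hR, one_div, ← Real.rpow_neg_one]
    exact Real.rpow_le_rpow_of_exponent_le hL1 (by norm_num)
  rcases le_or_gt (d : ℝ) (√x) with hds | hds
  · set ℓ := Real.log d with hℓ
    have hℓ0 : 0 ≤ ℓ := Real.log_nonneg hd1
    have hℓL : ℓ ≤ L / 2 := by
      rw [hL, ← Real.log_sqrt hx0.le]; exact Real.log_le_log hd0 hds
    have hy2 : 2 ≤ x / d := by
      rw [le_div_iff₀ hd0]
      have h1 : √x * √x = x := Real.mul_self_sqrt hx0.le
      have h2 : 2 ≤ √x := Real.le_sqrt_of_sq_le (by linarith)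
      nlinarith
    have hlog : Real.log (x / d) = L - ℓ := Real.log_div hx0.ne' hd0.ne'
    have hM0 : L / 2 ≤ L - ℓ := by linarith
    have hM : 0 < L - ℓ := by linarith
    have h1 := hH q (x / d) hy2
    rw [hlog] at h1
    have h2 : (L - ℓ) ^ (-(13/24) : ℝ) ≤ 2 * R := by
      calc (L - ℓ) ^ (-(13/24) : ℝ) ≤ (L / 2) ^ (-(13/24) : ℝ) :=
            Real.rpow_le_rpow_of_nonpos (by positivity) hM0 (by norm_num)
        _ = R * 2 ^ (13/24 : ℝ) := by
            rw [Real.div_rpow hL0.le (by norm_num), Real.rpow_neg (by norm_num : (0:ℝ) ≤ 2), div_inv_eq_mul]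
        _ ≤ R * 2 ^ (1 : ℝ) := by gcongr <;> norm_num
        _ = _ := by rw [Real.rpow_one]; ring
    have h3 : |HQ q (x / d) - c0 * (x / d / √(L - ℓ))| ≤ 2 * K * (x * R) * D := by
      refine h1.trans ?_
      calc K * (x / d * (L - ℓ) ^ (-(13/24) : ℝ)) ≤ K * (x / d * (2 * R)) := by gcongr
        _ = 2 * K * (x * R) * (1 / d) := by ring
        _ ≤ _ := by gcongr
    have hℓd : ℓ ≤ 4 * (d : ℝ) ^ (1/4 : ℝ) := by
      have : ℓ = 4 * Real.log ((d : ℝ) ^ (1/4 : ℝ)) := by rw [Real.log_rpow hd0]; ring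
      rw [this]
      have := Real.log_le_sub_one_of_pos hd14
      linarith
    set s := √L with hs
    set m := √(L - ℓ) with hm
    have hm0 : 0 < m := Real.sqrt_pos.2 hM
    have hs2 : s ^ 2 = L := Real.sq_sqrt hL0.le
    have hm2 : m ^ 2 = L - ℓ := Real.sq_sqrt hM.le
    have hms : m ≤ s := Real.sqrt_le_sqrt (by linarith)
    have hms2 : s / 2 ≤ m := by
      refine Real.le_sqrt_of_sq_le ?_
      rw [div_pow, hs2]; linarith
    have h4 : 1 / m - 1 / s ≤ 2 * ℓ / L := by
      have e : 1 / m - 1 / s = (s ^ 2 - m ^ 2) / (m * s * (s + m)) := by field_simp; ring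
      rw [e, hs2, hm2, div_le_div_iff₀ (by positivity) hL0]
      have hs1 : 1 ≤ s := Real.le_sqrt_of_sq_le (by linarith)
      have : L ≤ 2 * (m * s * (s + m)) := by
        rw [← hs2]
        nlinarith [mul_nonneg (sub_nonneg.2 hms2) hs0.le, mul_pos hm0 hs0, mul_nonneg (sub_nonneg.2 hs1) (mul_pos hm0 hs0).le, mul_pos (mul_pos hm0 hs0) hm0]
      nlinarith
    have h4' : 0 ≤ 1 / m - 1 / s := sub_nonneg.2 (one_div_le_one_div_of_le hm0 hms)
    have h5 : |c0 * (x / d / m) - c0 * (x / d / s)| ≤ 8 * c0 * (x * R) * D := by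
      have e : c0 * (x / d / m) - c0 * (x / d / s) = c0 * (x / d) * (1 / m - 1 / s) := by ring
      rw [e, abs_of_nonneg (by positivity)]
      calc c0 * (x / d) * (1 / m - 1 / s) ≤ c0 * (x / d) * (2 * (4 * (d : ℝ) ^ (1/4 : ℝ)) / L) := by
            refine mul_le_mul_of_nonneg_left (h4.trans ?_) (by positivity)
            gcongr
        _ = 8 * c0 * (x * (1 / L)) * ((1 / d) * (d : ℝ) ^ (1/4 : ℝ)) := by ring
        _ = 8 * c0 * (x * (1 / L)) * D := by
            rw [hdD, hd14i, mul_assoc D, inv_mul_cancel₀ hd14.ne', mul_one]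
        _ ≤ _ := by gcongr
    have h6 : 0 ≤ 8 * (1 + c0) * (x * R) * D := by positivity
    calc _ = |(HQ q (x / d) - c0 * (x / d / m)) + (c0 * (x / d / m) - c0 * (x / d / s))| := by
          congr 1; ring
      _ ≤ _ := abs_add_le _ _
      _ ≤ _ := by linarith
  · have h1 := HQ_nonneg q (x / d)
    have h2 := HQ_le q hy0.le
    have hs1 : 1 ≤ √L := Real.le_sqrt_of_sq_le (by linarith)
    have h3 : x / d / √L ≤ x / d := div_le_self hy0.le hs1
    have h4 : 0 ≤ x / d / √L := by positivity
    have h5 : |HQ q (x / d) - c0 * (x / d / √L)| ≤ (1 + c0) * (x / d) := by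
      have h3' : c0 * (x / d / √L) ≤ c0 * (x / d) := by gcongr
      have h4' : 0 ≤ c0 * (x / d / √L) := by positivity
      rw [abs_le]; constructor <;> linarith
    have h6 : (d : ℝ) ^ (-(1/4) : ℝ) ≤ 8 * R := by
      have e1 : x ^ (1/8 : ℝ) ≤ (d : ℝ) ^ (1/4 : ℝ) := by
        have : x ^ (1/8 : ℝ) = (√x) ^ (1/4 : ℝ) := by
          rw [Real.sqrt_eq_rpow, ← Real.rpow_mul hx0.le]; norm_num
        rw [this]
        exact Real.rpow_le_rpow (by positivity) hds.le (by norm_num)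
      have e2 : L / 8 ≤ x ^ (1/8 : ℝ) := by
        have : L / 8 = Real.log (x ^ (1/8 : ℝ)) := by rw [Real.log_rpow hx0]; ring
        rw [this]
        have := Real.log_le_sub_one_of_pos (show 0 < x ^ (1/8 : ℝ) by positivity)
        linarith
      rw [hd14i]
      calc ((d : ℝ) ^ (1/4 : ℝ))⁻¹ ≤ (L / 8)⁻¹ := inv_anti₀ (by positivity) (e2.trans e1)
        _ = 8 * (1 / L) := by rw [inv_div]; ring
        _ ≤ _ := by gcongr
    have h7 : 0 ≤ (2 * K + 8 * c0) * (x * R) * D := by positivity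
    calc _ ≤ (1 + c0) * (x / d) := h5
      _ = (1 + c0) * x * (D * (d : ℝ) ^ (-(1/4) : ℝ)) := by rw [← hdD]; ring
      _ ≤ (1 + c0) * x * (D * (8 * R)) := by gcongr
      _ = 8 * (1 + c0) * (x * R) * D := by ring
      _ ≤ _ := by rw [add_mul, add_mul]; linarith

/-- The singular series `∑ g(d)/d`. -/
noncomputable def GR (r : ℕ) : ℝ := ∑' d : ℕ, gR r d / d

lemma abs_gR_div_le (r d : ℕ) : |gR r d / d| ≤ gW r d := by
  rcases Nat.eq_zero_or_pos d with rfl | hd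
  · simp [gW]
  · have hd1 : (1:ℝ) ≤ d := by exact_mod_cast hd
    rw [gW, abs_div, div_eq_mul_inv, ← Real.rpow_neg_one, Nat.abs_cast]
    gcongr
    · norm_num

lemma gR_div_summable {r : ℕ} (hs : Summable (gW r)) : Summable fun d : ℕ => gR r d / d :=
  Summable.of_norm_bounded hs (abs_gR_div_le r)

/-- `∑ 1/τ(n)` over `n ≤ x`, `n ≡ q (mod 8)`, `(n, r) = 1`, is `κ_r x / √(log x)` with `κ_r = c₀ ∑ g(d)/d`, up to
a factor `(log x)^{-1/24}` saved in the error term, uniformly in `r` except for `τ(r)`. -/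
lemma SR_asymp : ∃ K : ℝ, 0 < K ∧ ∀ (r : ℕ) (q : (ZMod 8)ˣ) (x : ℝ), r ≠ 0 → 4 ≤ x →
    |SR r q x - c0 * GR r * (x / √(Real.log x))|
      ≤ K * (r.divisors.card : ℝ) * (x * Real.log x ^ (-(13/24) : ℝ)) := by
  obtain ⟨K₁, hK₁, h1⟩ := HQ_uniform
  obtain ⟨K₂, hK₂, h2⟩ := gW_sum_le
  refine ⟨(K₁ + 1) * K₂, by positivity, fun r q x hr hx => ?_⟩
  obtain ⟨hs, hb⟩ := h2 r hr
  have hx0 : 0 < x := by linarith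
  have hL0 : 0 < Real.log x := Real.log_pos (by linarith)
  set E := K₁ * (x * Real.log x ^ (-(13/24) : ℝ)) with hE
  have hE0 : 0 ≤ E := by positivity
  set s := √(Real.log x) with hsd
  have hsum1 : HasSum (fun d : ℕ => gR r d * HQ (qDiv q d) (x / d)) (SR r q x) := by
    rw [SR_eq_sum]
    refine hasSum_sum_of_ne_finset_zero fun d hd => ?_
    rcases Nat.eq_zero_or_pos d with rfl | h0
    · simp
    · have : x / d < 1 := by
        rw [div_lt_one (by exact_mod_cast h0)]
        by_contra hle
        exact hd (Finset.mem_Icc.2 ⟨h0, Nat.le_floor (not_lt.1 hle)⟩)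
      rw [HQ, Nat.floor_eq_zero.2 this]; simp
  have hsum2 : HasSum (fun d : ℕ => gR r d / d * (c0 * (x / s))) (GR r * (c0 * (x / s))) :=
    (gR_div_summable hs).hasSum.mul_right _
  have hsum3 := hsum1.sub hsum2
  have e : SR r q x - c0 * GR r * (x / s) = SR r q x - GR r * (c0 * (x / s)) := by ring
  rw [e, ← hsum3.tsum_eq]
  have hbd : ∀ d : ℕ, ‖gR r d * HQ (qDiv q d) (x / d) - gR r d / d * (c0 * (x / s))‖ ≤ E * gW r d := by
    intro d
    rcases Nat.eq_zero_or_pos d with rfl | h0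
    · simp [gW]
    · have e2 : gR r d * HQ (qDiv q d) (x / d) - gR r d / d * (c0 * (x / s))
          = gR r d * (HQ (qDiv q d) (x / d) - c0 * (x / d / s)) := by ring
      rw [e2, Real.norm_eq_abs, abs_mul, gW]
      calc _ ≤ |gR r d| * (E * (d : ℝ) ^ (-(3/4) : ℝ)) := by
            gcongr
            exact h1 _ x d hx h0
        _ = _ := by ring
  calc _ ≤ ∑' d, E * gW r d := by
        rw [← Real.norm_eq_abs]
        exact tsum_of_norm_bounded (hs.mul_left E).hasSum hbd
    _ = E * ∑' d, gW r d := tsum_mul_left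
    _ ≤ E * (K₂ * r.divisors.card) := by gcongr
    _ = K₁ * (K₂ * r.divisors.card * (x * Real.log x ^ (-(13/24) : ℝ))) := by rw [hE]; ring
    _ ≤ (K₁ + 1) * (K₂ * r.divisors.card * (x * Real.log x ^ (-(13/24) : ℝ))) := by gcongr; linarith
    _ = _ := by ring

/-! ### Euler product of the main constant -/

/-- Cauchy products of power series with bounded coefficients. -/
lemma conv_tsum {u v : ℕ → ℝ} {x : ℝ} (hx0 : 0 ≤ x) (hx1 : x < 1) (hu : ∀ k, |u k| ≤ 2)
    (hv : ∀ k, |v k| ≤ 2) :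
    (∑' k, u k * x ^ k) * (∑' k, v k * x ^ k)
      = ∑' k, (∑ y ∈ antidiagonal k, u y.1 * v y.2) * x ^ k := by
  have hs : ∀ w : ℕ → ℝ, (∀ k, |w k| ≤ 2) → Summable fun k => ‖w k * x ^ k‖ := by
    intro w hw
    refine Summable.of_nonneg_of_le (fun k => norm_nonneg _) (fun k => ?_)
      ((summable_geometric_of_lt_one hx0 hx1).mul_left 2)
    rw [Real.norm_eq_abs, abs_mul, abs_of_nonneg (by positivity : 0 ≤ x ^ k)]
    gcongr
    exact hw k
  rw [tsum_mul_tsum_eq_tsum_sum_antidiagonal_of_summable_norm (hs u hu) (hs v hv)]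
  refine tsum_congr fun k => ?_
  rw [Finset.sum_mul]
  refine Finset.sum_congr rfl fun y hy => ?_
  rw [← Finset.HasAntidiagonal.mem_antidiagonal.1 hy, pow_add]; ring

lemma abs_cHalf_le (k : ℕ) : |cHalf k| ≤ 2 := by
  rw [abs_of_pos (cHalf_pos k)]; linarith [cHalf_le_one k]

lemma abs_eHalf_le (k : ℕ) : |eHalf k| ≤ 2 := by
  cases k with
  | zero => rw [eHalf_zero]; norm_num
  | succ k => linarith [abs_eHalf_succ_le k]

/-- `∑ e_k x^k = (1 - x)^{1/2}`. -/
lemma tsum_eHalf {x : ℝ} (hx0 : 0 ≤ x) (hx1 : x < 1) :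
    ∑' k, eHalf k * x ^ k = (1 - x) ^ ((1:ℝ)/2) := by
  set C := ∑' k, cHalf k * x ^ k with hC
  have hCC : C * C = (1 - x)⁻¹ := by
    rw [hC, conv_tsum hx0 hx1 abs_cHalf_le abs_cHalf_le]
    simp only [cHalf_conv, one_mul]
    exact tsum_geometric_of_lt_one hx0 hx1
  have hC0 : 0 ≤ C := tsum_nonneg fun k => mul_nonneg (cHalf_pos k).le (by positivity)
  have hCE : C * ∑' k, eHalf k * x ^ k = 1 := by
    rw [hC, conv_tsum hx0 hx1 abs_cHalf_le abs_eHalf_le, tsum_eq_single 0]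
    · simp [cHalf_zero, eHalf_zero]
    · intro k hk
      obtain ⟨j, rfl⟩ := Nat.exists_eq_succ_of_ne_zero hk
      rw [Nat.succ_eq_add_one, eHalf_conv_succ, zero_mul]
  set E := ∑' k, eHalf k * x ^ k with hE
  have hE0 : 0 ≤ E := by
    by_contra h
    nlinarith
  have hEE : E ^ 2 = 1 - x := by
    have h1 : (C * C) * E ^ 2 = 1 := by
      calc _ = (C * E) ^ 2 := by ring
        _ = 1 := by rw [hCE]; norm_num
    rw [hCC, inv_mul_eq_one₀ (by linarith)] at h1
    exact h1.symm
  rw [← hEE, ← Real.sqrt_eq_rpow, Real.sqrt_sq hE0]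

lemma abs_inv_succ_le (k : ℕ) : |1 / ((k : ℝ) + 1)| ≤ 2 := by
  rw [abs_of_nonneg (by positivity), div_le_iff₀ (by positivity)]
  linarith [(Nat.cast_nonneg k : (0:ℝ) ≤ k)]

lemma tsum_wHalf {x : ℝ} (hx0 : 0 ≤ x) (hx1 : x < 1) :
    ∑' k, wHalf k * x ^ k = (1 - x) ^ ((1:ℝ)/2) * ∑' k : ℕ, 1 / ((k : ℝ) + 1) * x ^ k := by
  rw [← tsum_eHalf hx0 hx1, conv_tsum hx0 hx1 abs_eHalf_le abs_inv_succ_le]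
  rfl

lemma fP_eq {p : ℕ} (hp : p.Prime) : fP p = ∑' k : ℕ, 1 / ((k : ℝ) + 1) * (1 / (p : ℝ)) ^ k := by
  have hp1 : (1:ℝ) < p := by exact_mod_cast hp.one_lt
  have hx1 : 1 / (p : ℝ) < 1 := by rw [div_lt_one (by linarith)]; exact hp1
  have hs : Summable fun k : ℕ => 1 / ((k : ℝ) + 1) * (1 / (p : ℝ)) ^ k := by
    refine Summable.of_nonneg_of_le (fun k => by positivity) (fun k => ?_)
      (summable_geometric_of_lt_one (by positivity) hx1)
    refine mul_le_of_le_one_left (by positivity) ?_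
    rw [div_le_one (by positivity)]; linarith [(Nat.cast_nonneg k : (0:ℝ) ≤ k)]
  rw [hs.tsum_eq_zero_add, fP]
  simp only [Nat.cast_zero, zero_add, pow_zero, div_one, mul_one]
  congr 1
  refine tsum_congr fun k => ?_
  push_cast
  rw [one_div_pow, one_div_mul_one_div]
  ring_nf

lemma fP_pos (p : ℕ) : 0 < fP p := by
  unfold fP
  have : 0 ≤ ∑' j : ℕ, 1 / (((j : ℝ) + 2) * (p : ℝ) ^ (j + 1)) := tsum_nonneg fun j => by positivity
  linarith

/-- The constant `κ_r = c₀ ∑ g(d)/d` by its Euler product: each local factor of `f₀` appears, divided by `f_p`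
at the primes `p ∣ 2r`; the missing prime `2` accounts for the factor `√2` in `c₀`. -/
lemma c0_mul_GR {r : ℕ} (hr : Odd r) (hs : Summable (gW r)) :
    c0 * GR r = f0 / (4 * ∏ p ∈ (2 * r).primeFactors, fP p) := by
  have hr0 : r ≠ 0 := by rintro rfl; simp at hr
  have h2r : ¬ 2 ∣ r := fun h => (Nat.not_even_iff_odd.2 hr) (even_iff_two_dvd.2 h)
  have hprod : HasProd (fun p : Nat.Primes => ∑' e : ℕ, gR r ((p : ℕ) ^ e) / (((p : ℕ) ^ e : ℕ) : ℝ)) (GR r) := by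
    refine EulerProduct.eulerProduct_hasProd (f := fun d : ℕ => gR r d / (d : ℝ)) ?_ ?_ ?_ ?_
    · simp [(gR_isMultiplicative r).1]
    · intro m n h
      rw [(gR_isMultiplicative r).2 h, Nat.cast_mul, mul_div_mul_comm]
    · exact (gR_div_summable hs).norm
    · simp
  set b : ℕ → ℝ := fun p => if p = 2 then fP 2 * (1/2 : ℝ) ^ ((1:ℝ)/2) else if p ∣ r then fP p else 1 with hb
  have hbprod : HasProd (fun p : Nat.Primes => b p) (∏ p ∈ (2 * r).primeFactors, b p) := by
    have e : ∏ p ∈ (2 * r).primeFactors, b p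
        = ∏ p ∈ Finset.subtype Nat.Prime (2 * r).primeFactors, b p :=
      (Finset.prod_subtype_of_mem b fun p hp => Nat.prime_of_mem_primeFactors hp).symm
    rw [e]
    refine hasProd_prod_of_ne_finset_one fun p hp => ?_
    have hp' : (p : ℕ) ∉ (2 * r).primeFactors := fun h => hp (Finset.mem_subtype.2 h)
    have h3 : ¬ (p : ℕ) ∣ 2 * r := fun h => hp' (Nat.mem_primeFactors.2 ⟨p.2, h, by positivity⟩)
    have h4 : (p : ℕ) ≠ 2 := fun h => h3 (h ▸ dvd_mul_right 2 r)
    simp only [hb]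
    rw [if_neg h4, if_neg (fun h => h3 (h.mul_left 2))]
  have hF := hprod.mul hbprod
  have hloc : ∀ p : Nat.Primes, (∑' e : ℕ, gR r ((p : ℕ) ^ e) / (((p : ℕ) ^ e : ℕ) : ℝ)) * b p
      = fP p * (1 - 1 / (p : ℝ)) ^ ((1:ℝ)/2) := by
    rintro ⟨p, hp⟩
    simp only
    have hp1 : (1:ℝ) < p := by exact_mod_cast hp.one_lt
    have hx1 : 1 / (p : ℝ) < 1 := by rw [div_lt_one (by linarith)]; exact hp1
    have e1 : ∀ e : ℕ, gR r (p ^ e) / ((p ^ e : ℕ) : ℝ) = gU r p e * (1 / (p:ℝ)) ^ e := by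
      intro e
      rw [gR_prime_pow r hp, Nat.cast_pow, one_div_pow]; ring
    simp only [e1, hb]
    by_cases h2 : p = 2
    · subst h2
      rw [if_pos rfl, tsum_eq_single 0]
      · simp [gU]; left; norm_num
      · intro k hk; simp [gU, hk]
    · rw [if_neg h2]
      by_cases h3 : p ∣ r
      · rw [if_pos h3]
        have : ∀ j, gU r p j = eHalf j := by
          intro j; rw [gU]; split_ifs with h; · rw [h, eHalf_zero]
          rfl
        simp only [this]
        rw [tsum_eHalf (by positivity) hx1, mul_comm]
      · rw [if_neg h3, mul_one]
        have : ∀ j, gU r p j = wHalf j := by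
          intro j; rw [gU]; split_ifs with h; · rw [h, wHalf_zero]
          rfl
        simp only [this]
        rw [tsum_wHalf (by positivity) hx1, ← fP_eq hp, mul_comm]
  simp only [hloc] at hF
  have hb2 : ∏ p ∈ (2 * r).primeFactors, b p
      = (1/2 : ℝ) ^ ((1:ℝ)/2) * ∏ p ∈ (2 * r).primeFactors, fP p := by
    have hm : 2 ∈ (2 * r).primeFactors := Nat.mem_primeFactors.2 ⟨Nat.prime_two, dvd_mul_right 2 r, by positivity⟩
    rw [← Finset.mul_prod_erase _ _ hm, ← Finset.mul_prod_erase _ (fun p => fP p) hm]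
    have : ∏ p ∈ (2 * r).primeFactors.erase 2, b p = ∏ p ∈ (2 * r).primeFactors.erase 2, fP p := by
      refine Finset.prod_congr rfl fun p hp => ?_
      obtain ⟨h2, h3⟩ := Finset.mem_erase.1 hp
      have h4 : p ∣ r := by
        have hpp := Nat.prime_of_mem_primeFactors h3
        rcases (Nat.Prime.dvd_mul hpp).1 (Nat.dvd_of_mem_primeFactors h3) with h | h
        · exact absurd ((Nat.prime_dvd_prime_iff_eq hpp Nat.prime_two).1 h) h2
        · exact h
      simp only [hb]; rw [if_neg h2, if_pos h4]
    rw [this]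
    simp only [hb, if_true]; ring
  have hP : 0 < ∏ p ∈ (2 * r).primeFactors, fP p := Finset.prod_pos fun p _ => fP_pos p
  have hf0 : f0 = 1 / √Real.pi * (GR r * ((1/2 : ℝ) ^ ((1:ℝ)/2) * ∏ p ∈ (2 * r).primeFactors, fP p)) := by
    rw [f0, hF.tprod_eq, hb2]
  have hpi : 0 < √Real.pi := Real.sqrt_pos.2 Real.pi_pos
  rw [hf0, ← Real.sqrt_eq_rpow, Real.sqrt_div (by norm_num), Real.sqrt_one, c0]
  have h22 : √2 * √2 = (2:ℝ) := Real.mul_self_sqrt (by norm_num)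
  have h20 : 0 < √(2:ℝ) := by positivity
  field_simp
  rw [pow_two, h22]; ring

/-! ### Summation by parts for weighted systems -/

/-- The weight of the part `m ≤ t` of a finite weighted system `(s, w, m)`. -/
noncomputable def cnt {ι : Type*} (s : Finset ι) (w m : ι → ℝ) (t : ℝ) : ℝ :=
  ∑ i ∈ s, if m i ≤ t then w i else 0

lemma cnt_nonneg {ι : Type*} {s : Finset ι} {w m : ι → ℝ} (hw : ∀ i ∈ s, 0 ≤ w i) (t : ℝ) :
    0 ≤ cnt s w m t :=
  Finset.sum_nonneg fun i hi => by split_ifs; exacts [hw i hi, le_rfl]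

lemma step_intervalIntegrable {f : ℝ → ℝ} {Y : ℝ} (hf : ContinuousOn f (Set.Icc 1 Y)) (hY : 1 ≤ Y)
    (m : ℝ) : IntervalIntegrable (fun t => if m ≤ t then f t else 0) MeasureTheory.volume 1 Y := by
  rw [intervalIntegrable_iff_integrableOn_Icc_of_le hY]
  have h : MeasureTheory.IntegrableOn f (Set.Icc 1 Y) := hf.integrableOn_Icc
  exact (h.indicator (measurableSet_Ici (a := m))).congr
    (Filter.Eventually.of_forall fun t => by simp [Set.indicator, Set.mem_Ici])

/-- `∫_m^Y f` as an integral of a step times `f` over `[1, Y]`. -/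
lemma step_integral {f : ℝ → ℝ} {Y : ℝ} (hf : ContinuousOn f (Set.Icc 1 Y))
    (m : ℝ) (hm : 1 ≤ m) (hmY : m ≤ Y) :
    ∫ t in (1:ℝ)..Y, (if m ≤ t then f t else 0) = ∫ t in m..Y, f t := by
  have hi := step_intervalIntegrable hf (hm.trans hmY) m
  have h1 : IntervalIntegrable (fun t => if m ≤ t then f t else 0) MeasureTheory.volume 1 m :=
    hi.mono_set (by rw [Set.uIcc_of_le hm, Set.uIcc_of_le (hm.trans hmY)]; exact Set.Icc_subset_Icc_right hmY)
  have h2 : IntervalIntegrable (fun t => if m ≤ t then f t else 0) MeasureTheory.volume m Y :=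
    hi.mono_set (by rw [Set.uIcc_of_le hmY, Set.uIcc_of_le (hm.trans hmY)]; exact Set.Icc_subset_Icc_left hm)
  rw [← intervalIntegral.integral_add_adjacent_intervals h1 h2]
  have e1 : ∫ t in (1:ℝ)..m, (if m ≤ t then f t else 0) = 0 := by
    rw [intervalIntegral.integral_of_le hm,
      MeasureTheory.integral_Ioc_eq_integral_Ioo]
    rw [MeasureTheory.setIntegral_congr_fun (g := fun _ => (0:ℝ)) measurableSet_Ioo]
    · simp
    · intro t ht; exact if_neg (not_le.2 ht.2)
  have e2 : ∫ t in m..Y, (if m ≤ t then f t else 0) = ∫ t in m..Y, f t := by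
    refine intervalIntegral.integral_congr fun t ht => ?_
    rw [Set.uIcc_of_le hmY] at ht
    exact if_pos ht.1
  rw [e1, e2, zero_add]

lemma cnt_mul_eq {ι : Type*} (s : Finset ι) (w m : ι → ℝ) (f : ℝ → ℝ) (t : ℝ) :
    cnt s w m t * f t = ∑ i ∈ s, w i * (if m i ≤ t then f t else 0) := by
  rw [cnt, Finset.sum_mul]
  exact Finset.sum_congr rfl fun i _ => by split_ifs <;> simp

lemma cnt_mul_intervalIntegrable {ι : Type*} {s : Finset ι} {w m : ι → ℝ}
    {f : ℝ → ℝ} {Y : ℝ} (hY : 1 ≤ Y) (hf : ContinuousOn f (Set.Icc 1 Y)) :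
    IntervalIntegrable (fun t => cnt s w m t * f t) MeasureTheory.volume 1 Y := by
  have : (fun t => cnt s w m t * f t) = ∑ i ∈ s, fun t => w i * (if m i ≤ t then f t else 0) := by
    funext t; rw [cnt_mul_eq, Finset.sum_apply]
  rw [this]
  exact IntervalIntegrable.sum _ fun i _ => (step_intervalIntegrable hf hY (m i)).const_mul _

/-- Summation by parts for finite weighted systems. -/
lemma cnt_abel {ι : Type*} {s : Finset ι} {w m : ι → ℝ} (hm : ∀ i ∈ s, 1 ≤ m i)
    {F f : ℝ → ℝ} {Y : ℝ} (hY : 1 ≤ Y) (hf : ContinuousOn f (Set.Icc 1 Y))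
    (hF : ∀ t ∈ Set.Icc 1 Y, HasDerivAt F (-f t) t) :
    ∑ i ∈ s, (if m i ≤ Y then w i * F (m i) else 0)
      = cnt s w m Y * F Y + ∫ t in (1:ℝ)..Y, cnt s w m t * f t := by
  simp only [cnt_mul_eq]
  rw [intervalIntegral.integral_finsetSum
    (fun i _ => (step_intervalIntegrable hf hY (m i)).const_mul _),
    ← Finset.sum_add_distrib]
  refine Finset.sum_congr rfl fun i hi => ?_
  rw [intervalIntegral.integral_const_mul]
  by_cases hiY : m i ≤ Y
  · rw [if_pos hiY, if_pos hiY, step_integral hf _ (hm i hi) hiY]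
    have hsub : Set.uIcc (m i) Y ⊆ Set.Icc 1 Y := by
      rw [Set.uIcc_of_le hiY]; exact Set.Icc_subset_Icc_left (hm i hi)
    have h1 : ∫ t in (m i)..Y, -f t = F Y - F (m i) :=
      intervalIntegral.integral_eq_sub_of_hasDerivAt (fun t ht => hF t (hsub ht))
        ((hf.mono hsub).neg.intervalIntegrable)
    rw [intervalIntegral.integral_neg] at h1
    have h2 : ∫ t in (m i)..Y, f t = F (m i) - F Y := by linarith
    rw [h2]; ring
  · rw [if_neg hiY, if_neg hiY, mul_zero, zero_add]
    have : ∫ t in (1:ℝ)..Y, (if m i ≤ t then f t else 0) = 0 := by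
      rw [intervalIntegral.integral_congr (g := fun _ => (0:ℝ))]
      · simp
      · intro t ht
        rw [Set.uIcc_of_le hY] at ht
        exact if_neg (not_le.2 (ht.2.trans_lt (not_le.1 hiY)))
    rw [this, mul_zero]

/-! ### Sums of `w / m²` over a weighted system -/

/-- The hypotheses on the counting function `α` of a weighted system: an upper bound of the right order
for all `u ≥ 1`, an asymptotic formula with main term `a u² / log u` on the range `[T, Z]`, and a bound for
the constant `a`, all with the same `E`. -/
structure CntHyp (α : ℝ → ℝ) (E a T Z : ℝ) : Prop where
  upper : ∀ u, 1 ≤ u → α u ≤ E * (u ^ 2 / (1 + Real.log u))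
  asymp : ∀ u, T ≤ u → u ≤ Z →
    |α u - a * (u ^ 2 / Real.log u)| ≤ E * (u ^ 2 / Real.log u ^ ((25:ℝ) / 24))
  bound : |a| ≤ E

lemma CntHyp.E_nonneg {α : ℝ → ℝ} {E a T Z : ℝ} (h : CntHyp α E a T Z) : 0 ≤ E :=
  (abs_nonneg a).trans h.bound

/-- The sum of `w / m²` over `m ≤ Y`. -/
noncomputable def invSq {ι : Type*} (s : Finset ι) (w m : ι → ℝ) (Y : ℝ) : ℝ :=
  ∑ i ∈ s, if m i ≤ Y then w i * (1 / m i ^ 2) else 0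

lemma hasDerivAt_inv_sq {t : ℝ} (ht : 1 ≤ t) :
    HasDerivAt (fun t : ℝ => 1 / t ^ 2) (-(2 / t ^ 3)) t := by
  have h0 : t ≠ 0 := by positivity
  have h := (hasDerivAt_pow 2 t).inv (pow_ne_zero 2 h0)
  have e : (fun t : ℝ => 1 / t ^ 2) = (fun t : ℝ => t ^ 2)⁻¹ := by
    funext x; simp
  rw [e]
  refine h.congr_deriv ?_
  field_simp
  norm_num
  ring

lemma hasDerivAt_log_div_sq {t : ℝ} (ht : 1 ≤ t) :
    HasDerivAt (fun t : ℝ => Real.log t / t ^ 2) (-((2 * Real.log t - 1) / t ^ 3)) t := by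
  have h0 : t ≠ 0 := by positivity
  have h := (Real.hasDerivAt_log h0).div (hasDerivAt_pow 2 t) (pow_ne_zero 2 h0)
  refine h.congr_deriv ?_
  field_simp
  push_cast
  ring

lemma continuousOn_div_cube (Y : ℝ) : ContinuousOn (fun t : ℝ => 2 / t ^ 3) (Set.Icc 1 Y) := by
  refine continuousOn_const.div (continuousOn_id.pow 3) fun t ht => ?_
  have : (0:ℝ) < t := by linarith [ht.1]
  exact pow_ne_zero 3 (ne_of_gt this)

lemma continuousOn_log_div_cube (Y : ℝ) :
    ContinuousOn (fun t : ℝ => (2 * Real.log t - 1) / t ^ 3) (Set.Icc 1 Y) := by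
  refine ContinuousOn.div ?_ (continuousOn_id.pow 3) fun t ht => ?_
  · exact ((continuousOn_const.mul (Real.continuousOn_log.mono fun t ht => by
      have : (0:ℝ) < t := by linarith [ht.1]
      exact this.ne')).sub continuousOn_const)
  · have : (0:ℝ) < t := by linarith [ht.1]
    exact pow_ne_zero 3 (ne_of_gt this)

/-- `∫_1^T dt / (t (1 + log t)) = log (1 + log T)`. -/
lemma integral_inv_one_add_log {T : ℝ} (hT : 1 ≤ T) :
    IntervalIntegrable (fun t : ℝ => 1 / (t * (1 + Real.log t))) MeasureTheory.volume 1 T ∧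
    ∫ t in (1:ℝ)..T, 1 / (t * (1 + Real.log t)) = Real.log (1 + Real.log T) := by
  have hpos : ∀ t ∈ Set.uIcc 1 T, 0 < t ∧ 0 < 1 + Real.log t := by
    intro t ht
    rw [Set.uIcc_of_le hT] at ht
    have := Real.log_nonneg ht.1
    exact ⟨by linarith [ht.1], by linarith⟩
  have hi : IntervalIntegrable (fun t : ℝ => 1 / (t * (1 + Real.log t))) MeasureTheory.volume 1 T := by
    apply ContinuousOn.intervalIntegrable
    refine continuousOn_const.div (continuousOn_id.mul (continuousOn_const.add
      (Real.continuousOn_log.mono fun t ht => (hpos t ht).1.ne'))) fun t ht => ?_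
    exact (mul_pos (hpos t ht).1 (hpos t ht).2).ne'
  refine ⟨hi, ?_⟩
  rw [intervalIntegral.integral_eq_sub_of_hasDerivAt (f := fun t => Real.log (1 + Real.log t)) ?_ hi]
  · simp
  · intro t ht
    obtain ⟨h1, h2⟩ := hpos t ht
    have h := ((Real.hasDerivAt_log h1.ne').const_add 1).log h2.ne'
    refine h.congr_deriv ?_
    field_simp

/-- `∫_T^Y dt / (t log t) = log log Y - log log T`. -/
lemma integral_inv_mul_log {T Y : ℝ} (hT : 1 < T) (hTY : T ≤ Y) :
    IntervalIntegrable (fun t : ℝ => 1 / (t * Real.log t)) MeasureTheory.volume T Y ∧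
    ∫ t in T..Y, 1 / (t * Real.log t) = Real.log (Real.log Y) - Real.log (Real.log T) := by
  have hpos : ∀ t ∈ Set.uIcc T Y, 0 < t ∧ 0 < Real.log t := by
    intro t ht
    rw [Set.uIcc_of_le hTY] at ht
    have := Real.log_pos (hT.trans_le ht.1)
    exact ⟨by linarith [ht.1], by linarith⟩
  have hi : IntervalIntegrable (fun t : ℝ => 1 / (t * Real.log t)) MeasureTheory.volume T Y := by
    apply ContinuousOn.intervalIntegrable
    refine continuousOn_const.div (continuousOn_id.mul
      (Real.continuousOn_log.mono fun t ht => (hpos t ht).1.ne')) fun t ht => ?_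
    exact (mul_pos (hpos t ht).1 (hpos t ht).2).ne'
  refine ⟨hi, ?_⟩
  rw [intervalIntegral.integral_eq_sub_of_hasDerivAt (f := fun t => Real.log (Real.log t)) ?_ hi]
  intro t ht
  obtain ⟨h1, h2⟩ := hpos t ht
  have h := (Real.hasDerivAt_log h1.ne').log h2.ne'
  refine h.congr_deriv ?_
  field_simp

/-- `∫_T^Y dt / (t (log t)^{25/24}) ≤ 24` for `T ≥ e`. -/
lemma integral_inv_mul_log_rpow {T Y : ℝ} (hT : 1 ≤ Real.log T) (hT1 : 1 < T) (hTY : T ≤ Y) :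
    IntervalIntegrable (fun t : ℝ => 1 / (t * Real.log t ^ ((25:ℝ) / 24))) MeasureTheory.volume T Y ∧
    ∫ t in T..Y, 1 / (t * Real.log t ^ ((25:ℝ) / 24)) ≤ 24 := by
  have hpos : ∀ t ∈ Set.uIcc T Y, 0 < t ∧ 0 < Real.log t := by
    intro t ht
    rw [Set.uIcc_of_le hTY] at ht
    have := Real.log_pos (hT1.trans_le ht.1)
    exact ⟨by linarith [ht.1], by linarith⟩
  have hi : IntervalIntegrable (fun t : ℝ => 1 / (t * Real.log t ^ ((25:ℝ) / 24)))
      MeasureTheory.volume T Y := by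
    apply ContinuousOn.intervalIntegrable
    refine continuousOn_const.div (continuousOn_id.mul
      ((Real.continuousOn_log.mono fun t ht => (hpos t ht).1.ne').rpow_const
        fun t ht => Or.inl (hpos t ht).2.ne')) fun t ht => ?_
    exact (mul_pos (hpos t ht).1 (Real.rpow_pos_of_pos (hpos t ht).2 _)).ne'
  refine ⟨hi, ?_⟩
  rw [intervalIntegral.integral_eq_sub_of_hasDerivAt
    (f := fun t => -24 * Real.log t ^ (-(1:ℝ) / 24)) ?_ hi]
  · have h1 : Real.log T ^ (-(1:ℝ) / 24) ≤ 1 :=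
      Real.rpow_le_one_of_one_le_of_nonpos hT (by norm_num)
    have h2 : 0 ≤ Real.log Y ^ (-(1:ℝ) / 24) :=
      Real.rpow_nonneg (Real.log_nonneg (hT1.le.trans hTY)) _
    linarith
  · intro t ht
    obtain ⟨h1, h2⟩ := hpos t ht
    have h := (((Real.hasDerivAt_log h1.ne').rpow_const (p := -(1:ℝ) / 24)
      (Or.inl h2.ne')).const_mul (-24))
    refine h.congr_deriv ?_
    have e : Real.log t ^ (-(1:ℝ) / 24 - 1) = (Real.log t ^ ((25:ℝ) / 24))⁻¹ := by
      rw [← Real.rpow_neg h2.le]; norm_num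
    rw [e]
    field_simp

section Hyperbola

variable {ι : Type*} {s : Finset ι} {w m : ι → ℝ} {E a T Z Y : ℝ}

/-- Asymptotics of `∑ w / m²` over `m ≤ Y` by partial summation: the range `[1, T]` is controlled by
the upper bound, the range `[T, Y]` by the asymptotic formula. -/
lemma invSq_asymp (hw : ∀ i ∈ s, 0 ≤ w i) (hm : ∀ i ∈ s, 1 ≤ m i)
    (h : CntHyp (cnt s w m) E a T Z) (hT : 1 ≤ Real.log T) (hT1 : 1 < T) (hTY : T ≤ Y)
    (hYZ : Y ≤ Z) :
    |invSq s w m Y - 2 * a * (Real.log (Real.log Y) - Real.log (Real.log T))|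
      ≤ E * (49 + 2 * Real.log (1 + Real.log T)) := by
  have hE := h.E_nonneg
  have hY1 : 1 ≤ Y := hT1.le.trans hTY
  have hV : invSq s w m Y = cnt s w m Y * (1 / Y ^ 2) + ∫ t in (1:ℝ)..Y, cnt s w m t * (2 / t ^ 3) :=
    cnt_abel (F := fun t => 1 / t ^ 2) (f := fun t => 2 / t ^ 3) hm hY1 (continuousOn_div_cube Y)
      fun t ht => hasDerivAt_inv_sq ht.1
  have hii := cnt_mul_intervalIntegrable (s := s) (w := w) (m := m) hY1 (continuousOn_div_cube Y)
  have hi1 : IntervalIntegrable (fun t => cnt s w m t * (2 / t ^ 3)) MeasureTheory.volume 1 T :=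
    hii.mono_set (by rw [Set.uIcc_of_le hT1.le, Set.uIcc_of_le hY1]
                     exact Set.Icc_subset_Icc_right hTY)
  have hi2 : IntervalIntegrable (fun t => cnt s w m t * (2 / t ^ 3)) MeasureTheory.volume T Y :=
    hii.mono_set (by rw [Set.uIcc_of_le hTY, Set.uIcc_of_le hY1]
                     exact Set.Icc_subset_Icc_left hT1.le)
  rw [← intervalIntegral.integral_add_adjacent_intervals hi1 hi2] at hV
  have b0 : 0 ≤ cnt s w m Y * (1 / Y ^ 2) := mul_nonneg (cnt_nonneg hw Y) (by positivity)
  have b1 : cnt s w m Y * (1 / Y ^ 2) ≤ E := by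
    have hl := Real.log_nonneg hY1
    calc cnt s w m Y * (1 / Y ^ 2) ≤ E * (Y ^ 2 / (1 + Real.log Y)) * (1 / Y ^ 2) := by
          gcongr; exact h.upper Y hY1
      _ = E * (1 / (1 + Real.log Y)) := by field_simp
      _ ≤ E * 1 := by
          gcongr
          rw [div_le_one (by linarith)]; linarith
      _ = E := mul_one E
  have c0 : 0 ≤ ∫ t in (1:ℝ)..T, cnt s w m t * (2 / t ^ 3) :=
    intervalIntegral.integral_nonneg hT1.le fun t ht =>
      mul_nonneg (cnt_nonneg hw t) (by have : 0 < t := by linarith [ht.1]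
                                       positivity)
  have c1 : ∫ t in (1:ℝ)..T, cnt s w m t * (2 / t ^ 3) ≤ 2 * E * Real.log (1 + Real.log T) := by
    obtain ⟨hj, he⟩ := integral_inv_one_add_log hT1.le
    rw [← he, ← intervalIntegral.integral_const_mul]
    refine intervalIntegral.integral_mono_on hT1.le hi1 (hj.const_mul _) fun t ht => ?_
    have h0 : 0 < t := by linarith [ht.1]
    have hl := Real.log_nonneg ht.1
    calc cnt s w m t * (2 / t ^ 3) ≤ E * (t ^ 2 / (1 + Real.log t)) * (2 / t ^ 3) := by
          gcongr; exact h.upper t ht.1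
      _ = 2 * E * (1 / (t * (1 + Real.log t))) := by field_simp
  have d1 : |(∫ t in T..Y, cnt s w m t * (2 / t ^ 3))
      - 2 * a * (Real.log (Real.log Y) - Real.log (Real.log T))| ≤ 48 * E := by
    obtain ⟨hj, he⟩ := integral_inv_mul_log hT1 hTY
    obtain ⟨hk, hle⟩ := integral_inv_mul_log_rpow hT hT1 hTY
    rw [← he, ← intervalIntegral.integral_const_mul, ← intervalIntegral.integral_sub hi2
      (hj.const_mul _)]
    calc |∫ t in T..Y, (cnt s w m t * (2 / t ^ 3) - 2 * a * (1 / (t * Real.log t)))|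
        ≤ ∫ t in T..Y, 2 * E * (1 / (t * Real.log t ^ ((25:ℝ) / 24))) := by
          rw [← Real.norm_eq_abs]
          refine intervalIntegral.norm_integral_le_of_norm_le hTY ?_ (hk.const_mul _)
          refine Filter.Eventually.of_forall fun t ht => ?_
          have h0 : 0 < t := by linarith [ht.1]
          have hl : 0 < Real.log t := Real.log_pos (hT1.trans ht.1)
          have hlr : 0 < Real.log t ^ ((25:ℝ) / 24) := Real.rpow_pos_of_pos hl _
          have e1 : cnt s w m t * (2 / t ^ 3) - 2 * a * (1 / (t * Real.log t))
              = (cnt s w m t - a * (t ^ 2 / Real.log t)) * (2 / t ^ 3) := by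
            field_simp
          rw [Real.norm_eq_abs, e1, abs_mul, abs_of_pos (a := 2 / t ^ 3) (by positivity)]
          calc |cnt s w m t - a * (t ^ 2 / Real.log t)| * (2 / t ^ 3)
              ≤ E * (t ^ 2 / Real.log t ^ ((25:ℝ) / 24)) * (2 / t ^ 3) := by
                gcongr; exact h.asymp t ht.1.le (ht.2.trans hYZ)
            _ = _ := by field_simp
      _ = 2 * E * ∫ t in T..Y, (1 / (t * Real.log t ^ ((25:ℝ) / 24))) :=
          intervalIntegral.integral_const_mul _ _
      _ ≤ 2 * E * 24 := by gcongr
      _ = 48 * E := by ring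
  rw [hV]
  rw [abs_le] at d1 ⊢
  have : 0 ≤ Real.log (1 + Real.log T) := Real.log_nonneg (by linarith)
  constructor <;> nlinarith [d1.1, d1.2, mul_nonneg hE this]

/-- `∑ w log m / m²` over `m ≤ Y` is at most `E (1 + 2 log Y)`: no double logarithm is lost. -/
lemma log_sum_le (hw : ∀ i ∈ s, 0 ≤ w i) (hm : ∀ i ∈ s, 1 ≤ m i)
    (hE : 0 ≤ E) (hup : ∀ u, 1 ≤ u → cnt s w m u ≤ E * (u ^ 2 / (1 + Real.log u))) (hY : 1 ≤ Y) :
    ∑ i ∈ s, (if m i ≤ Y then w i * (Real.log (m i) / m i ^ 2) else 0)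
      ≤ E * (1 + 2 * Real.log Y) := by
  rw [cnt_abel (F := fun t => Real.log t / t ^ 2) (f := fun t => (2 * Real.log t - 1) / t ^ 3) hm hY
    (continuousOn_log_div_cube Y) fun t ht => hasDerivAt_log_div_sq ht.1]
  have hl := Real.log_nonneg hY
  have b1 : cnt s w m Y * (Real.log Y / Y ^ 2) ≤ E := by
    calc cnt s w m Y * (Real.log Y / Y ^ 2)
        ≤ E * (Y ^ 2 / (1 + Real.log Y)) * (Real.log Y / Y ^ 2) := by
          gcongr; exact hup Y hY
      _ = E * (Real.log Y / (1 + Real.log Y)) := by field_simp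
      _ ≤ E * 1 := by
          gcongr
          rw [div_le_one (by linarith)]; linarith
      _ = E := mul_one E
  have b2 : ∫ t in (1:ℝ)..Y, cnt s w m t * ((2 * Real.log t - 1) / t ^ 3)
      ≤ ∫ t in (1:ℝ)..Y, 2 * E * t⁻¹ := by
    refine intervalIntegral.integral_mono_on hY
      (cnt_mul_intervalIntegrable hY (continuousOn_log_div_cube Y)) ?_ fun t ht => ?_
    · refine (intervalIntegral.intervalIntegrable_inv (fun t ht => ?_) continuousOn_id).const_mul _
      rw [Set.uIcc_of_le hY] at ht
      have : 0 < t := by linarith [ht.1]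
      exact this.ne'
    have h0 : 0 < t := by linarith [ht.1]
    have hlt := Real.log_nonneg ht.1
    calc cnt s w m t * ((2 * Real.log t - 1) / t ^ 3)
        ≤ cnt s w m t * ((2 * Real.log t) / t ^ 3) := by
          refine mul_le_mul_of_nonneg_left ?_ (cnt_nonneg hw t)
          gcongr; linarith
      _ ≤ E * (t ^ 2 / (1 + Real.log t)) * ((2 * Real.log t) / t ^ 3) := by
          gcongr; exact hup t ht.1
      _ = 2 * E * t⁻¹ * (Real.log t / (1 + Real.log t)) := by field_simp
      _ ≤ 2 * E * t⁻¹ * 1 := by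
          gcongr
          rw [div_le_one (by linarith)]; linarith
      _ = 2 * E * t⁻¹ := mul_one _
  rw [intervalIntegral.integral_const_mul, integral_inv_of_pos one_pos (by linarith), div_one] at b2
  linarith

end Hyperbola

/-! ### The hyperbola method for two weighted systems -/

/-- The cut `T₀ = exp (exp √(log log Z))` below which only upper bounds are used. -/
noncomputable def cutT (Z : ℝ) : ℝ := Real.exp (Real.exp (Real.sqrt (Real.log (Real.log Z))))

section Hyperbola

variable {ι κ : Type*} {s : Finset ι} {w m : ι → ℝ} {s' : Finset κ} {w' m' : κ → ℝ}
  {E a E' b Z : ℝ}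

lemma log_facts (hZ1 : 1 < Z) (hZ : 4 ≤ Real.log (Real.log Z)) :
    16 ≤ Real.log Z ∧ 2 ≤ Real.sqrt (Real.log (Real.log Z)) ∧
      Real.sqrt (Real.log (Real.log Z)) + 1 ≤ Real.log (Real.log Z) := by
  have hL : 0 < Real.log Z := Real.log_pos hZ1
  have h2 : 2 ≤ Real.sqrt (Real.log (Real.log Z)) := Real.le_sqrt_of_sq_le (by linarith)
  refine ⟨?_, h2, ?_⟩
  · have h1 : Real.exp 4 ≤ Real.log Z := by rwa [Real.le_log_iff_exp_le hL] at hZ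
    have h3 : (16:ℝ) ≤ Real.exp 4 := by
      have : (2:ℝ) ≤ Real.exp 1 := by linarith [Real.add_one_le_exp (1:ℝ)]
      calc (16:ℝ) = 2 ^ 4 := by norm_num
        _ ≤ Real.exp 1 ^ 4 := by gcongr
        _ = Real.exp 4 := by rw [← Real.exp_nat_mul]; norm_num
    linarith
  · nlinarith [Real.sq_sqrt (show 0 ≤ Real.log (Real.log Z) by linarith)]

lemma log_sqrt_facts (hZ1 : 1 < Z) (hZ : 4 ≤ Real.log (Real.log Z)) :
    Real.log (Real.sqrt Z) = Real.log Z / 2 ∧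
    Real.log (Real.log (Real.sqrt Z)) = Real.log (Real.log Z) - Real.log 2 ∧
    cutT Z ≤ Real.sqrt Z ∧ 1 < Real.sqrt Z := by
  obtain ⟨h16, h2, h3⟩ := log_facts hZ1 hZ
  have hl : Real.log (Real.sqrt Z) = Real.log Z / 2 := Real.log_sqrt (by linarith)
  have h4 : Real.log (Real.log (Real.sqrt Z)) = Real.log (Real.log Z) - Real.log 2 := by
    rw [hl, Real.log_div (by linarith) (by norm_num)]
  have hs1 : 1 < Real.sqrt Z := by
    rw [Real.lt_sqrt (by norm_num)]; linarith
  refine ⟨hl, h4, ?_, hs1⟩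
  have hlog2 : Real.log 2 ≤ 1 := by linarith [Real.log_le_sub_one_of_pos (show (0:ℝ) < 2 by norm_num)]
  rw [cutT, ← Real.le_log_iff_exp_le (by linarith), ← Real.le_log_iff_exp_le (by rw [hl]; linarith), h4]
  linarith

/-- `∑ w / m²` over `m ≤ √Z` is `2 a log log Z` up to `O(√(log log Z))`. -/
lemma invSq_sqrt (hw : ∀ i ∈ s, 0 ≤ w i) (hm : ∀ i ∈ s, 1 ≤ m i)
    (hZ1 : 1 < Z) (hZ : 4 ≤ Real.log (Real.log Z)) (h : CntHyp (cnt s w m) E a (cutT Z) Z) :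
    |invSq s w m (Real.sqrt Z) - 2 * a * Real.log (Real.log Z)|
      ≤ 57 * E * Real.sqrt (Real.log (Real.log Z)) := by
  obtain ⟨h16, h2, h3⟩ := log_facts hZ1 hZ
  obtain ⟨hl, hll, hT, hs1⟩ := log_sqrt_facts hZ1 hZ
  have hE := h.E_nonneg
  have hlog2 : Real.log 2 ≤ 1 := by linarith [Real.log_le_sub_one_of_pos (show (0:ℝ) < 2 by norm_num)]
  have hlog2' : 0 ≤ Real.log 2 := Real.log_nonneg (by norm_num)
  have hlT : Real.log (cutT Z) = Real.exp (Real.sqrt (Real.log (Real.log Z))) := Real.log_exp _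
  have hllT : Real.log (Real.log (cutT Z)) = Real.sqrt (Real.log (Real.log Z)) := by
    rw [hlT, Real.log_exp]
  have h1T : 1 ≤ Real.log (cutT Z) := by rw [hlT]; exact Real.one_le_exp (by positivity)
  have hsZ : Real.sqrt Z ≤ Z := by
    rw [Real.sqrt_le_left (by linarith)]; nlinarith
  have key := invSq_asymp hw hm h h1T (by unfold cutT; exact Real.one_lt_exp_iff.2 (Real.exp_pos _)) hT hsZ
  have hlog : Real.log (1 + Real.log (cutT Z)) ≤ 1 + Real.sqrt (Real.log (Real.log Z)) := by
    calc Real.log (1 + Real.log (cutT Z)) ≤ Real.log (2 * Real.log (cutT Z)) :=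
          Real.log_le_log (by linarith) (by linarith)
      _ = Real.log 2 + Real.log (Real.log (cutT Z)) := Real.log_mul (by norm_num) (by linarith)
      _ ≤ _ := by rw [hllT]; linarith
  rw [hll, hllT] at key
  set S := Real.sqrt (Real.log (Real.log Z)) with hS
  have e : invSq s w m (Real.sqrt Z) - 2 * a * Real.log (Real.log Z)
      = (invSq s w m (Real.sqrt Z) - 2 * a * (Real.log (Real.log Z) - Real.log 2 - S))
        - 2 * a * (Real.log 2 + S) := by ring
  rw [e]
  calc _ ≤ |invSq s w m (Real.sqrt Z) - 2 * a * (Real.log (Real.log Z) - Real.log 2 - S)|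
        + |2 * a * (Real.log 2 + S)| := abs_sub _ _
    _ ≤ E * (49 + 2 * (1 + S)) + 2 * E * (1 + S) := by
        refine add_le_add (key.trans (by gcongr)) ?_
        rw [abs_mul, abs_mul, abs_two, abs_of_nonneg (a := Real.log 2 + S) (by linarith)]
        have := h.bound
        gcongr
    _ ≤ 57 * E * S := by nlinarith [mul_nonneg hE (sub_nonneg.2 h2)]

/-- One half of the hyperbola sum: `∑ w β(Z/m)` over `m ≤ √Z`. -/
lemma half_hyperbola (hw : ∀ i ∈ s, 0 ≤ w i) (hm : ∀ i ∈ s, 1 ≤ m i)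
    (hZ1 : 1 < Z) (hZ : 4 ≤ Real.log (Real.log Z)) (h : CntHyp (cnt s w m) E a (cutT Z) Z)
    {β : ℝ → ℝ} (hβ : CntHyp β E' b (cutT Z) Z) :
    |(∑ i ∈ s, if m i ≤ Real.sqrt Z then w i * β (Z / m i) else 0)
      - 2 * a * b * (Z ^ 2 * Real.log (Real.log Z) / Real.log Z)|
      ≤ 3100 * E * E' * (Z ^ 2 * Real.sqrt (Real.log (Real.log Z)) / Real.log Z) := by
  obtain ⟨h16, h2, h3⟩ := log_facts hZ1 hZ
  obtain ⟨hl, hll, hT, hs1⟩ := log_sqrt_facts hZ1 hZ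
  have hE := h.E_nonneg
  have hE' := hβ.E_nonneg
  have hlog2 : Real.log 2 ≤ 1 := by linarith [Real.log_le_sub_one_of_pos (show (0:ℝ) < 2 by norm_num)]
  have hV := invSq_sqrt hw hm hZ1 hZ h
  have hlogsum := log_sum_le hw hm hE h.upper hs1.le
  set L := Real.log Z with hL
  set ℓ := Real.log L with hℓ
  set S := Real.sqrt ℓ with hS
  set V := invSq s w m (Real.sqrt Z) with hVdef
  set Λ := ∑ i ∈ s, (if m i ≤ Real.sqrt Z then w i * (Real.log (m i) / m i ^ 2) else 0) with hΛ
  have hV0 : 0 ≤ V := Finset.sum_nonneg fun i hi => by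
    split_ifs
    · exact mul_nonneg (hw i hi) (by positivity)
    · exact le_rfl
  -- replacing `β (Z / m)` by `b Z² / (m² log Z)`
  have step : |(∑ i ∈ s, if m i ≤ Real.sqrt Z then w i * β (Z / m i) else 0) - b * Z ^ 2 / L * V|
      ≤ E' * Z ^ 2 * (1 / (L / 2) ^ ((25:ℝ) / 24)) * V + E' * Z ^ 2 * (2 / L ^ 2) * Λ := by
    rw [hVdef, hΛ, invSq, Finset.mul_sum, Finset.mul_sum, Finset.mul_sum, ← Finset.sum_sub_distrib,
      ← Finset.sum_add_distrib]
    refine (Finset.abs_sum_le_sum_abs _ _).trans (Finset.sum_le_sum fun i hi => ?_)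
    split_ifs with hi2
    · have hmi := hm i hi
      have hm0 : 0 < m i := by linarith
      have hlm : 0 ≤ Real.log (m i) := Real.log_nonneg hmi
      have hlm2 : Real.log (m i) ≤ L / 2 := by rw [← hl]; exact Real.log_le_log hm0 hi2
      have hge : Real.sqrt Z ≤ Z / m i := by
        rw [le_div_iff₀ hm0]
        calc Real.sqrt Z * m i ≤ Real.sqrt Z * Real.sqrt Z := by gcongr
          _ = Z := Real.mul_self_sqrt (by linarith)
      have hle : Z / m i ≤ Z := div_le_self (by linarith) hmi
      have hlog : Real.log (Z / m i) = L - Real.log (m i) := by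
        rw [Real.log_div (by linarith) hm0.ne']
      have hβi := hβ.asymp (Z / m i) (hT.trans hge) hle
      rw [hlog] at hβi
      set u := L - Real.log (m i) with hu
      have hu2 : L / 2 ≤ u := by linarith
      have hu0 : 0 < u := by linarith
      have hb1 : |β (Z / m i) - b * ((Z / m i) ^ 2 / u)|
          ≤ E' * Z ^ 2 * (1 / (L / 2) ^ ((25:ℝ) / 24)) * (1 / m i ^ 2) := by
        refine hβi.trans ?_
        calc E' * ((Z / m i) ^ 2 / u ^ ((25:ℝ) / 24))
            ≤ E' * ((Z / m i) ^ 2 / (L / 2) ^ ((25:ℝ) / 24)) := by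
              have : 0 < (L / 2) ^ ((25:ℝ) / 24) := Real.rpow_pos_of_pos (by linarith) _
              gcongr
          _ = _ := by field_simp
      have hb2 : |b * ((Z / m i) ^ 2 / u) - b * Z ^ 2 / L * (1 / m i ^ 2)|
          ≤ E' * Z ^ 2 * (2 / L ^ 2) * (Real.log (m i) / m i ^ 2) := by
        have e1 : b * ((Z / m i) ^ 2 / u) - b * Z ^ 2 / L * (1 / m i ^ 2)
            = b * (Z ^ 2 * (1 / m i ^ 2) * (Real.log (m i) / (u * L))) := by
          have : Real.log (m i) = L - u := by rw [hu]; ring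
          rw [this]
          field_simp
        rw [e1, abs_mul, abs_of_nonneg (a := Z ^ 2 * (1 / m i ^ 2) * (Real.log (m i) / (u * L)))
          (by positivity)]
        calc |b| * (Z ^ 2 * (1 / m i ^ 2) * (Real.log (m i) / (u * L)))
            ≤ E' * (Z ^ 2 * (1 / m i ^ 2) * (Real.log (m i) / (L / 2 * L))) := by
              have := hβ.bound
              gcongr
          _ = _ := by field_simp
      have e2 : w i * β (Z / m i) - b * Z ^ 2 / L * (w i * (1 / m i ^ 2))
          = w i * ((β (Z / m i) - b * ((Z / m i) ^ 2 / u))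
            + (b * ((Z / m i) ^ 2 / u) - b * Z ^ 2 / L * (1 / m i ^ 2))) := by ring
      rw [e2, abs_mul, abs_of_nonneg (hw i hi)]
      calc _ ≤ w i * (E' * Z ^ 2 * (1 / (L / 2) ^ ((25:ℝ) / 24)) * (1 / m i ^ 2)
            + E' * Z ^ 2 * (2 / L ^ 2) * (Real.log (m i) / m i ^ 2)) :=
            mul_le_mul_of_nonneg_left ((abs_add_le _ _).trans (add_le_add hb1 hb2)) (hw i hi)
        _ = _ := by ring
    · simp
  have hℓ0 : 0 < ℓ := by linarith
  have hSℓ : S ≤ ℓ := by linarith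
  have hVle : V ≤ 59 * E * ℓ := by
    have h1 := (abs_le.1 hV).2
    have h2' : 2 * a * ℓ ≤ 2 * E * ℓ := by
      have := (le_abs_self a).trans h.bound
      gcongr
    have h3' : 57 * E * S ≤ 57 * E * ℓ := by gcongr
    linarith
  -- `ℓ (L/2)^{-25/24} ≤ 50 / L`
  have hpow : ℓ * (1 / (L / 2) ^ ((25:ℝ) / 24)) ≤ 50 / L := by
    have hx : 1 ≤ L / 2 := by linarith
    have hx0 : 0 < L / 2 := by linarith
    have e1 : (L / 2) ^ ((25:ℝ) / 24) = (L / 2) * (L / 2) ^ ((1:ℝ) / 24) := by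
      rw [← Real.rpow_one_add' hx0.le (by norm_num)]; norm_num
    have hr1 : 1 ≤ (L / 2) ^ ((1:ℝ) / 24) := Real.one_le_rpow hx (by norm_num)
    have e2 : Real.log (L / 2) ≤ (L / 2) ^ ((1:ℝ) / 24) / (1 / 24) :=
      Real.log_le_rpow_div hx0.le (by norm_num)
    have e3 : ℓ = Real.log (L / 2) + Real.log 2 := by
      rw [Real.log_div (by linarith) (by norm_num)]; ring
    have e4 : ℓ ≤ 25 * (L / 2) ^ ((1:ℝ) / 24) := by
      rw [e3]
      have : (L / 2) ^ ((1:ℝ) / 24) / (1 / 24) = 24 * (L / 2) ^ ((1:ℝ) / 24) := by ring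
      linarith
    have hr0 : 0 < (L / 2) ^ ((1:ℝ) / 24) := by linarith
    rw [e1]
    calc ℓ * (1 / (L / 2 * (L / 2) ^ ((1:ℝ) / 24)))
        ≤ 25 * (L / 2) ^ ((1:ℝ) / 24) * (1 / (L / 2 * (L / 2) ^ ((1:ℝ) / 24))) := by gcongr
      _ = 50 / L := by field_simp; norm_num
  have t1 : E' * Z ^ 2 * (1 / (L / 2) ^ ((25:ℝ) / 24)) * V ≤ 2950 * E * E' * (Z ^ 2 / L) := by
    calc E' * Z ^ 2 * (1 / (L / 2) ^ ((25:ℝ) / 24)) * V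
        ≤ E' * Z ^ 2 * (1 / (L / 2) ^ ((25:ℝ) / 24)) * (59 * E * ℓ) := by
          gcongr
      _ = 59 * E * E' * Z ^ 2 * (ℓ * (1 / (L / 2) ^ ((25:ℝ) / 24))) := by ring
      _ ≤ 59 * E * E' * Z ^ 2 * (50 / L) := by gcongr
      _ = _ := by ring
  have t2 : E' * Z ^ 2 * (2 / L ^ 2) * Λ ≤ 4 * E * E' * (Z ^ 2 / L) := by
    calc E' * Z ^ 2 * (2 / L ^ 2) * Λ ≤ E' * Z ^ 2 * (2 / L ^ 2) * (E * (2 * L)) := by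
          gcongr
          refine hlogsum.trans ?_
          rw [hl]
          gcongr
          linarith
      _ = _ := by field_simp; ring
  have t3 : |b * Z ^ 2 / L * V - 2 * a * b * (Z ^ 2 * ℓ / L)| ≤ 57 * E * E' * (Z ^ 2 * S / L) := by
    have e : b * Z ^ 2 / L * V - 2 * a * b * (Z ^ 2 * ℓ / L)
        = b * (Z ^ 2 / L) * (V - 2 * a * ℓ) := by ring
    rw [e, abs_mul, abs_mul, abs_of_nonneg (a := Z ^ 2 / L) (by positivity)]
    calc |b| * (Z ^ 2 / L) * |V - 2 * a * ℓ| ≤ E' * (Z ^ 2 / L) * (57 * E * S) := by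
          have := hβ.bound
          gcongr
      _ = _ := by ring
  have hfin : Z ^ 2 / L ≤ Z ^ 2 * S / L := by
    gcongr
    nlinarith [sq_nonneg Z]
  have hEE : 0 ≤ E * E' := mul_nonneg hE hE'
  have e : (∑ i ∈ s, if m i ≤ Real.sqrt Z then w i * β (Z / m i) else 0)
      - 2 * a * b * (Z ^ 2 * ℓ / L)
      = ((∑ i ∈ s, if m i ≤ Real.sqrt Z then w i * β (Z / m i) else 0) - b * Z ^ 2 / L * V)
        + (b * Z ^ 2 / L * V - 2 * a * b * (Z ^ 2 * ℓ / L)) := by ring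
  rw [e]
  refine (abs_add_le _ _).trans ?_
  have := mul_le_mul_of_nonneg_left hfin hEE
  nlinarith [mul_nonneg hEE (show 0 ≤ Z ^ 2 * S / L by positivity)]

/-- The hyperbola decomposition of a double sum of weights. -/
lemma hyperbola_identity (hm : ∀ i ∈ s, 1 ≤ m i) (hm' : ∀ j ∈ s', 1 ≤ m' j) (hZ1 : 1 < Z) :
    (∑ i ∈ s, ∑ j ∈ s', if m i * m' j ≤ Z then w i * w' j else 0)
      = (∑ i ∈ s, if m i ≤ Real.sqrt Z then w i * cnt s' w' m' (Z / m i) else 0)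
        + (∑ j ∈ s', if m' j ≤ Real.sqrt Z then w' j * cnt s w m (Z / m' j) else 0)
        - cnt s w m (Real.sqrt Z) * cnt s' w' m' (Real.sqrt Z) := by
  have e1 : (∑ i ∈ s, if m i ≤ Real.sqrt Z then w i * cnt s' w' m' (Z / m i) else 0)
      = ∑ i ∈ s, ∑ j ∈ s', if m i ≤ Real.sqrt Z ∧ m i * m' j ≤ Z then w i * w' j else 0 := by
    refine Finset.sum_congr rfl fun i hi => ?_
    have h0 : 0 < m i := by linarith [hm i hi]
    by_cases h : m i ≤ Real.sqrt Z
    · simp only [h, if_true, true_and, cnt, Finset.mul_sum]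
      refine Finset.sum_congr rfl fun j _ => ?_
      simp only [mul_ite, mul_zero, le_div_iff₀ h0, mul_comm (m' j)]
    · simp [h]
  have e2 : (∑ j ∈ s', if m' j ≤ Real.sqrt Z then w' j * cnt s w m (Z / m' j) else 0)
      = ∑ i ∈ s, ∑ j ∈ s', if m' j ≤ Real.sqrt Z ∧ m i * m' j ≤ Z then w i * w' j else 0 := by
    rw [Finset.sum_comm]
    refine Finset.sum_congr rfl fun j hj => ?_
    have h0 : 0 < m' j := by linarith [hm' j hj]
    by_cases h : m' j ≤ Real.sqrt Z
    · simp only [h, if_true, true_and, cnt, Finset.mul_sum]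
      refine Finset.sum_congr rfl fun i _ => ?_
      simp only [ite_mul, zero_mul, le_div_iff₀ h0, mul_comm (w' j)]
    · simp [h]
  have e3 : cnt s w m (Real.sqrt Z) * cnt s' w' m' (Real.sqrt Z)
      = ∑ i ∈ s, ∑ j ∈ s', if m i ≤ Real.sqrt Z ∧ m' j ≤ Real.sqrt Z then w i * w' j else 0 := by
    rw [cnt, cnt, Finset.sum_mul_sum]
    refine Finset.sum_congr rfl fun i _ => Finset.sum_congr rfl fun j _ => ?_
    by_cases h1 : m i ≤ Real.sqrt Z <;> by_cases h2 : m' j ≤ Real.sqrt Z <;> simp [h1, h2]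
  rw [e1, e2, e3, ← Finset.sum_add_distrib, ← Finset.sum_sub_distrib]
  refine Finset.sum_congr rfl fun i hi => ?_
  rw [← Finset.sum_add_distrib, ← Finset.sum_sub_distrib]
  refine Finset.sum_congr rfl fun j hj => ?_
  have h0 : 0 < m i := by linarith [hm i hi]
  have h0' : 0 < m' j := by linarith [hm' j hj]
  have hsq : Real.sqrt Z * Real.sqrt Z = Z := Real.mul_self_sqrt (by linarith)
  have hs0 : 0 < Real.sqrt Z := Real.sqrt_pos.2 (by linarith)
  by_cases h1 : m i ≤ Real.sqrt Z <;> by_cases h2 : m' j ≤ Real.sqrt Z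
  · have : m i * m' j ≤ Z := by rw [← hsq]; gcongr
    simp [h1, h2, this]
  · by_cases h3 : m i * m' j ≤ Z <;> simp [h1, h2, h3]
  · by_cases h3 : m i * m' j ≤ Z <;> simp [h1, h2, h3]
  · have : ¬ m i * m' j ≤ Z := by
      rw [not_le] at h1 h2 ⊢
      rw [← hsq]; gcongr
    simp [h1, h2, this]

/-- Asymptotics of the hyperbola sum of two weighted systems. -/
theorem hyperbola_asymp (hw : ∀ i ∈ s, 0 ≤ w i) (hm : ∀ i ∈ s, 1 ≤ m i)
    (hw' : ∀ j ∈ s', 0 ≤ w' j) (hm' : ∀ j ∈ s', 1 ≤ m' j)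
    (hZ1 : 1 < Z) (hZ : 4 ≤ Real.log (Real.log Z))
    (h : CntHyp (cnt s w m) E a (cutT Z) Z) (h' : CntHyp (cnt s' w' m') E' b (cutT Z) Z) :
    |(∑ i ∈ s, ∑ j ∈ s', if m i * m' j ≤ Z then w i * w' j else 0)
      - 4 * (a * b) * (Z ^ 2 * Real.log (Real.log Z) / Real.log Z)|
      ≤ 6300 * (E * E') * (Z ^ 2 * Real.sqrt (Real.log (Real.log Z)) / Real.log Z) := by
  obtain ⟨h16, h2, h3⟩ := log_facts hZ1 hZ
  obtain ⟨hl, hll, hT, hs1⟩ := log_sqrt_facts hZ1 hZ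
  have hE := h.E_nonneg
  have hE' := h'.E_nonneg
  have hEE : 0 ≤ E * E' := mul_nonneg hE hE'
  have k1 := half_hyperbola hw hm hZ1 hZ h h'
  have k2 := half_hyperbola hw' hm' hZ1 hZ h' h
  rw [hyperbola_identity hm hm' hZ1]
  have sq : Real.sqrt Z ^ 2 = Z := Real.sq_sqrt (by linarith)
  have c1 := cnt_nonneg hw (m := m) (Real.sqrt Z)
  have c2 := cnt_nonneg hw' (m := m') (Real.sqrt Z)
  have u1 := h.upper _ hs1.le
  have u2 := h'.upper _ hs1.le
  rw [sq, hl] at u1 u2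
  have hfin : Z ^ 2 / Real.log Z ≤ Z ^ 2 * Real.sqrt (Real.log (Real.log Z)) / Real.log Z := by
    gcongr
    nlinarith [sq_nonneg Z]
  have k3 : cnt s w m (Real.sqrt Z) * cnt s' w' m' (Real.sqrt Z) ≤ 4 * (E * E') * (Z ^ 2 / Real.log Z) := by
    calc _ ≤ (E * (Z / (1 + Real.log Z / 2))) * (E' * (Z / (1 + Real.log Z / 2))) := by
          gcongr
      _ ≤ (E * (Z / (Real.log Z / 2))) * (E' * (Z / (1 / 2))) := by
          gcongr <;> linarith
      _ = _ := by field_simp; ring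
  have k4 := mul_le_mul_of_nonneg_left hfin hEE
  have k5 : 0 ≤ E * E' * (Z ^ 2 * Real.sqrt (Real.log (Real.log Z)) / Real.log Z) := by positivity
  have k6 := mul_nonneg c1 c2
  rw [abs_le] at k1 k2 ⊢
  constructor <;> nlinarith [k1.1, k1.2, k2.1, k2.2]

end Hyperbola

/-! ### Counting pairs -/

lemma SR_nonneg (r : ℕ) (q : (ZMod 8)ˣ) (t : ℝ) : 0 ≤ SR r q t :=
  Finset.sum_nonneg fun n _ => by split_ifs <;> positivity

lemma SR_le_HQ (r : ℕ) (q : (ZMod 8)ˣ) (t : ℝ) : SR r q t ≤ HQ q t := by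
  refine Finset.sum_le_sum fun n hn => ?_
  have hn0 : n ≠ 0 := by have := (Finset.mem_Icc.1 hn).1; omega
  have h1 := inv_card_divisors_le_hHalf hn0
  have h0 : 0 ≤ 1 / (n.divisors.card : ℝ) := by positivity
  split_ifs with h h' h'
  · exact h1
  · exact absurd h.1 h'
  · exact h0.trans h1
  · exact le_rfl

/-- The universal bound `O(t / √(1 + log t))` for the restricted sums of `1/τ`. -/
lemma SR_upper : ∃ K, 0 < K ∧ ∀ r q t, 1 ≤ t → SR r q t ≤ K * (t / Real.sqrt (1 + Real.log t)) := by
  obtain ⟨K, hK, h⟩ := HQ_asymp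
  refine ⟨2 * (|c0| + K) + 2, by positivity, fun r q t ht => (SR_le_HQ r q t).trans ?_⟩
  have hl := Real.log_nonneg ht
  have hs0 : 0 < Real.sqrt (1 + Real.log t) := Real.sqrt_pos.2 (by linarith)
  have hq0 : 0 ≤ t / Real.sqrt (1 + Real.log t) := by positivity
  rcases le_or_gt 1 (Real.log t) with h1 | h1
  · have ht2 : 2 ≤ t := by
      have := (Real.le_log_iff_exp_le (by linarith)).1 h1
      linarith [Real.add_one_le_exp (1:ℝ)]
    have ha := (abs_le.1 (h q t ht2)).2
    have hr : Real.log t ^ (-(13 / 24) : ℝ) ≤ 1 / Real.sqrt (Real.log t) := by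
      rw [Real.sqrt_eq_rpow, one_div, ← Real.rpow_neg hl]
      exact Real.rpow_le_rpow_of_exponent_le h1 (by norm_num)
    have hsl : 0 < Real.sqrt (Real.log t) := Real.sqrt_pos.2 (by linarith)
    have hcmp : t / Real.sqrt (Real.log t) ≤ 2 * (t / Real.sqrt (1 + Real.log t)) := by
      have : Real.sqrt (1 + Real.log t) ≤ 2 * Real.sqrt (Real.log t) := by
        rw [Real.sqrt_le_left (by positivity), mul_pow, Real.sq_sqrt hl]; linarith
      rw [← mul_div_assoc, div_le_div_iff₀ hsl hs0]
      nlinarith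
    calc HQ q t ≤ c0 * (t / Real.sqrt (Real.log t)) + K * (t * Real.log t ^ (-(13 / 24) : ℝ)) := by
          linarith
      _ ≤ |c0| * (t / Real.sqrt (Real.log t)) + K * (t * (1 / Real.sqrt (Real.log t))) := by
          gcongr
          exact le_abs_self c0
      _ = (|c0| + K) * (t / Real.sqrt (Real.log t)) := by ring
      _ ≤ (|c0| + K) * (2 * (t / Real.sqrt (1 + Real.log t))) := by gcongr
      _ ≤ _ := by nlinarith
  · have h2 : HQ q t ≤ t := HQ_le q (by linarith)
    have : Real.sqrt (1 + Real.log t) ≤ 2 := by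
      rw [Real.sqrt_le_left (by norm_num)]; linarith
    have h3 : t ≤ 2 * (t / Real.sqrt (1 + Real.log t)) := by
      rw [← mul_div_assoc, le_div_iff₀ hs0]; nlinarith
    have : 0 ≤ (|c0| + K) * (t / Real.sqrt (1 + Real.log t)) := by positivity
    nlinarith

/-- The constants `κ_r = c₀ ∑ g(d)/d` are `O(τ(r))`. -/
lemma kappa_bound : ∃ K, 0 < K ∧ ∀ r : ℕ, r ≠ 0 → |c0 * GR r| ≤ K * r.divisors.card := by
  obtain ⟨K, hK, h⟩ := gW_sum_le
  refine ⟨(|c0| + 1) * K, by positivity, fun r hr => ?_⟩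
  obtain ⟨hs, hle⟩ := h r hr
  have h1 : |GR r| ≤ ∑' n, gW r n := by
    rw [← Real.norm_eq_abs]
    exact tsum_of_norm_bounded hs.hasSum fun d => by
      rw [Real.norm_eq_abs]; exact abs_gR_div_le r d
  rw [abs_mul]
  have h0 := abs_nonneg (GR r)
  calc |c0| * |GR r| ≤ (|c0| + 1) * (K * r.divisors.card) := by
        gcongr
        · linarith
        · exact h1.trans hle
    _ = _ := by ring

/-- `SR` at a dilated point `u ρ`, with main term expressed through `log u`. -/
lemma SR_dilate : ∃ K, 0 < K ∧ ∀ r q u ρ, r ≠ 0 → 4 ≤ u → 1 ≤ Real.log u → 1 ≤ ρ →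
    Real.log ρ ≤ Real.sqrt (Real.log u) →
    |SR r q (u * ρ) - c0 * GR r * (u * ρ / Real.sqrt (Real.log u))|
      ≤ K * r.divisors.card * (u * ρ * Real.log u ^ (-(13 / 24) : ℝ)) := by
  obtain ⟨K, hK, h⟩ := SR_asymp
  obtain ⟨K', hK', h'⟩ := kappa_bound
  refine ⟨K + K', by positivity, fun r q u ρ hr hu hl hρ hlρ => ?_⟩
  have hu0 : 0 < u := by linarith
  have hρ0 : 0 < ρ := by linarith
  have hx : 4 ≤ u * ρ := by nlinarith
  have hlog : Real.log (u * ρ) = Real.log u + Real.log ρ := Real.log_mul hu0.ne' hρ0.ne'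
  have hlρ0 : 0 ≤ Real.log ρ := Real.log_nonneg hρ
  have h1 := h r q (u * ρ) hr hx
  have h2 := h' r hr
  rw [hlog] at h1
  set ℓ := Real.log u with hℓ
  set lam := Real.log ρ with hlam
  set κ := c0 * GR r with hκ
  have hℓ0 : 0 < ℓ := by linarith
  have hs : 1 ≤ Real.sqrt ℓ := by rw [Real.one_le_sqrt]; exact hl
  have hs2 : Real.sqrt ℓ ^ 2 = ℓ := Real.sq_sqrt hℓ0.le
  have ht : Real.sqrt ℓ ≤ Real.sqrt (ℓ + lam) := Real.sqrt_le_sqrt (by linarith)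
  have ht2 : Real.sqrt (ℓ + lam) ^ 2 = ℓ + lam := Real.sq_sqrt (by linarith)
  have hrp : (ℓ + lam) ^ (-(13 / 24) : ℝ) ≤ ℓ ^ (-(13 / 24) : ℝ) :=
    Real.rpow_le_rpow_of_nonpos hℓ0 (by linarith) (by norm_num)
  have hinv : ℓ⁻¹ ≤ ℓ ^ (-(13 / 24) : ℝ) := by
    rw [← Real.rpow_neg_one]
    exact Real.rpow_le_rpow_of_exponent_le hl (by norm_num)
  -- `1/√ℓ - 1/√(ℓ+λ) ≤ λ ℓ^{-3/2} ≤ 1/ℓ`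
  have hd : |1 / Real.sqrt (ℓ + lam) - 1 / Real.sqrt ℓ| ≤ ℓ⁻¹ := by
    have p0 : 0 < Real.sqrt ℓ := by linarith
    have p1 : 0 < Real.sqrt (ℓ + lam) := by linarith
    rw [abs_sub_comm, abs_of_nonneg (sub_nonneg.2 (one_div_le_one_div_of_le p0 ht))]
    have e : 1 / Real.sqrt ℓ - 1 / Real.sqrt (ℓ + lam)
        = (Real.sqrt (ℓ + lam) - Real.sqrt ℓ) / (Real.sqrt ℓ * Real.sqrt (ℓ + lam)) := by
      field_simp
    have hnum : Real.sqrt (ℓ + lam) - Real.sqrt ℓ ≤ 1 := by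
      have : Real.sqrt (ℓ + lam) ≤ Real.sqrt ℓ + 1 := by
        rw [Real.sqrt_le_left (by linarith)]; nlinarith
      linarith
    rw [e, inv_eq_one_div]
    refine div_le_div₀ zero_le_one hnum hℓ0 ?_
    nlinarith
  have e : SR r q (u * ρ) - κ * (u * ρ / Real.sqrt ℓ)
      = (SR r q (u * ρ) - κ * (u * ρ / Real.sqrt (ℓ + lam)))
        + κ * (u * ρ) * (1 / Real.sqrt (ℓ + lam) - 1 / Real.sqrt ℓ) := by ring
  rw [e]
  refine (abs_add_le _ _).trans ?_
  rw [abs_mul, abs_mul, abs_of_pos (a := u * ρ) (by positivity)]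
  have hτ : (0:ℝ) ≤ r.divisors.card := by positivity
  calc _ ≤ K * r.divisors.card * (u * ρ * ℓ ^ (-(13 / 24) : ℝ))
        + K' * r.divisors.card * (u * ρ) * ℓ ^ (-(13 / 24) : ℝ) := by
        refine add_le_add (h1.trans ?_) ?_
        · gcongr
        · have := hd.trans hinv
          gcongr
    _ = _ := by ring

/-- The pairs `(n₀, n₁)` admitted in one of the two blocks of the sum. -/
noncomputable def pairSet (X D : ℝ) (q₀ q₁ : (ZMod 8)ˣ) (r₀ r₁ d₀ d₁ : ℕ) : Finset (ℕ × ℕ) :=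
  (Icc 1 ⌊X⌋₊ ×ˢ Icc 1 ⌊X⌋₊).filter fun n =>
    D < ((max (n.1 * d₀) (n.2 * d₁) : ℕ) : ℝ) ∧ (n.1.Coprime r₀ ∧ n.2.Coprime r₁) ∧
      (n.1 : ZMod 8) = q₀ ∧ (n.2 : ZMod 8) = q₁

/-- The weight `1 / (τ(n₀) τ(n₁))`. -/
noncomputable def pairW (n : ℕ × ℕ) : ℝ := 1 / (n.1.divisors.card : ℝ) * (1 / (n.2.divisors.card : ℝ))

/-- The normalised height `max(n₀c₀, n₁c₁) / max(c₀, c₁)`; it is at least `1` when `n₀, n₁ ≥ 1`. -/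
noncomputable def pairM (c₀ c₁ : ℕ) (n : ℕ × ℕ) : ℝ :=
  ((max (n.1 * c₀) (n.2 * c₁) : ℕ) : ℝ) / ((max c₀ c₁ : ℕ) : ℝ)

lemma pairW_nonneg (n : ℕ × ℕ) : 0 ≤ pairW n := by unfold pairW; positivity

lemma pairW_le_one (n : ℕ × ℕ) (h1 : n.1 ≠ 0) (h2 : n.2 ≠ 0) : pairW n ≤ 1 := by
  have a1 : (1:ℝ) ≤ n.1.divisors.card := by
    exact_mod_cast Finset.card_pos.2 (Nat.nonempty_divisors.2 h1)
  have a2 : (1:ℝ) ≤ n.2.divisors.card := by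
    exact_mod_cast Finset.card_pos.2 (Nat.nonempty_divisors.2 h2)
  unfold pairW
  exact mul_le_one₀ (by rw [div_le_one (by linarith)]; exact a1) (by positivity)
    (by rw [div_le_one (by linarith)]; exact a2)

lemma one_le_pairM {c₀ c₁ : ℕ} (h₀ : 1 ≤ c₀) {n : ℕ × ℕ} (h1 : 1 ≤ n.1) (h2 : 1 ≤ n.2) :
    1 ≤ pairM c₀ c₁ n := by
  have hc : 0 < max c₀ c₁ := lt_of_lt_of_le h₀ (le_max_left _ _)
  unfold pairM
  rw [le_div_iff₀ (by exact_mod_cast hc), one_mul]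
  have : max c₀ c₁ ≤ max (n.1 * c₀) (n.2 * c₁) :=
    max_le_max (Nat.le_mul_of_pos_left _ h1) (Nat.le_mul_of_pos_left _ h2)
  exact_mod_cast this

lemma pairM_le_iff {c₀ c₁ : ℕ} (h₀ : 1 ≤ c₀) (h₁ : 1 ≤ c₁) (n : ℕ × ℕ) (u : ℝ) :
    pairM c₀ c₁ n ≤ u ↔ (n.1 : ℝ) ≤ u * (((max c₀ c₁ : ℕ) : ℝ) / c₀) ∧
      (n.2 : ℝ) ≤ u * (((max c₀ c₁ : ℕ) : ℝ) / c₁) := by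
  have hc : (0:ℝ) < ((max c₀ c₁ : ℕ) : ℝ) := by
    exact_mod_cast lt_of_lt_of_le h₀ (le_max_left c₀ c₁)
  have hc0 : (0:ℝ) < c₀ := by exact_mod_cast h₀
  have hc1 : (0:ℝ) < c₁ := by exact_mod_cast h₁
  unfold pairM
  rw [div_le_iff₀ hc, Nat.cast_max (m := n.1 * c₀), max_le_iff, Nat.cast_mul, Nat.cast_mul,
    ← mul_div_assoc, ← mul_div_assoc, le_div_iff₀ hc0, le_div_iff₀ hc1]

/-- The full product of restricted sums as a sum over pairs. -/
lemma SR_mul_SR (r₀ r₁ : ℕ) (q₀ q₁ : (ZMod 8)ˣ) (x y : ℝ) :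
    SR r₀ q₀ x * SR r₁ q₁ y = ∑ n ∈ (Icc 1 ⌊x⌋₊ ×ˢ Icc 1 ⌊y⌋₊).filter (fun n =>
      (n.1.Coprime r₀ ∧ n.2.Coprime r₁) ∧ (n.1 : ZMod 8) = q₀ ∧ (n.2 : ZMod 8) = q₁), pairW n := by
  rw [SR, SR, Finset.sum_mul_sum, Finset.sum_filter, Finset.sum_product]
  refine Finset.sum_congr rfl fun i _ => Finset.sum_congr rfl fun j _ => ?_
  simp only [pairW]
  rw [ite_zero_mul_ite_zero]
  exact if_congr (by tauto) rfl rfl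

lemma cnt_eq_sum_filter {ι : Type*} (s : Finset ι) (w m : ι → ℝ) (t : ℝ) :
    cnt s w m t = ∑ i ∈ s.filter (fun i => m i ≤ t), w i := by
  rw [cnt, Finset.sum_filter]

section Pair

variable {X D : ℝ} {q₀ q₁ : (ZMod 8)ˣ} {r₀ r₁ c₀ c₁ d₀ d₁ : ℕ}

lemma pair_cnt_le (h₀ : 1 ≤ c₀) (h₁ : 1 ≤ c₁) (u : ℝ) :
    cnt (pairSet X D q₀ q₁ r₀ r₁ d₀ d₁) pairW (pairM c₀ c₁) u
      ≤ SR r₀ q₀ (u * (((max c₀ c₁ : ℕ) : ℝ) / c₀)) * SR r₁ q₁ (u * (((max c₀ c₁ : ℕ) : ℝ) / c₁)) := by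
  rw [SR_mul_SR, cnt_eq_sum_filter]
  refine Finset.sum_le_sum_of_subset_of_nonneg ?_ fun n _ _ => pairW_nonneg n
  intro n hn
  simp only [Finset.mem_filter, pairSet, Finset.mem_product, Finset.mem_Icc] at hn ⊢
  obtain ⟨⟨⟨⟨a1, a2⟩, a3, a4⟩, hD, hc, hq⟩, hm⟩ := hn
  rw [pairM_le_iff h₀ h₁] at hm
  exact ⟨⟨⟨a1, Nat.le_floor hm.1⟩, a3, Nat.le_floor hm.2⟩, hc, hq⟩

/-- Inside the box the only loss comes from the condition `D < max(n₀d₀, n₁d₁)`, which removes at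
most `D²` pairs. -/
lemma pair_cnt_ge (h₀ : 1 ≤ c₀) (h₁ : 1 ≤ c₁) (hd₀ : 1 ≤ d₀) (hd₁ : 1 ≤ d₁) (hD : 0 ≤ D)
    (u : ℝ) (hu : 0 ≤ u) (huX : u * ((max c₀ c₁ : ℕ) : ℝ) ≤ X) :
    SR r₀ q₀ (u * (((max c₀ c₁ : ℕ) : ℝ) / c₀)) * SR r₁ q₁ (u * (((max c₀ c₁ : ℕ) : ℝ) / c₁)) - D ^ 2
      ≤ cnt (pairSet X D q₀ q₁ r₀ r₁ d₀ d₁) pairW (pairM c₀ c₁) u := by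
  set S := (Icc 1 ⌊u * (((max c₀ c₁ : ℕ) : ℝ) / c₀)⌋₊ ×ˢ Icc 1 ⌊u * (((max c₀ c₁ : ℕ) : ℝ) / c₁)⌋₊).filter
    (fun n : ℕ × ℕ => (n.1.Coprime r₀ ∧ n.2.Coprime r₁) ∧ (n.1 : ZMod 8) = q₀ ∧ (n.2 : ZMod 8) = q₁)
    with hS
  have hsub : S ⊆ (pairSet X D q₀ q₁ r₀ r₁ d₀ d₁).filter (fun n => pairM c₀ c₁ n ≤ u)
      ∪ Icc 1 ⌊D⌋₊ ×ˢ Icc 1 ⌊D⌋₊ := by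
    intro n hn
    simp only [hS, Finset.mem_filter, Finset.mem_product, Finset.mem_Icc] at hn
    obtain ⟨⟨⟨a1, a2⟩, a3, a4⟩, hc, hq⟩ := hn
    have b1 : (n.1 : ℝ) ≤ u * (((max c₀ c₁ : ℕ) : ℝ) / c₀) := (Nat.le_floor_iff (by positivity)).1 a2
    have b2 : (n.2 : ℝ) ≤ u * (((max c₀ c₁ : ℕ) : ℝ) / c₁) := (Nat.le_floor_iff (by positivity)).1 a4
    have hX : ∀ c : ℕ, 1 ≤ c → u * (((max c₀ c₁ : ℕ) : ℝ) / c) ≤ X := fun c hc => by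
      refine le_trans ?_ huX
      gcongr
      exact div_le_self (by positivity) (by exact_mod_cast hc)
    rw [Finset.mem_union]
    by_cases hDn : D < ((max (n.1 * d₀) (n.2 * d₁) : ℕ) : ℝ)
    · left
      simp only [Finset.mem_filter, pairSet, Finset.mem_product, Finset.mem_Icc]
      exact ⟨⟨⟨⟨a1, Nat.le_floor (b1.trans (hX c₀ h₀))⟩, a3, Nat.le_floor (b2.trans (hX c₁ h₁))⟩,
        hDn, hc, hq⟩, (pairM_le_iff h₀ h₁ n u).2 ⟨b1, b2⟩⟩
    · right
      rw [not_lt] at hDn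
      have e1 : n.1 ≤ max (n.1 * d₀) (n.2 * d₁) :=
        (Nat.le_mul_of_pos_right _ hd₀).trans (le_max_left _ _)
      have e2 : n.2 ≤ max (n.1 * d₀) (n.2 * d₁) :=
        (Nat.le_mul_of_pos_right _ hd₁).trans (le_max_right _ _)
      simp only [Finset.mem_product, Finset.mem_Icc]
      exact ⟨⟨a1, Nat.le_floor (le_trans (by exact_mod_cast e1) hDn)⟩, a3,
        Nat.le_floor (le_trans (by exact_mod_cast e2) hDn)⟩
  have hbox : ∑ n ∈ Icc 1 ⌊D⌋₊ ×ˢ Icc 1 ⌊D⌋₊, pairW n ≤ D ^ 2 := by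
    calc ∑ n ∈ Icc 1 ⌊D⌋₊ ×ˢ Icc 1 ⌊D⌋₊, pairW n ≤ ∑ n ∈ Icc 1 ⌊D⌋₊ ×ˢ Icc 1 ⌊D⌋₊, (1:ℝ) := by
          refine Finset.sum_le_sum fun n hn => ?_
          simp only [Finset.mem_product, Finset.mem_Icc] at hn
          exact pairW_le_one n (by omega) (by omega)
      _ = (⌊D⌋₊ : ℝ) * ⌊D⌋₊ := by simp
      _ ≤ D * D := by gcongr <;> exact Nat.floor_le hD
      _ = D ^ 2 := by ring
  rw [SR_mul_SR, ← hS, cnt_eq_sum_filter, sub_le_iff_le_add]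
  calc ∑ n ∈ S, pairW n ≤ ∑ n ∈ (pairSet X D q₀ q₁ r₀ r₁ d₀ d₁).filter (fun n => pairM c₀ c₁ n ≤ u)
      ∪ Icc 1 ⌊D⌋₊ ×ˢ Icc 1 ⌊D⌋₊, pairW n :=
        Finset.sum_le_sum_of_subset_of_nonneg hsub fun n _ _ => pairW_nonneg n
    _ ≤ ∑ n ∈ (pairSet X D q₀ q₁ r₀ r₁ d₀ d₁).filter (fun n => pairM c₀ c₁ n ≤ u), pairW n
        + ∑ n ∈ Icc 1 ⌊D⌋₊ ×ˢ Icc 1 ⌊D⌋₊, pairW n := by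
        rw [← Finset.sum_union_inter]
        exact le_add_of_nonneg_right (Finset.sum_nonneg fun n _ => pairW_nonneg n)
    _ ≤ _ := by gcongr

end Pair

/-! ### Pairs as a weighted system -/

lemma log_rpow_le_four_mul {u : ℝ} (hu : 1 ≤ u) (hl : 1 ≤ Real.log u) :
    Real.log u ^ ((25:ℝ) / 24) ≤ 4 * u := by
  have h0 : 0 < u := by linarith
  have h1 : Real.log u ≤ 2 * Real.sqrt u := by
    have h := Real.log_le_sub_one_of_pos (Real.sqrt_pos.2 h0)
    rw [Real.log_sqrt h0.le] at h
    linarith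
  calc Real.log u ^ ((25:ℝ) / 24) ≤ Real.log u ^ (2:ℝ) :=
        Real.rpow_le_rpow_of_exponent_le hl (by norm_num)
    _ = Real.log u ^ 2 := by norm_cast
    _ ≤ (2 * Real.sqrt u) ^ 2 := by gcongr
    _ = 4 * u := by rw [mul_pow, Real.sq_sqrt h0.le]; norm_num

lemma one_le_card_divisors {r : ℕ} (hr : r ≠ 0) : (1:ℝ) ≤ r.divisors.card := by
  exact_mod_cast Finset.card_pos.2 (Nat.nonempty_divisors.2 hr)

set_option maxHeartbeats 1000000 in
/-- The counting function of a pair of variables satisfies the hypotheses of the hyperbola lemma,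
with main constant `κ₀ κ₁ c² / (c₀ c₁)`, where `c = max(c₀, c₁)`. -/
theorem pair_hyp : ∃ K, 0 < K ∧ ∀ (X D T Z : ℝ) (q₀ q₁ : (ZMod 8)ˣ) (r₀ r₁ c₀ c₁ d₀ d₁ : ℕ),
    r₀ ≠ 0 → r₁ ≠ 0 → 1 ≤ c₀ → 1 ≤ c₁ → 1 ≤ d₀ → 1 ≤ d₁ → 0 ≤ D → 4 ≤ T → 1 ≤ Real.log T →
    4 * D ^ 2 ≤ T → Real.log ((max c₀ c₁ : ℕ) : ℝ) ≤ Real.sqrt (Real.log T) →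
    Z * ((max c₀ c₁ : ℕ) : ℝ) ≤ X →
    CntHyp (cnt (pairSet X D q₀ q₁ r₀ r₁ d₀ d₁) pairW (pairM c₀ c₁))
      (K * (r₀.divisors.card * r₁.divisors.card) *
        ((((max c₀ c₁ : ℕ) : ℝ) / c₀) * (((max c₀ c₁ : ℕ) : ℝ) / c₁)))
      ((c0 * GR r₀) * (c0 * GR r₁) * ((((max c₀ c₁ : ℕ) : ℝ) / c₀) * (((max c₀ c₁ : ℕ) : ℝ) / c₁)))
      T Z := by
  obtain ⟨A, hA, hup⟩ := SR_upper
  obtain ⟨B, hB, hκ⟩ := kappa_bound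
  obtain ⟨G, hG, hdil⟩ := SR_dilate
  refine ⟨A * A + B * B + (G * A + B * G + 1), by positivity, ?_⟩
  intro X D T Z q₀ q₁ r₀ r₁ c₀ c₁ d₀ d₁ hr₀ hr₁ hc₀ hc₁ hd₀ hd₁ hD hT hlT hDT hcT hZX
  set c : ℝ := ((max c₀ c₁ : ℕ) : ℝ) with hc
  have hc₀' : (1:ℝ) ≤ c₀ := by exact_mod_cast hc₀
  have hc₁' : (1:ℝ) ≤ c₁ := by exact_mod_cast hc₁
  have hcc₀ : (c₀:ℝ) ≤ c := by rw [hc]; exact_mod_cast le_max_left _ _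
  have hcc₁ : (c₁:ℝ) ≤ c := by rw [hc]; exact_mod_cast le_max_right _ _
  have hc1 : 1 ≤ c := hc₀'.trans hcc₀
  set ρ := c / c₀ with hρ
  set σ := c / c₁ with hσ
  have hρ1 : 1 ≤ ρ := by rw [hρ, le_div_iff₀ (by linarith)]; linarith
  have hσ1 : 1 ≤ σ := by rw [hσ, le_div_iff₀ (by linarith)]; linarith
  have hρc : ρ ≤ c := div_le_self (by linarith) hc₀'
  have hσc : σ ≤ c := div_le_self (by linarith) hc₁'
  have t₀ := one_le_card_divisors hr₀
  have t₁ := one_le_card_divisors hr₁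
  have k₀ := hκ r₀ hr₀
  have k₁ := hκ r₁ hr₁
  set τ₀ : ℝ := (r₀.divisors.card : ℝ) with hτ₀
  set τ₁ : ℝ := (r₁.divisors.card : ℝ) with hτ₁
  set κ₀ := c0 * GR r₀ with hκ₀
  set κ₁ := c0 * GR r₁ with hκ₁
  have hρσ : 1 ≤ ρ * σ := one_le_mul_of_one_le_of_one_le hρ1 hσ1
  have hττ : 1 ≤ τ₀ * τ₁ := one_le_mul_of_one_le_of_one_le t₀ t₁
  have hmono : ∀ u ρ : ℝ, 1 ≤ u → 1 ≤ ρ → ∀ r q, SR r q (u * ρ)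
      ≤ A * (u * ρ / Real.sqrt (1 + Real.log u)) := by
    intro u ρ hu hρ r q
    have h1 : u ≤ u * ρ := by nlinarith
    have hl := Real.log_nonneg hu
    have hs : 0 < Real.sqrt (1 + Real.log u) := Real.sqrt_pos.2 (by linarith)
    refine (hup r q (u * ρ) (by linarith)).trans ?_
    gcongr
  refine ⟨?_, ?_, ?_⟩
  · intro u hu
    have hl := Real.log_nonneg hu
    have hs : Real.sqrt (1 + Real.log u) * Real.sqrt (1 + Real.log u) = 1 + Real.log u :=
      Real.mul_self_sqrt (by linarith)
    calc _ ≤ SR r₀ q₀ (u * ρ) * SR r₁ q₁ (u * σ) := pair_cnt_le hc₀ hc₁ u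
      _ ≤ (A * (u * ρ / Real.sqrt (1 + Real.log u))) * (A * (u * σ / Real.sqrt (1 + Real.log u))) :=
          mul_le_mul (hmono u ρ hu hρ1 _ _) (hmono u σ hu hσ1 _ _) (SR_nonneg _ _ _) (by positivity)
      _ = A * A * 1 * (ρ * σ) * (u ^ 2 / (Real.sqrt (1 + Real.log u) * Real.sqrt (1 + Real.log u))) := by
          rw [div_eq_mul_inv, div_eq_mul_inv, div_eq_mul_inv, mul_inv]; ring
      _ ≤ _ := by
          rw [hs]
          gcongr
          have : 0 ≤ B * B + (G * A + B * G + 1) := by positivity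
          linarith
  · intro u hTu huZ
    have hu4 : 4 ≤ u := hT.trans hTu
    have hu0 : 0 < u := by linarith
    have hl1 : 1 ≤ Real.log u := hlT.trans (Real.log_le_log (by linarith) hTu)
    have hl0 : 0 < Real.log u := by linarith
    have hcs : Real.log c ≤ Real.sqrt (Real.log u) :=
      hcT.trans (Real.sqrt_le_sqrt (Real.log_le_log (by linarith) hTu))
    have dρ := hdil r₀ q₀ u ρ hr₀ hu4 hl1 hρ1 ((Real.log_le_log (by linarith) hρc).trans hcs)
    have dσ := hdil r₁ q₁ u σ hr₁ hu4 hl1 hσ1 ((Real.log_le_log (by linarith) hσc).trans hcs)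
    rw [← hκ₀, ← hτ₀] at dρ
    rw [← hκ₁, ← hτ₁] at dσ
    have hs0 : 0 < Real.sqrt (Real.log u) := Real.sqrt_pos.2 hl0
    have hss : Real.sqrt (Real.log u) * Real.sqrt (Real.log u) = Real.log u :=
      Real.mul_self_sqrt hl0.le
    have hP0 : 0 < Real.log u ^ ((25:ℝ) / 24) := Real.rpow_pos_of_pos hl0 _
    -- exponents: `13/24 + 1/2 = 25/24`
    have hexp : Real.log u ^ (-(13 / 24) : ℝ) * (Real.sqrt (Real.log u))⁻¹
        = (Real.log u ^ ((25:ℝ) / 24))⁻¹ := by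
      rw [Real.sqrt_eq_rpow, ← Real.rpow_neg hl0.le, ← Real.rpow_neg hl0.le, ← Real.rpow_add hl0]
      norm_num
    have hB1 : SR r₁ q₁ (u * σ) ≤ A * (u * σ / Real.sqrt (Real.log u)) := by
      refine (hmono u σ (by linarith) hσ1 r₁ q₁).trans ?_
      gcongr
      linarith
    set a := SR r₀ q₀ (u * ρ) with ha
    set b := SR r₁ q₁ (u * σ) with hb
    have hb0 : 0 ≤ b := SR_nonneg _ _ _
    have hprod : |a * b - κ₀ * κ₁ * (ρ * σ) * (u ^ 2 / Real.log u)|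
        ≤ (G * A + B * G) * (τ₀ * τ₁) * (ρ * σ) * (u ^ 2 / Real.log u ^ ((25:ℝ) / 24)) := by
      have e : a * b - κ₀ * κ₁ * (ρ * σ) * (u ^ 2 / Real.log u)
          = (a - κ₀ * (u * ρ / Real.sqrt (Real.log u))) * b
            + κ₀ * (u * ρ / Real.sqrt (Real.log u)) * (b - κ₁ * (u * σ / Real.sqrt (Real.log u))) := by
        have hsplit : u ^ 2 / Real.log u
            = (u / Real.sqrt (Real.log u)) * (u / Real.sqrt (Real.log u)) := by
          rw [div_mul_div_comm, hss, sq]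
        rw [hsplit]; ring
      rw [e]
      refine (abs_add_le _ _).trans ?_
      rw [abs_mul, abs_mul, abs_mul, abs_of_nonneg hb0,
        abs_of_nonneg (a := u * ρ / Real.sqrt (Real.log u)) (by positivity)]
      have hPn : 0 ≤ Real.log u ^ (-(13 / 24) : ℝ) := Real.rpow_nonneg hl0.le _
      calc _ ≤ G * τ₀ * (u * ρ * Real.log u ^ (-(13 / 24) : ℝ)) * (A * (u * σ / Real.sqrt (Real.log u)))
            + B * τ₀ * (u * ρ / Real.sqrt (Real.log u))
              * (G * τ₁ * (u * σ * Real.log u ^ (-(13 / 24) : ℝ))) := by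
            gcongr
        _ = (G * A * (τ₀ * 1) + B * G * (τ₀ * τ₁)) * (ρ * σ) * (u ^ 2 *
              (Real.log u ^ (-(13 / 24) : ℝ) * (Real.sqrt (Real.log u))⁻¹)) := by
            rw [div_eq_mul_inv, div_eq_mul_inv]; ring
        _ ≤ (G * A * (τ₀ * τ₁) + B * G * (τ₀ * τ₁)) * (ρ * σ) * (u ^ 2 *
              (Real.log u ^ (-(13 / 24) : ℝ) * (Real.sqrt (Real.log u))⁻¹)) := by
            gcongr
        _ = _ := by rw [hexp]; ring
    have hup' := pair_cnt_le (X := X) (D := D) (q₀ := q₀) (q₁ := q₁) (r₀ := r₀) (r₁ := r₁)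
      (d₀ := d₀) (d₁ := d₁) hc₀ hc₁ u
    have hlo := pair_cnt_ge (X := X) (D := D) (q₀ := q₀) (q₁ := q₁) (r₀ := r₀) (r₁ := r₁)
      hc₀ hc₁ hd₀ hd₁ hD u hu0.le ((mul_le_mul_of_nonneg_right huZ (by positivity)).trans hZX)
    rw [← hc, ← hρ, ← hσ, ← ha, ← hb] at hup' hlo
    have hDD : D ^ 2 ≤ 1 * 1 * (u ^ 2 / Real.log u ^ ((25:ℝ) / 24)) := by
      rw [one_mul, one_mul, le_div_iff₀ hP0]
      calc D ^ 2 * Real.log u ^ ((25:ℝ) / 24) ≤ D ^ 2 * (4 * u) := by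
            gcongr; exact log_rpow_le_four_mul (by linarith) hl1
        _ = 4 * D ^ 2 * u := by ring
        _ ≤ u * u := by gcongr; linarith
        _ = u ^ 2 := by ring
    have hDD' : D ^ 2 ≤ τ₀ * τ₁ * (ρ * σ) * (u ^ 2 / Real.log u ^ ((25:ℝ) / 24)) := by
      refine hDD.trans ?_
      gcongr
    have hfin : (G * A + B * G) * (τ₀ * τ₁) * (ρ * σ) * (u ^ 2 / Real.log u ^ ((25:ℝ) / 24))
        + τ₀ * τ₁ * (ρ * σ) * (u ^ 2 / Real.log u ^ ((25:ℝ) / 24))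
        ≤ (A * A + B * B + (G * A + B * G + 1)) * (τ₀ * τ₁) * (ρ * σ)
          * (u ^ 2 / Real.log u ^ ((25:ℝ) / 24)) := by
      have : 0 ≤ (A * A + B * B) * (τ₀ * τ₁) * (ρ * σ) * (u ^ 2 / Real.log u ^ ((25:ℝ) / 24)) := by
        positivity
      linarith
    refine le_trans ?_ hfin
    rw [abs_le] at hprod ⊢
    constructor <;> linarith [hprod.1, hprod.2]
  · rw [abs_mul, abs_mul, abs_of_pos (a := ρ * σ) (by linarith)]
    calc |κ₀| * |κ₁| * (ρ * σ) ≤ (B * τ₀) * (B * τ₁) * (ρ * σ) := by gcongr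
      _ = B * B * (τ₀ * τ₁) * (ρ * σ) := by ring
      _ ≤ (A * A + B * B + (G * A + B * G + 1)) * (τ₀ * τ₁) * (ρ * σ) := by
          have h1 : B * B ≤ A * A + B * B + (G * A + B * G + 1) := by
            have : 0 ≤ A * A + (G * A + B * G + 1) := by positivity
            linarith
          exact mul_le_mul_of_nonneg_right (mul_le_mul_of_nonneg_right h1 (by linarith)) (by linarith)

/-! ### The four-fold sum as a hyperbola sum -/

/-- The constant of the statement is `4` times the product of the four constants `κ_r`. -/
lemma S2_eq {r₀ r₁ r₂ r₃ : ℕ} (h₀ : Odd r₀) (h₁ : Odd r₁) (h₂ : Odd r₂) (h₃ : Odd r₃) :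
    S2 r₀ r₁ r₂ r₃ = 4 * ((c0 * GR r₀) * (c0 * GR r₁) * ((c0 * GR r₂) * (c0 * GR r₃))) := by
  obtain ⟨K, hK, h⟩ := gW_sum_le
  have ne : ∀ r : ℕ, Odd r → r ≠ 0 := fun r hr => by rintro rfl; simp at hr
  have e := fun r hr => c0_mul_GR hr (h r (ne r hr)).1
  have hp : ∀ r : ℕ, (∏ p ∈ (2 * r).primeFactors, fP p) ≠ 0 := fun r =>
    Finset.prod_ne_zero_iff.2 fun p _ => (fP_pos p).ne'
  rw [e r₀ h₀, e r₁ h₁, e r₂ h₂, e r₃ h₃, S2]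
  have p0 := hp r₀
  have p1 := hp r₁
  have p2 := hp r₂
  have p3 := hp r₃
  have ht : (Nat.totient 8 : ℝ) = 4 := by
    have : Nat.totient 8 = 4 := by decide
    rw [this]; norm_num
  rw [ht]
  field_simp

/-- The four-fold sum as a hyperbola sum of two pair systems. -/
lemma sum_eq_hyperbola {X D Z : ℝ} {q₀ q₁ q₂ q₃ : (ZMod 8)ˣ} {r₀ r₁ r₂ r₃ c₀ c₁ c₂ c₃ d₀ d₁ d₂ d₃ : ℕ}
    (hc₀ : 1 ≤ c₀) (hc₂ : 1 ≤ c₂)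
    (hZ : Z = X / (((max c₀ c₁ : ℕ) : ℝ) * ((max c₂ c₃ : ℕ) : ℝ)))
    [DecidablePred (fun n : (ℕ × ℕ) × ℕ × ℕ =>
              ((max (n.1.1 * c₀) (n.1.2 * c₁) * max (n.2.1 * c₂) (n.2.2 * c₃) : ℕ) : ℝ) ≤ X ∧
              D < ((max (n.1.1 * d₀) (n.1.2 * d₁) : ℕ) : ℝ) ∧
              D < ((max (n.2.1 * d₂) (n.2.2 * d₃) : ℕ) : ℝ) ∧
              Nat.Coprime n.1.1 r₀ ∧ Nat.Coprime n.1.2 r₁ ∧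
              Nat.Coprime n.2.1 r₂ ∧ Nat.Coprime n.2.2 r₃ ∧
              (n.1.1 : ZMod 8) = (q₀ : ZMod 8) ∧ (n.1.2 : ZMod 8) = (q₁ : ZMod 8) ∧
              (n.2.1 : ZMod 8) = (q₂ : ZMod 8) ∧ (n.2.2 : ZMod 8) = (q₃ : ZMod 8))] :
    (∑ n ∈ ((Finset.Icc 1 ⌊X⌋₊ ×ˢ Finset.Icc 1 ⌊X⌋₊) ×ˢ
              (Finset.Icc 1 ⌊X⌋₊ ×ˢ Finset.Icc 1 ⌊X⌋₊)).filter
            (fun n : (ℕ × ℕ) × ℕ × ℕ =>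
              ((max (n.1.1 * c₀) (n.1.2 * c₁) * max (n.2.1 * c₂) (n.2.2 * c₃) : ℕ) : ℝ) ≤ X ∧
              D < ((max (n.1.1 * d₀) (n.1.2 * d₁) : ℕ) : ℝ) ∧
              D < ((max (n.2.1 * d₂) (n.2.2 * d₃) : ℕ) : ℝ) ∧
              Nat.Coprime n.1.1 r₀ ∧ Nat.Coprime n.1.2 r₁ ∧
              Nat.Coprime n.2.1 r₂ ∧ Nat.Coprime n.2.2 r₃ ∧
              (n.1.1 : ZMod 8) = (q₀ : ZMod 8) ∧ (n.1.2 : ZMod 8) = (q₁ : ZMod 8) ∧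
              (n.2.1 : ZMod 8) = (q₂ : ZMod 8) ∧ (n.2.2 : ZMod 8) = (q₃ : ZMod 8)),
          1 / (((Nat.divisors n.1.1).card : ℝ) * ((Nat.divisors n.1.2).card : ℝ) *
            ((Nat.divisors n.2.1).card : ℝ) * ((Nat.divisors n.2.2).card : ℝ)))
      = ∑ i ∈ pairSet X D q₀ q₁ r₀ r₁ d₀ d₁, ∑ j ∈ pairSet X D q₂ q₃ r₂ r₃ d₂ d₃,
          if pairM c₀ c₁ i * pairM c₂ c₃ j ≤ Z then pairW i * pairW j else 0 := by
  have hc : (0:ℝ) < ((max c₀ c₁ : ℕ) : ℝ) := by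
    exact_mod_cast lt_of_lt_of_le hc₀ (le_max_left c₀ c₁)
  have hc' : (0:ℝ) < ((max c₂ c₃ : ℕ) : ℝ) := by
    exact_mod_cast lt_of_lt_of_le hc₂ (le_max_left c₂ c₃)
  have hiff : ∀ i j : ℕ × ℕ, pairM c₀ c₁ i * pairM c₂ c₃ j ≤ Z ↔
      ((max (i.1 * c₀) (i.2 * c₁) * max (j.1 * c₂) (j.2 * c₃) : ℕ) : ℝ) ≤ X := fun i j => by
    rw [pairM, pairM, div_mul_div_comm, hZ, div_le_div_iff_of_pos_right (mul_pos hc hc'),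
      Nat.cast_mul]
  rw [← Finset.sum_product', ← Finset.sum_filter]
  refine Finset.sum_congr ?_ fun n _ => ?_
  · ext n
    simp only [Finset.mem_filter, Finset.mem_product, pairSet, hiff]
    tauto
  · simp only [pairW]
    rw [one_div_mul_one_div, one_div_mul_one_div, one_div_mul_one_div, mul_assoc (_ * _)]

/-- With `y = log log X`, this makes every fixed power of `log X` negligible against `log` of the cut `T₀`,
in the form in which it is used. -/
lemma eventually_linear_le (A B : ℝ) :
    ∀ᶠ y : ℝ in Filter.atTop, A + B * y ≤ Real.exp (Real.sqrt (y - 1) / 2) := by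
  have ht : Filter.Tendsto (fun y : ℝ => Real.sqrt (y - 1) / 2) Filter.atTop Filter.atTop :=
    (Real.tendsto_sqrt_atTop.comp (Filter.tendsto_atTop_add_const_right _ (-1) Filter.tendsto_id)
      ).atTop_div_const (by norm_num)
  have h0 : Filter.Tendsto (fun s : ℝ => (A + B) * (s ^ 0 * Real.exp (-s))
      + 4 * B * (s ^ 2 * Real.exp (-s))) Filter.atTop (nhds ((A + B) * 0 + 4 * B * 0)) :=
    ((Real.tendsto_pow_mul_exp_neg_atTop_nhds_zero 0).const_mul _).add
      ((Real.tendsto_pow_mul_exp_neg_atTop_nhds_zero 2).const_mul _)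
  have h1 : ∀ᶠ s : ℝ in Filter.atTop, (A + B) * (s ^ 0 * Real.exp (-s))
      + 4 * B * (s ^ 2 * Real.exp (-s)) < 1 := h0.eventually_lt_const (by norm_num)
  filter_upwards [ht.eventually h1, Filter.eventually_ge_atTop 1] with y hy hy1
  have hs : Real.sqrt (y - 1) ^ 2 = y - 1 := Real.sq_sqrt (by linarith)
  set s := Real.sqrt (y - 1) / 2 with hsdef
  have e : A + B * y = ((A + B) * (s ^ 0 * Real.exp (-s)) + 4 * B * (s ^ 2 * Real.exp (-s)))
      * Real.exp s := by
    have h2 : Real.exp (-s) * Real.exp s = 1 := by rw [← Real.exp_add]; simp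
    have h3 : 4 * s ^ 2 = y - 1 := by rw [hsdef, div_pow, hs]; ring
    linear_combination (-(A + B) - 4 * B * s ^ 2) * h2 - B * h3
  rw [e]
  nlinarith [Real.exp_pos s]

set_option maxHeartbeats 400000 in
/-- The elementary inequalities needed for large `X`, in terms of `Z = X / (c c')`. -/
lemma large_facts {C₂ C₃ X c c' Z : ℝ} (h₂ : 0 < C₂) (h₃ : 0 < C₃) (hX : 1 < X) (hL : 1 < Real.log X)
    (hℓ : 5 ≤ Real.log (Real.log X))
    (hlin : 2 + (2 * C₃ + 4 * C₂ + 1) * Real.log (Real.log X)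
      ≤ Real.exp (Real.sqrt (Real.log (Real.log X) - 1) / 2))
    (hc : 1 ≤ c) (hc' : 1 ≤ c') (hcL : c ≤ Real.log X ^ C₂) (hcL' : c' ≤ Real.log X ^ C₂)
    (hZ : Z = X / (c * c')) :
    1 < Z ∧ 4 ≤ Real.log (Real.log Z) ∧ 4 ≤ cutT Z ∧ 1 ≤ Real.log (cutT Z) ∧
    4 * (Real.log X ^ C₃) ^ 2 ≤ cutT Z ∧ Real.log c ≤ Real.sqrt (Real.log (cutT Z)) ∧
    Real.log c' ≤ Real.sqrt (Real.log (cutT Z)) ∧ Real.log X / 2 ≤ Real.log Z ∧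
    Real.log (Real.log Z) ≤ Real.log (Real.log X) ∧
    |Real.log (Real.log Z) / Real.log Z - Real.log (Real.log X) / Real.log X| ≤ 3 / Real.log X := by
  set L := Real.log X with hLdef
  set ℓ := Real.log L with hℓdef
  have hL0 : 0 < L := by linarith
  have hlog2 : Real.log 2 ≤ 1 := by linarith [Real.log_le_sub_one_of_pos (show (0:ℝ) < 2 by norm_num)]
  have hexpl : Real.exp ℓ = L := Real.exp_log hL0
  have hsq : Real.sqrt (ℓ - 1) ≤ ℓ := by
    rw [Real.sqrt_le_left (by linarith)]; nlinarith
  have hQ : (2 + (2 * C₃ + 4 * C₂ + 1) * ℓ) ^ 2 ≤ L := by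
    calc (2 + (2 * C₃ + 4 * C₂ + 1) * ℓ) ^ 2 ≤ Real.exp (Real.sqrt (ℓ - 1) / 2) ^ 2 := by
          gcongr
      _ = Real.exp (Real.sqrt (ℓ - 1)) := by rw [← Real.exp_nat_mul]; congr 1; push_cast; ring
      _ ≤ Real.exp ℓ := Real.exp_le_exp.2 hsq
      _ = L := hexpl
  have pC₃ : 0 ≤ C₃ * ℓ := by have : 0 ≤ ℓ := by linarith
                              positivity
  have pC₂ : 0 ≤ C₂ * ℓ := by have : 0 ≤ ℓ := by linarith
                              positivity
  set R := 2 + (2 * C₃ + 4 * C₂ + 1) * ℓ with hR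
  have hR1 : 4 * (C₂ * ℓ) ≤ R := by rw [hR]; nlinarith
  have hR2 : 2 + 2 * (C₃ * ℓ) ≤ R := by rw [hR]; nlinarith
  have hR3 : ℓ ≤ R := by rw [hR]; nlinarith
  have hlc : Real.log c ≤ C₂ * ℓ := by
    rw [← Real.log_rpow hL0]; exact Real.log_le_log (by linarith) hcL
  have hlc' : Real.log c' ≤ C₂ * ℓ := by
    rw [← Real.log_rpow hL0]; exact Real.log_le_log (by linarith) hcL'
  have hlc0 := Real.log_nonneg hc
  have hlc0' := Real.log_nonneg hc'
  have hZ0 : 0 < Z := by rw [hZ]; positivity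
  have hlZ : Real.log Z = L - (Real.log c + Real.log c') := by
    rw [hZ, Real.log_div (by linarith) (by positivity), Real.log_mul (by linarith) (by linarith)]
  have hRL : R ≤ L := by nlinarith
  have hZlo : L / 2 ≤ Real.log Z := by rw [hlZ]; linarith
  have hZhi : Real.log Z ≤ L := by rw [hlZ]; linarith
  have hlZ0 : 0 < Real.log Z := by linarith
  have hZ1 : 1 < Z := by rwa [← Real.log_pos_iff hZ0.le]
  have hll1 : ℓ - 1 ≤ Real.log (Real.log Z) := by
    have : Real.log (L / 2) = ℓ - Real.log 2 := Real.log_div hL0.ne' (by norm_num)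
    have h := Real.log_le_log (by linarith) hZlo
    linarith
  have hll2 : Real.log (Real.log Z) ≤ ℓ := Real.log_le_log hlZ0 hZhi
  have hlT : Real.log (cutT Z) = Real.exp (Real.sqrt (Real.log (Real.log Z))) := Real.log_exp _
  have hsT : Real.sqrt (Real.log (cutT Z)) = Real.exp (Real.sqrt (Real.log (Real.log Z)) / 2) := by
    rw [hlT, Real.sqrt_eq_rpow, ← Real.exp_mul]; congr 1; ring
  have hRT : R ≤ Real.sqrt (Real.log (cutT Z)) := by
    rw [hsT]; refine hlin.trans (Real.exp_le_exp.2 ?_)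
    gcongr
  have hlTpos : 0 ≤ Real.log (cutT Z) := by rw [hlT]; positivity
  have hTT : R ≤ Real.log (cutT Z) := by
    have h1 := Real.mul_self_sqrt hlTpos
    nlinarith
  have hT0 : 0 < cutT Z := Real.exp_pos _
  have hlog4 : Real.log 4 ≤ 2 := by
    have : Real.log 4 = 2 * Real.log 2 := by
      rw [show (4:ℝ) = 2 ^ 2 by norm_num, Real.log_pow]; norm_num
    linarith
  refine ⟨hZ1, by linarith, ?_, by linarith, ?_, by linarith, by linarith, hZlo, hll2, ?_⟩
  · rw [← Real.log_le_log_iff (by norm_num) hT0]; linarith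
  · have hp : 0 < L ^ C₃ := Real.rpow_pos_of_pos hL0 _
    rw [← Real.log_le_log_iff (by positivity) hT0, Real.log_mul (by norm_num) (by positivity),
      Real.log_pow, Real.log_rpow hL0]
    push_cast
    linarith
  · have e : Real.log (Real.log Z) / Real.log Z - ℓ / L
        = (Real.log (Real.log Z) - ℓ) / Real.log Z
          + ℓ * (Real.log c + Real.log c') / (Real.log Z * L) := by
      have : Real.log c + Real.log c' = L - Real.log Z := by linarith
      rw [this]; field_simp; ring
    rw [e]
    refine (abs_add_le _ _).trans ?_
    have b1 : |(Real.log (Real.log Z) - ℓ) / Real.log Z| ≤ 2 / L := by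
      rw [abs_div, abs_of_pos hlZ0, div_le_div_iff₀ hlZ0 hL0]
      have : |Real.log (Real.log Z) - ℓ| ≤ 1 := by rw [abs_le]; constructor <;> linarith
      calc _ ≤ 1 * L := by gcongr
        _ ≤ 2 * Real.log Z := by linarith
    have b2 : |ℓ * (Real.log c + Real.log c') / (Real.log Z * L)| ≤ 1 / L := by
      rw [abs_of_nonneg (by have : 0 ≤ ℓ := by linarith
                            positivity)]
      rw [div_le_div_iff₀ (by positivity) hL0]
      have h1 : ℓ * (Real.log c + Real.log c') ≤ L / 2 := by
        have h2 : Real.log c + Real.log c' ≤ R / 2 := by linarith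
        have h3 := mul_le_mul hR3 h2 (by linarith) (by linarith)
        linarith
      have h4 := mul_le_mul_of_nonneg_right (h1.trans hZlo) hL0.le
      linarith
    calc _ ≤ 2 / L + 1 / L := add_le_add b1 b2
      _ = 3 / L := by ring

/-! ### The final estimate in terms of `X` -/

/-- Transfer of the hyperbola estimate from `Z = X / (c c')` to `X`; here `P = X² / (c₀c₁c₂c₃)` and
`κ` is the product of the four local constants. -/
lemma transfer {W κ K B τ P L ℓ LZ ℓZ : ℝ} (hL : 0 < L) (hℓ : 1 ≤ ℓ) (hP : 0 ≤ P) (hτ : 0 ≤ τ)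
    (hB : 0 ≤ B) (hLZ : L / 2 ≤ LZ) (hℓZ : ℓZ ≤ ℓ)
    (hκ : |κ| ≤ B * τ) (hdiff : |ℓZ / LZ - ℓ / L| ≤ 3 / L)
    (hW : |W - 4 * κ * P * (ℓZ / LZ)| ≤ 6300 * (K * K * τ) * P * (Real.sqrt ℓZ / LZ)) :
    |W - 4 * κ * P * (ℓ / L)| ≤ (12600 * (K * K) + 12 * B) * τ * P * (Real.sqrt ℓ / L) := by
  have hs : 1 ≤ Real.sqrt ℓ := by rwa [Real.one_le_sqrt]
  have hKK : 0 ≤ K * K := mul_self_nonneg K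
  have e : W - 4 * κ * P * (ℓ / L)
      = (W - 4 * κ * P * (ℓZ / LZ)) + κ * (4 * P * (ℓZ / LZ - ℓ / L)) := by ring
  rw [e]
  refine (abs_add_le _ _).trans ?_
  have b1 : Real.sqrt ℓZ / LZ ≤ 2 * (Real.sqrt ℓ / L) := by
    calc Real.sqrt ℓZ / LZ ≤ Real.sqrt ℓ / (L / 2) := by
          have := Real.sqrt_le_sqrt hℓZ
          gcongr
      _ = _ := by field_simp
  have b2 : |κ * (4 * P * (ℓZ / LZ - ℓ / L))| ≤ 12 * B * τ * P * (Real.sqrt ℓ / L) := by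
    rw [abs_mul, abs_mul, abs_of_nonneg (a := 4 * P) (by positivity)]
    calc |κ| * (4 * P * |ℓZ / LZ - ℓ / L|) ≤ (B * τ) * (4 * P * (3 / L)) := by gcongr
      _ = 12 * B * τ * P * (1 / L) := by ring
      _ ≤ _ := by gcongr
  calc _ ≤ 6300 * (K * K * τ) * P * (2 * (Real.sqrt ℓ / L)) + 12 * B * τ * P * (Real.sqrt ℓ / L) := by
        refine add_le_add (hW.trans ?_) b2
        gcongr
    _ = _ := by ring

lemma log_log_three_pos : 1 < Real.log 3 ∧ 0 < Real.log (Real.log 3) := by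
  have h : 1 < Real.log 3 := by
    rw [Real.lt_log_iff_exp_lt (by norm_num)]
    exact Real.exp_one_lt_three
  exact ⟨h, Real.log_pos h⟩

/-- For bounded `X` both terms are bounded trivially; the constant absorbs `√(log log X) ≥ √(log log 3) > 0`. -/
lemma small_bound {W κ B τ P L ℓ L₀ M c X₀ : ℝ} (hL : 1 < L) (hLL : L ≤ L₀)
    (hℓ : Real.log (Real.log 3) ≤ ℓ) (hℓL : ℓ ≤ L₀) (hτ : 1 ≤ τ) (hc : 0 < c) (hcM : c ≤ M)
    (hP : P * c = X₀ ^ 2) (hX₀ : 1 ≤ X₀) (hB : 0 ≤ B) (hκ : |κ| ≤ B * τ) {N : ℝ} (hW0 : 0 ≤ W)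
    (hW : W ≤ N) :
    |W - 4 * κ * P * (ℓ / L)|
      ≤ (N * M * L₀ / Real.sqrt (Real.log (Real.log 3)) + 4 * B * L₀) * τ * P * (Real.sqrt ℓ / L) := by
  have h3 := log_log_three_pos.2
  set ε := Real.sqrt (Real.log (Real.log 3)) with hε
  have hε0 : 0 < ε := Real.sqrt_pos.2 h3
  have hεs : ε ≤ Real.sqrt ℓ := Real.sqrt_le_sqrt hℓ
  have hP0 : 0 < P := by
    by_contra hcon
    rw [not_lt] at hcon
    nlinarith [mul_nonneg_of_nonpos_of_nonpos hcon (neg_nonpos.2 hc.le)]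
  have hP1 : 1 ≤ P * M := by
    have : P * c ≤ P * M := by gcongr
    nlinarith
  have hN : 0 ≤ N := hW0.trans hW
  have hM : 0 < M := hc.trans_le hcM
  have hL0 : 0 < L := by linarith
  have hL₀ : 1 < L₀ := by linarith
  have hℓ0 : 0 < ℓ := by linarith
  have b1 : W ≤ (N * M * L₀ / ε) * τ * P * (Real.sqrt ℓ / L) := by
    have e1 : 1 ≤ Real.sqrt ℓ / ε := by rw [one_le_div hε0]; exact hεs
    have e2 : 1 ≤ L₀ / L := by rw [one_le_div hL0]; exact hLL
    calc W ≤ N * 1 * 1 * 1 * 1 := by linarith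
      _ ≤ N * τ * (P * M) * (Real.sqrt ℓ / ε) * (L₀ / L) := by gcongr
      _ = _ := by field_simp
  have b2 : |4 * κ * P * (ℓ / L)| ≤ (4 * B * L₀) * τ * P * (Real.sqrt ℓ / L) := by
    rw [abs_mul, abs_mul, abs_mul, abs_of_pos hP0, abs_of_pos (a := ℓ / L) (by positivity),
      abs_of_pos (a := (4:ℝ)) (by norm_num)]
    have hs : ℓ ≤ L₀ * Real.sqrt ℓ := by
      have e : ℓ = Real.sqrt ℓ * Real.sqrt ℓ := (Real.mul_self_sqrt hℓ0.le).symm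
      have h1 : Real.sqrt ℓ ≤ L₀ := by
        rw [Real.sqrt_le_left (by linarith)]; nlinarith
      calc ℓ = Real.sqrt ℓ * Real.sqrt ℓ := e
        _ ≤ _ := by gcongr
    calc 4 * |κ| * P * (ℓ / L) ≤ 4 * (B * τ) * P * (L₀ * Real.sqrt ℓ / L) := by gcongr
      _ = _ := by ring
  calc _ ≤ |W| + |4 * κ * P * (ℓ / L)| := abs_sub _ _
    _ ≤ (N * M * L₀ / ε) * τ * P * (Real.sqrt ℓ / L)
        + (4 * B * L₀) * τ * P * (Real.sqrt ℓ / L) := by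
        rw [abs_of_nonneg hW0]; exact add_le_add b1 b2
    _ = _ := by ring

/-- The hyperbola sum over two pair systems is at most `X⁴`. -/
lemma hyperbola_trivial {X D Z : ℝ} (hX : 0 ≤ X) {q₀ q₁ q₂ q₃ : (ZMod 8)ˣ}
    {r₀ r₁ r₂ r₃ c₀ c₁ c₂ c₃ d₀ d₁ d₂ d₃ : ℕ} :
    0 ≤ (∑ i ∈ pairSet X D q₀ q₁ r₀ r₁ d₀ d₁, ∑ j ∈ pairSet X D q₂ q₃ r₂ r₃ d₂ d₃,
          if pairM c₀ c₁ i * pairM c₂ c₃ j ≤ Z then pairW i * pairW j else 0) ∧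
    (∑ i ∈ pairSet X D q₀ q₁ r₀ r₁ d₀ d₁, ∑ j ∈ pairSet X D q₂ q₃ r₂ r₃ d₂ d₃,
          if pairM c₀ c₁ i * pairM c₂ c₃ j ≤ Z then pairW i * pairW j else 0) ≤ X ^ 4 := by
  have hcard : ∀ (q q' : (ZMod 8)ˣ) (r r' d d' : ℕ),
      ((pairSet X D q q' r r' d d').card : ℝ) ≤ X ^ 2 := by
    intro q q' r r' d d'
    have h1 : (pairSet X D q q' r r' d d').card ≤ (Icc 1 ⌊X⌋₊ ×ˢ Icc 1 ⌊X⌋₊).card :=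
      Finset.card_le_card (Finset.filter_subset _ _)
    have h2 : (Icc 1 ⌊X⌋₊ ×ˢ Icc 1 ⌊X⌋₊).card = ⌊X⌋₊ * ⌊X⌋₊ := by simp
    calc ((pairSet X D q q' r r' d d').card : ℝ) ≤ (⌊X⌋₊ : ℝ) * ⌊X⌋₊ := by
          rw [h2] at h1; exact_mod_cast h1
      _ ≤ X * X := by gcongr <;> exact Nat.floor_le hX
      _ = X ^ 2 := by ring
  have hmem : ∀ (q q' : (ZMod 8)ˣ) (r r' d d' : ℕ), ∀ i ∈ pairSet X D q q' r r' d d', pairW i ≤ 1 := by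
    intro q q' r r' d d' i hi
    simp only [pairSet, Finset.mem_filter, Finset.mem_product, Finset.mem_Icc] at hi
    exact pairW_le_one i (by omega) (by omega)
  constructor
  · refine Finset.sum_nonneg fun i _ => Finset.sum_nonneg fun j _ => ?_
    split_ifs
    · exact mul_nonneg (pairW_nonneg i) (pairW_nonneg j)
    · exact le_rfl
  · calc _ ≤ ∑ i ∈ pairSet X D q₀ q₁ r₀ r₁ d₀ d₁, ∑ j ∈ pairSet X D q₂ q₃ r₂ r₃ d₂ d₃, (1:ℝ) := by
          refine Finset.sum_le_sum fun i hi => Finset.sum_le_sum fun j hj => ?_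
          split_ifs
          · exact mul_le_one₀ (hmem _ _ _ _ _ _ i hi) (pairW_nonneg j) (hmem _ _ _ _ _ _ j hj)
          · exact zero_le_one
      _ = ((pairSet X D q₀ q₁ r₀ r₁ d₀ d₁).card : ℝ) * (pairSet X D q₂ q₃ r₂ r₃ d₂ d₃).card := by
          simp
      _ ≤ X ^ 2 * X ^ 2 := by gcongr <;> apply hcard
      _ = X ^ 4 := by ring

/-- The estimate for the hyperbola sum over two pair systems, in terms of `κ` and `τ`. -/
theorem pair_hyperbola (C₂ C₃ : ℝ) (h₂ : 0 < C₂) (h₃ : 0 < C₃) :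
    ∃ C : ℝ, ∀ X : ℝ, 3 ≤ X → ∀ q₀ q₁ q₂ q₃ : (ZMod 8)ˣ,
      ∀ r₀ r₁ r₂ r₃ : ℕ, r₀ ≠ 0 → r₁ ≠ 0 → r₂ ≠ 0 → r₃ ≠ 0 →
      ∀ c₀ c₁ c₂ c₃ : ℕ, 1 ≤ c₀ → 1 ≤ c₁ → 1 ≤ c₂ → 1 ≤ c₃ →
        (c₀ : ℝ) ≤ (Real.log X) ^ C₂ → (c₁ : ℝ) ≤ (Real.log X) ^ C₂ →
        (c₂ : ℝ) ≤ (Real.log X) ^ C₂ → (c₃ : ℝ) ≤ (Real.log X) ^ C₂ →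
      ∀ d₀ d₁ d₂ d₃ : ℕ, 1 ≤ d₀ → 1 ≤ d₁ → 1 ≤ d₂ → 1 ≤ d₃ →
      |(∑ i ∈ pairSet X ((Real.log X) ^ C₃) q₀ q₁ r₀ r₁ d₀ d₁,
          ∑ j ∈ pairSet X ((Real.log X) ^ C₃) q₂ q₃ r₂ r₃ d₂ d₃,
          if pairM c₀ c₁ i * pairM c₂ c₃ j ≤ X / (((max c₀ c₁ : ℕ) : ℝ) * ((max c₂ c₃ : ℕ) : ℝ))
            then pairW i * pairW j else 0)
        - 4 * ((c0 * GR r₀) * (c0 * GR r₁) * ((c0 * GR r₂) * (c0 * GR r₃)))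
          * (X ^ 2 / ((c₀ : ℝ) * c₁ * c₂ * c₃)) * (Real.log (Real.log X) / Real.log X)|
        ≤ C * ((Nat.divisors r₀).card * (Nat.divisors r₁).card * ((Nat.divisors r₂).card
            * (Nat.divisors r₃).card)) * (X ^ 2 / ((c₀ : ℝ) * c₁ * c₂ * c₃))
          * (Real.sqrt (Real.log (Real.log X)) / Real.log X) := by
  obtain ⟨K, hK, hpair⟩ := pair_hyp
  obtain ⟨B, hB, hκ⟩ := kappa_bound
  have hev : ∀ᶠ X : ℝ in Filter.atTop, 2 + (2 * C₃ + 4 * C₂ + 1) * Real.log (Real.log X)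
      ≤ Real.exp (Real.sqrt (Real.log (Real.log X) - 1) / 2) ∧ 5 ≤ Real.log (Real.log X) :=
    (Real.tendsto_log_atTop.comp Real.tendsto_log_atTop).eventually
      ((eventually_linear_le _ _).and (Filter.eventually_ge_atTop 5))
  obtain ⟨X₁, hX₁⟩ := Filter.eventually_atTop.1 hev
  set X₀ := max X₁ 3 with hX₀
  set L₀ := Real.log X₀ with hL₀
  set Csmall := X₀ ^ 4 * (L₀ ^ C₂ * L₀ ^ C₂ * L₀ ^ C₂ * L₀ ^ C₂) * L₀
    / Real.sqrt (Real.log (Real.log 3)) + 4 * (B * B * (B * B)) * L₀ with hCs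
  set Clarge := 12600 * (K * K) + 12 * (B * B * (B * B)) with hCl
  refine ⟨max Csmall Clarge, ?_⟩
  intro X hX q₀ q₁ q₂ q₃ r₀ r₁ r₂ r₃ hr₀ hr₁ hr₂ hr₃ c₀ c₁ c₂ c₃ hc₀ hc₁ hc₂ hc₃ b₀ b₁ b₂ b₃
    d₀ d₁ d₂ d₃ hd₀ hd₁ hd₂ hd₃
  obtain ⟨hlog3, hll3⟩ := log_log_three_pos
  have hL1 : 1 < Real.log X := hlog3.trans_le (Real.log_le_log (by norm_num) hX)
  have hL0 : 0 < Real.log X := by linarith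
  have hℓ3 : Real.log (Real.log 3) ≤ Real.log (Real.log X) :=
    Real.log_le_log (by linarith) (Real.log_le_log (by norm_num) hX)
  have t₀ := one_le_card_divisors hr₀
  have t₁ := one_le_card_divisors hr₁
  have t₂ := one_le_card_divisors hr₂
  have t₃ := one_le_card_divisors hr₃
  have k₀ := hκ r₀ hr₀
  have k₁ := hκ r₁ hr₁
  have k₂ := hκ r₂ hr₂
  have k₃ := hκ r₃ hr₃
  have f₀ : (1:ℝ) ≤ c₀ := by exact_mod_cast hc₀
  have f₁ : (1:ℝ) ≤ c₁ := by exact_mod_cast hc₁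
  have f₂ : (1:ℝ) ≤ c₂ := by exact_mod_cast hc₂
  have f₃ : (1:ℝ) ≤ c₃ := by exact_mod_cast hc₃
  have hpos : (0:ℝ) < (c₀ : ℝ) * c₁ * c₂ * c₃ := by positivity
  set τ : ℝ := (Nat.divisors r₀).card * (Nat.divisors r₁).card * ((Nat.divisors r₂).card
            * (Nat.divisors r₃).card) with hτ
  set κ : ℝ := (c0 * GR r₀) * (c0 * GR r₁) * ((c0 * GR r₂) * (c0 * GR r₃)) with hκdef
  set P : ℝ := X ^ 2 / ((c₀ : ℝ) * c₁ * c₂ * c₃) with hP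
  have hP0 : 0 ≤ P := by positivity
  have hτ1 : 1 ≤ τ := one_le_mul_of_one_le_of_one_le (one_le_mul_of_one_le_of_one_le t₀ t₁)
    (one_le_mul_of_one_le_of_one_le t₂ t₃)
  have hκτ : |κ| ≤ (B * B * (B * B)) * τ := by
    rw [hκdef, abs_mul, abs_mul (c0 * GR r₀), abs_mul (c0 * GR r₂)]
    calc |c0 * GR r₀| * |c0 * GR r₁| * (|c0 * GR r₂| * |c0 * GR r₃|)
        ≤ (B * r₀.divisors.card) * (B * r₁.divisors.card) *
          ((B * r₂.divisors.card) * (B * r₃.divisors.card)) := by gcongr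
      _ = _ := by rw [hτ]; ring
  have hfac : 0 ≤ τ * P * (Real.sqrt (Real.log (Real.log X)) / Real.log X) := by positivity
  rcases le_or_gt X X₀ with hXs | hXl
  · obtain ⟨w0, w1⟩ := hyperbola_trivial (X := X) (D := Real.log X ^ C₃)
      (Z := X / (((max c₀ c₁ : ℕ) : ℝ) * ((max c₂ c₃ : ℕ) : ℝ))) (by linarith)
      (q₀ := q₀) (q₁ := q₁) (q₂ := q₂) (q₃ := q₃) (r₀ := r₀) (r₁ := r₁) (r₂ := r₂) (r₃ := r₃)
      (c₀ := c₀) (c₁ := c₁) (c₂ := c₂) (c₃ := c₃) (d₀ := d₀) (d₁ := d₁) (d₂ := d₂) (d₃ := d₃)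
    have hLL : Real.log X ≤ L₀ := Real.log_le_log (by linarith) hXs
    have hcb : ∀ c : ℝ, c ≤ Real.log X ^ C₂ → c ≤ L₀ ^ C₂ := fun c hc =>
      hc.trans (Real.rpow_le_rpow hL0.le hLL h₂.le)
    have hM : (c₀ : ℝ) * c₁ * c₂ * c₃ ≤ L₀ ^ C₂ * L₀ ^ C₂ * L₀ ^ C₂ * L₀ ^ C₂ := by
      have g₀ := hcb _ b₀
      have g₁ := hcb _ b₁
      have g₂ := hcb _ b₂
      have g₃ := hcb _ b₃
      have : 0 ≤ L₀ ^ C₂ := by linarith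
      gcongr
    have hs := small_bound (W := _) (κ := κ) (B := B * B * (B * B)) (τ := τ) (P := P)
      (L := Real.log X) (ℓ := Real.log (Real.log X)) (L₀ := L₀) (c := (c₀ : ℝ) * c₁ * c₂ * c₃)
      (X₀ := X) (N := X₀ ^ 4) hL1 hLL hℓ3
      ((Real.log_le_sub_one_of_pos hL0).trans (by linarith)) hτ1 hpos hM
      (by rw [hP]; field_simp) (by linarith) (by positivity) hκτ w0
      (w1.trans (by gcongr))
    refine hs.trans ?_
    rw [← hCs, mul_assoc Csmall, mul_assoc Csmall, mul_assoc (max _ _), mul_assoc (max _ _)]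
    exact mul_le_mul_of_nonneg_right (le_max_left _ _) hfac
  · obtain ⟨hlin, hℓ5⟩ := hX₁ X ((le_max_left _ _).trans hXl.le)
    set c : ℝ := ((max c₀ c₁ : ℕ) : ℝ) with hc
    set c' : ℝ := ((max c₂ c₃ : ℕ) : ℝ) with hc'
    have hc1 : 1 ≤ c := by rw [hc]; exact_mod_cast hc₀.trans (le_max_left _ _)
    have hc1' : 1 ≤ c' := by rw [hc']; exact_mod_cast hc₂.trans (le_max_left _ _)
    have hcL : c ≤ Real.log X ^ C₂ := by rw [hc, Nat.cast_max]; exact max_le b₀ b₁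
    have hcL' : c' ≤ Real.log X ^ C₂ := by rw [hc', Nat.cast_max]; exact max_le b₂ b₃
    set Z := X / (c * c') with hZ
    obtain ⟨z1, z2, z3, z4, z5, z6, z7, z8, z9, z10⟩ :=
      large_facts h₂ h₃ (by linarith) hL1 hℓ5 hlin hc1 hc1' hcL hcL' hZ
    have hD : 0 ≤ Real.log X ^ C₃ := Real.rpow_nonneg hL0.le _
    have hZc : Z * c ≤ X := by
      have : Z * c = X / c' := by rw [hZ]; field_simp
      rw [this]; exact div_le_self (by linarith) hc1'
    have hZc' : Z * c' ≤ X := by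
      have : Z * c' = X / c := by rw [hZ]; field_simp
      rw [this]; exact div_le_self (by linarith) hc1
    have H := hpair X (Real.log X ^ C₃) (cutT Z) Z q₀ q₁ r₀ r₁ c₀ c₁ d₀ d₁ hr₀ hr₁ hc₀ hc₁ hd₀ hd₁
      hD z3 z4 z5 z6 hZc
    have H' := hpair X (Real.log X ^ C₃) (cutT Z) Z q₂ q₃ r₂ r₃ c₂ c₃ d₂ d₃ hr₂ hr₃ hc₂ hc₃ hd₂ hd₃
      hD z3 z4 z5 z7 hZc'
    have hm : ∀ (q q' : (ZMod 8)ˣ) (r r' d d' a a' : ℕ), 1 ≤ a → ∀ i ∈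
        pairSet X (Real.log X ^ C₃) q q' r r' d d', 1 ≤ pairM a a' i := by
      intro q q' r r' d d' a a' ha i hi
      simp only [pairSet, Finset.mem_filter, Finset.mem_product, Finset.mem_Icc] at hi
      exact one_le_pairM ha hi.1.1.1 hi.1.2.1
    have key := hyperbola_asymp (fun i _ => pairW_nonneg i) (hm _ _ _ _ _ _ _ _ hc₀)
      (fun i _ => pairW_nonneg i) (hm _ _ _ _ _ _ _ _ hc₂) z1 z2 H H'
    rw [← hc, ← hc'] at key
    have hZP : Z ^ 2 * ((c / c₀ * (c / c₁)) * (c' / c₂ * (c' / c₃))) = P := by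
      rw [hZ, hP]; field_simp
    have fin := transfer (W := _) (κ := κ) (K := K) (B := B * B * (B * B)) (τ := τ) (P := P)
      (L := Real.log X) (ℓ := Real.log (Real.log X)) (LZ := Real.log Z) (ℓZ := Real.log (Real.log Z))
      hL0 (by linarith) hP0 (by linarith) (by positivity) z8 z9 hκτ z10 (by
        refine le_trans (le_of_eq ?_) (key.trans (le_of_eq ?_))
        · congr 2
          rw [← hZP, hκdef]; ring
        · rw [← hZP, hτ]; ring)
    refine fin.trans ?_
    rw [← hCl, mul_assoc Clarge, mul_assoc Clarge, mul_assoc (max _ _), mul_assoc (max _ _)]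
    exact mul_le_mul_of_nonneg_right (le_max_right _ _) hfac

open scoped Classical in
theorem statement11 (C₁ C₂ C₃ : ℝ) (h₁ : 0 < C₁) (h₂ : 0 < C₂) (h₃ : 0 < C₃) :
    ∃ C : ℝ, ∀ X : ℝ, 3 ≤ X → ∀ q₀ q₁ q₂ q₃ : (ZMod 8)ˣ,
      ∀ r₀ r₁ r₂ r₃ : ℕ, Odd r₀ → Odd r₁ → Odd r₂ → Odd r₃ →
        1 ≤ r₀ → 1 ≤ r₁ → 1 ≤ r₂ → 1 ≤ r₃ →
        (r₀ : ℝ) ≤ (Real.log X) ^ C₁ → (r₁ : ℝ) ≤ (Real.log X) ^ C₁ →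
        (r₂ : ℝ) ≤ (Real.log X) ^ C₁ → (r₃ : ℝ) ≤ (Real.log X) ^ C₁ →
      ∀ c₀ c₁ c₂ c₃ : ℕ, 1 ≤ c₀ → 1 ≤ c₁ → 1 ≤ c₂ → 1 ≤ c₃ →
        (c₀ : ℝ) ≤ (Real.log X) ^ C₂ → (c₁ : ℝ) ≤ (Real.log X) ^ C₂ →
        (c₂ : ℝ) ≤ (Real.log X) ^ C₂ → (c₃ : ℝ) ≤ (Real.log X) ^ C₂ →
      ∀ d₀ d₁ d₂ d₃ : ℕ, 1 ≤ d₀ → 1 ≤ d₁ → 1 ≤ d₂ → 1 ≤ d₃ →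
        (d₀ : ℝ) ≤ (Real.log X) ^ (C₃ / 2) → (d₁ : ℝ) ≤ (Real.log X) ^ (C₃ / 2) →
        (d₂ : ℝ) ≤ (Real.log X) ^ (C₃ / 2) → (d₃ : ℝ) ≤ (Real.log X) ^ (C₃ / 2) →
      |(∑ n ∈ ((Finset.Icc 1 ⌊X⌋₊ ×ˢ Finset.Icc 1 ⌊X⌋₊) ×ˢ
              (Finset.Icc 1 ⌊X⌋₊ ×ˢ Finset.Icc 1 ⌊X⌋₊)).filter
            (fun n : (ℕ × ℕ) × ℕ × ℕ =>
              ((max (n.1.1 * c₀) (n.1.2 * c₁) * max (n.2.1 * c₂) (n.2.2 * c₃) : ℕ) : ℝ) ≤ X ∧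
              (Real.log X) ^ C₃ < ((max (n.1.1 * d₀) (n.1.2 * d₁) : ℕ) : ℝ) ∧
              (Real.log X) ^ C₃ < ((max (n.2.1 * d₂) (n.2.2 * d₃) : ℕ) : ℝ) ∧
              Nat.Coprime n.1.1 r₀ ∧ Nat.Coprime n.1.2 r₁ ∧
              Nat.Coprime n.2.1 r₂ ∧ Nat.Coprime n.2.2 r₃ ∧
              (n.1.1 : ZMod 8) = (q₀ : ZMod 8) ∧ (n.1.2 : ZMod 8) = (q₁ : ZMod 8) ∧
              (n.2.1 : ZMod 8) = (q₂ : ZMod 8) ∧ (n.2.2 : ZMod 8) = (q₃ : ZMod 8)),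
          1 / (((Nat.divisors n.1.1).card : ℝ) * ((Nat.divisors n.1.2).card : ℝ) *
            ((Nat.divisors n.2.1).card : ℝ) * ((Nat.divisors n.2.2).card : ℝ)))
        - S2 r₀ r₁ r₂ r₃ * X ^ 2 * Real.log (Real.log X) /
            ((c₀ : ℝ) * c₁ * c₂ * c₃ * Real.log X)| ≤
        C * ((Nat.divisors r₀).card : ℝ) * ((Nat.divisors r₁).card : ℝ) *
          ((Nat.divisors r₂).card : ℝ) * ((Nat.divisors r₃).card : ℝ) * X ^ 2 *
          Real.sqrt (Real.log (Real.log X)) / ((c₀ : ℝ) * c₁ * c₂ * c₃ * Real.log X) := by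
  obtain ⟨C, hC⟩ := pair_hyperbola C₂ C₃ h₂ h₃
  refine ⟨C, ?_⟩
  intro X hX q₀ q₁ q₂ q₃ r₀ r₁ r₂ r₃ o₀ o₁ o₂ o₃ hr₀ hr₁ hr₂ hr₃ _ _ _ _
    c₀ c₁ c₂ c₃ hc₀ hc₁ hc₂ hc₃ bc₀ bc₁ bc₂ bc₃ d₀ d₁ d₂ d₃ hd₀ hd₁ hd₂ hd₃ _ _ _ _
  have key := hC X hX q₀ q₁ q₂ q₃ r₀ r₁ r₂ r₃ (by lia) (by lia) (by lia) (by lia)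
    c₀ c₁ c₂ c₃ hc₀ hc₁ hc₂ hc₃ bc₀ bc₁ bc₂ bc₃ d₀ d₁ d₂ d₃ hd₀ hd₁ hd₂ hd₃
  rw [sum_eq_hyperbola hc₀ hc₂ rfl, S2_eq o₀ o₁ o₂ o₃]
  refine (le_of_eq ?_).trans (key.trans (le_of_eq ?_))
  · congr 2
    simp only [div_eq_mul_inv, mul_inv]
    ring
  · simp only [div_eq_mul_inv, mul_inv]
    ring
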